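/- Let (a_n)_{n≥1} be a sequence of complex numbers with ∑_{n=1}^∞ |a_n| < ∞, and define f(x) = ∑_{n=1}^∞ a_n · (J_{in/2}(x)² + Y_{in/2}(x)²) for x > 0 (this series converges absolutely for each x > 0). Then for every n ≥ 1 the improper integral ∫₀^∞ Φ_n(x) f(x) dx converges and a_n = sinh(πn/2) · ∫₀^∞ Φ_n(x) f(x) dx, where Φ_n(x) = x · ∫₀^π J₀(2x·cosh u) · sinh(2u) · sin(nu) du. -/

import Mathlib

open MeasureTheory Filter Topology

/-- Bessel function of the first kind of complex order `ν` at real `x > 0`. -/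
noncomputable def besselJ (ν : ℂ) (x : ℝ) : ℂ :=
  ∑' k : ℕ, ((-1 : ℂ) ^ k * Complex.exp ((ν + 2 * k) * (Real.log (x / 2) : ℂ))) /
    ((Nat.factorial k : ℂ) * Complex.Gamma (ν + k + 1))

/-- Bessel function of the second kind of complex order `ν` at real `x > 0`. -/
noncomputable def besselY (ν : ℂ) (x : ℝ) : ℂ :=
  (besselJ ν x * Complex.cos (Real.pi * ν) - besselJ (-ν) x) / Complex.sin (Real.pi * ν)

/-- Bessel function of the first kind of order `0` (real-valued). -/
noncomputable def besselJ0 (x : ℝ) : ℝ :=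
  ∑' k : ℕ, (-1 : ℝ) ^ k * (x / 2) ^ (2 * k) / (Nat.factorial k : ℝ) ^ 2

/-- Lommel function `S_{-1,0}` for `x > 0`. -/
noncomputable def lommelS (x : ℝ) : ℝ :=
  ∫ t in Set.Ioi (0 : ℝ), t * Real.exp (-x * Real.sinh t)

/-- Struve function `K₀` for `x > 0`. -/
noncomputable def struveK0 (x : ℝ) : ℝ :=
  (2 / Real.pi) * ∫ t in Set.Ioi (0 : ℝ), Real.exp (-x * Real.sinh t)

/-- Bessel function of the second kind of order `0` (real-valued, for `x > 0`). -/
noncomputable def besselY0 (x : ℝ) : ℝ :=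
  (2 / Real.pi) * ((Real.log (x / 2) + Real.eulerMascheroniConstant) * besselJ0 x +
    ∑' k : ℕ, (-1 : ℝ) ^ k * ((harmonic (k + 1) : ℚ) : ℝ) * (x / 2) ^ (2 * (k + 1)) /
      (Nat.factorial (k + 1) : ℝ) ^ 2)

/-- Struve function `H₀`: `H₀ = K₀ˢ + Y₀`. -/
noncomputable def struveH0 (x : ℝ) : ℝ := struveK0 x + besselY0 x

section Helpers
open Set

section aux
variable {𝕜 : Type*} [RCLike 𝕜]

lemma ser_summable (c : ℕ → 𝕜) (M : ℝ) (hc : ∀ k, ‖c k‖ ≤ M / k.factorial) (y : 𝕜) :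
    Summable fun k => c k * y ^ k := by
  refine Summable.of_norm_bounded (g := fun k => M * (‖y‖ ^ k / k.factorial))
    ((Real.summable_pow_div_factorial ‖y‖).mul_left M) ?_
  intro k
  rw [norm_mul, norm_pow]
  calc ‖c k‖ * ‖y‖ ^ k ≤ M / k.factorial * ‖y‖ ^ k := by gcongr; exact hc k
    _ = _ := by ring

lemma ser_shift (c : ℕ → 𝕜) (M : ℝ) (hc : ∀ k, ‖c k‖ ≤ M / k.factorial) (k : ℕ) :
    ‖((k : 𝕜) + 1) * c (k + 1)‖ ≤ M / k.factorial := by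
  rw [norm_mul]
  have h1 : ‖(k : 𝕜) + 1‖ = (k : ℝ) + 1 := by
    have : ((k : 𝕜) + 1) = ((k + 1 : ℕ) : 𝕜) := by push_cast; ring
    rw [this, RCLike.norm_natCast]; push_cast; ring
  rw [h1]
  calc ((k : ℝ) + 1) * ‖c (k + 1)‖ ≤ ((k : ℝ) + 1) * (M / (k + 1).factorial) := by
        gcongr; exact hc _
    _ = _ := by
        rw [Nat.factorial_succ]; push_cast; field_simp

lemma ser_hasDerivAt (c : ℕ → 𝕜) (M : ℝ) (hc : ∀ k, ‖c k‖ ≤ M / k.factorial) (y : 𝕜) :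
    HasDerivAt (fun y => ∑' k : ℕ, c k * y ^ k) (∑' k : ℕ, ((k : 𝕜) + 1) * c (k + 1) * y ^ k) y := by
  have hM : 0 ≤ M := by
    have := (norm_nonneg _).trans (hc 0); simpa using this
  have key : HasDerivAt (fun y => ∑' k : ℕ, c (k + 1) * y ^ (k + 1))
      (∑' k : ℕ, ((k : 𝕜) + 1) * c (k + 1) * y ^ k) y := by
    have hu : Summable fun k : ℕ => M * ((‖y‖ + 1) ^ k / (k.factorial : ℝ)) :=
      (Real.summable_pow_div_factorial _).mul_left M
    have hpc : IsPreconnected (Metric.ball (0 : 𝕜) (‖y‖ + 1)) := (convex_ball (0 : 𝕜) (‖y‖ + 1)).isPreconnected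
    refine hasDerivAt_tsum_of_isPreconnected (g := fun (k : ℕ) (y : 𝕜) => c (k + 1) * y ^ (k + 1))
      (g' := fun (k : ℕ) (y : 𝕜) => ((k : 𝕜) + 1) * c (k + 1) * y ^ k) (y₀ := 0) hu Metric.isOpen_ball
      hpc ?_ ?_ ?_ ?_ ?_
    · intro n z _
      have := (hasDerivAt_pow (n + 1) z).const_mul (c (n + 1))
      refine this.congr_deriv ?_
      push_cast; ring_nf
    · intro n z hz
      rw [norm_mul, norm_pow]
      have hz' : ‖z‖ ≤ ‖y‖ + 1 := by simpa using (Metric.mem_ball.1 hz).le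
      calc _ ≤ M / n.factorial * (‖y‖ + 1) ^ n := by
            gcongr; exact ser_shift c M hc n
        _ = _ := by ring
    · simp; positivity
    · simp
    · simp
  have h2 := key.const_add (c 0)
  refine h2.congr_of_eventuallyEq (Eventually.of_forall fun z => ?_)
  simp only
  rw [(ser_summable c M hc z).tsum_eq_zero_add]; simp

lemma ser_ode (c : ℕ → 𝕜) (M : ℝ) (ν : 𝕜) (hc : ∀ k, ‖c k‖ ≤ M / k.factorial)
    (hrec : ∀ k : ℕ, ((k : 𝕜) + 1) * ((k : 𝕜) + 1 + ν) * c (k + 1) = - c k) :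
    ∃ P1 P2 : 𝕜 → 𝕜, (∀ y, HasDerivAt (fun y => ∑' k, c k * y ^ k) (P1 y) y) ∧
      (∀ y, HasDerivAt P1 (P2 y) y) ∧
      ∀ y, y * P2 y + (ν + 1) * P1 y + (∑' k, c k * y ^ k) = 0 := by
  have hc1 := ser_shift c M hc
  have hc2 := ser_shift (fun k => ((k : 𝕜) + 1) * c (k + 1)) M hc1
  refine ⟨_, _, ser_hasDerivAt c M hc, ser_hasDerivAt _ M hc1, fun y => ?_⟩
  have hs0 := ser_summable c M hc y
  have hs1 := ser_summable _ M hc1 y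
  have hs2 := ser_summable _ M hc2 y
  have e1 : y * ∑' k : ℕ, ((k : 𝕜) + 1) * (((k + 1 : ℕ) : 𝕜) + 1) * c (k + 1 + 1) * y ^ k
     = ∑' k : ℕ, (k : 𝕜) * ((k : 𝕜) + 1) * c (k + 1) * y ^ k := by
    have hs : Summable fun k : ℕ => (k : 𝕜) * ((k : 𝕜) + 1) * c (k + 1) * y ^ k := by
      rw [← summable_nat_add_iff 1]
      refine (hs2.mul_left y).congr fun k => ?_
      push_cast; ring
    rw [hs.tsum_eq_zero_add, ← tsum_mul_left]
    simp only [Nat.cast_zero, zero_mul, zero_add]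
    congr 1; ext k; push_cast; ring
  have hs3 : Summable fun k : ℕ => (k : 𝕜) * ((k : 𝕜) + 1) * c (k + 1) * y ^ k := by
    rw [← summable_nat_add_iff 1]
    refine (hs2.mul_left y).congr fun k => ?_
    push_cast; ring
  have e2 : (∑' k : ℕ, ((k : 𝕜) + 1) * ((((k + 1 : ℕ) : 𝕜) + 1) * c (k + 1 + 1)) * y ^ k)
     = ∑' k : ℕ, ((k : 𝕜) + 1) * (((k + 1 : ℕ) : 𝕜) + 1) * c (k + 1 + 1) * y ^ k := by
    congr 1; ext k; ring
  rw [e2, e1, ← tsum_mul_left, ← (hs3.tsum_add (hs1.mul_left _)),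
    ← ((hs3.add (hs1.mul_left _)).tsum_add hs0)]
  rw [← tsum_zero (α := 𝕜) (β := ℕ)]
  congr 1; ext k
  have := hrec k
  linear_combination y ^ k * this
end aux

/-- facts on J0, J1 -/
lemma J_facts : ∃ J1 : ℝ → ℝ, (∀ x, HasDerivAt besselJ0 (-J1 x) x) ∧
    (∀ x, HasDerivAt (fun x => x * J1 x) (x * besselJ0 x) x) ∧
    (∀ x, 0 < x → HasDerivAt J1 (besselJ0 x - J1 x / x) x) ∧ Continuous J1 ∧ J1 0 = 0 ∧
    besselJ0 0 = 1 := by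
  obtain ⟨P1, P2, h1, h2, h3⟩ := ser_ode (𝕜 := ℝ) (fun k => (-1) ^ k / (k.factorial : ℝ) ^ 2) 1 0
    (by
      intro k
      rw [norm_div, norm_pow, norm_neg, norm_one, one_pow, norm_pow, Real.norm_natCast]
      have : (1 : ℝ) ≤ k.factorial := by exact_mod_cast Nat.one_le_iff_ne_zero.2 k.factorial_ne_zero
      gcongr
      nlinarith)
    (by
      intro k
      rw [Nat.factorial_succ]; push_cast
      have : (k.factorial : ℝ) ≠ 0 := by exact_mod_cast k.factorial_ne_zero
      field_simp
      ring)
  set P := fun y : ℝ => ∑' k : ℕ, (-1) ^ k / (k.factorial : ℝ) ^ 2 * y ^ k with hP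
  have hJ : besselJ0 = fun x => P (x ^ 2 / 4) := by
    ext x; simp only [besselJ0, hP]; congr 1; ext k
    rw [pow_mul, show (x / 2) ^ 2 = x ^ 2 / 4 by ring]; ring
  have hsq : ∀ x : ℝ, HasDerivAt (fun x : ℝ => x ^ 2 / 4) (x / 2) x := by
    intro x
    have := (hasDerivAt_pow 2 x).div_const 4
    refine this.congr_deriv ?_; simp; ring
  have d1 : ∀ x : ℝ, HasDerivAt (fun x : ℝ => P1 (x ^ 2 / 4)) (P2 (x ^ 2 / 4) * (x / 2)) x :=
    fun x => (h2 _).comp x (hsq x)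
  have d0 : ∀ x : ℝ, HasDerivAt (fun x : ℝ => P (x ^ 2 / 4)) (P1 (x ^ 2 / 4) * (x / 2)) x :=
    fun x => (h1 _).comp x (hsq x)
  have dJ1 : ∀ x : ℝ, HasDerivAt (fun x : ℝ => -(x / 2) * P1 (x ^ 2 / 4))
     (-(1 / 2) * P1 (x ^ 2 / 4) + -(x / 2) * (P2 (x ^ 2 / 4) * (x / 2))) x := by
    intro x
    exact (((hasDerivAt_id x).div_const 2).neg).mul (d1 x)
  refine ⟨fun x => -(x / 2) * P1 (x ^ 2 / 4), ?_, ?_, ?_, ?_, ?_, ?_⟩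
  · intro x; rw [hJ]; refine (d0 x).congr_deriv ?_; ring
  · intro x
    refine ((hasDerivAt_id x).mul (dJ1 x)).congr_deriv ?_
    rw [hJ]; simp only [id]
    have := h3 (x ^ 2 / 4)
    linear_combination -x * this
  · intro x hx
    refine (dJ1 x).congr_deriv ?_
    rw [hJ]; simp only
    have := h3 (x ^ 2 / 4)
    field_simp
    linear_combination -4 * this
  · rw [continuous_iff_continuousAt]; exact fun x => (dJ1 x).continuousAt
  · simp
  · simp only [besselJ0]
    rw [tsum_eq_single 0]
    · simp
    · intro k hk; simp [hk]

noncomputable def bJ1 : ℝ → ℝ := Classical.choose J_facts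
lemma J0_deriv (x : ℝ) : HasDerivAt besselJ0 (-bJ1 x) x := (Classical.choose_spec J_facts).1 x
lemma xJ1_deriv (x : ℝ) : HasDerivAt (fun x => x * bJ1 x) (x * besselJ0 x) x :=
  (Classical.choose_spec J_facts).2.1 x
lemma J1_deriv (x : ℝ) (hx : 0 < x) : HasDerivAt bJ1 (besselJ0 x - bJ1 x / x) x :=
  (Classical.choose_spec J_facts).2.2.1 x hx
lemma J1_cont : Continuous bJ1 := (Classical.choose_spec J_facts).2.2.2.1
lemma J1_zero : bJ1 0 = 0 := (Classical.choose_spec J_facts).2.2.2.2.1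
lemma J0_zero : besselJ0 0 = 1 := (Classical.choose_spec J_facts).2.2.2.2.2
lemma J0_cont : Continuous besselJ0 := continuous_iff_continuousAt.2 fun x => (J0_deriv x).continuousAt

lemma J_sq_le (x : ℝ) (hx : 0 ≤ x) : besselJ0 x ^ 2 + bJ1 x ^ 2 ≤ 1 := by
  have hanti : AntitoneOn (fun x => besselJ0 x ^ 2 + bJ1 x ^ 2) (Set.Ici 0) := by
    refine antitoneOn_of_hasDerivWithinAt_nonpos (convex_Ici 0)
      (by have := J0_cont; have := J1_cont; fun_prop)
      (f' := fun x => -2 * bJ1 x ^ 2 / x) ?_ ?_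
    · intro x hx
      rw [interior_Ici] at hx
      have hx' : 0 < x := hx
      refine HasDerivAt.hasDerivWithinAt ?_
      refine (((J0_deriv x).pow 2).add ((J1_deriv x hx).pow 2)).congr_deriv ?_
      field_simp
      ring
    · intro x hx
      rw [interior_Ici] at hx
      have hx' : 0 < x := hx
      have : 0 ≤ bJ1 x ^ 2 / x := by positivity
      have e : -2 * bJ1 x ^ 2 / x = -2 * (bJ1 x ^ 2 / x) := by ring
      rw [e]; linarith
  have := hanti (Set.self_mem_Ici) (Set.mem_Ici.2 hx) hx
  simpa [J0_zero, J1_zero] using this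

lemma J0_le (x : ℝ) (hx : 0 ≤ x) : |besselJ0 x| ≤ 1 := by
  have := J_sq_le x hx
  rw [← sq_le_one_iff_abs_le_one]; nlinarith [sq_nonneg (bJ1 x)]
lemma J1_le (x : ℝ) (hx : 0 ≤ x) : |bJ1 x| ≤ 1 := by
  have := J_sq_le x hx
  rw [← sq_le_one_iff_abs_le_one]; nlinarith [sq_nonneg (besselJ0 x)]

lemma J1_decay : ∃ C : ℝ, 0 ≤ C ∧ ∀ x, 1 ≤ x → |bJ1 x| ≤ C * x ^ (-(1/2) : ℝ) := by
  set F := fun x => x * (besselJ0 x ^ 2 + bJ1 x ^ 2) - besselJ0 x * bJ1 x + besselJ0 x ^ 2 / (2 * x)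
    with hF
  have hd : ∀ x, 0 < x → HasDerivAt F (-besselJ0 x ^ 2 / (2 * x ^ 2)) x := by
    intro x hx
    have a := J0_deriv x
    have b := J1_deriv x hx
    have hx2 : (2 * x) ≠ 0 := by positivity
    refine ((((hasDerivAt_id x).mul ((a.pow 2).add (b.pow 2))).sub (a.mul b)).add
      ((a.pow 2).div ((hasDerivAt_id x).const_mul 2) hx2)).congr_deriv ?_
    simp
    field_simp
    ring
  have hanti : AntitoneOn F (Set.Ici 1) := by
    refine antitoneOn_of_hasDerivWithinAt_nonpos (convex_Ici 1)
      (f' := fun x => -besselJ0 x ^ 2 / (2 * x ^ 2)) ?_ ?_ ?_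
    · intro x hx
      have : (1 : ℝ) ≤ x := hx
      exact (hd x (by linarith)).continuousAt.continuousWithinAt
    · intro x hx
      rw [interior_Ici] at hx
      have : (1 : ℝ) < x := hx
      exact (hd x (by linarith)).hasDerivWithinAt
    · intro x hx
      have : 0 ≤ besselJ0 x ^ 2 / (2 * x ^ 2) := by positivity
      have e : -besselJ0 x ^ 2 / (2 * x ^ 2) = -(besselJ0 x ^ 2 / (2 * x ^ 2)) := by ring
      simp only [e]; linarith
  refine ⟨Real.sqrt (2 * |F 1|), Real.sqrt_nonneg _, fun x hx => ?_⟩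
  have h1 : F x ≤ F 1 := hanti (Set.self_mem_Ici) hx hx
  have h2 : x * bJ1 x ^ 2 / 2 ≤ F x := by
    simp only [hF]
    have : 0 ≤ besselJ0 x ^ 2 / (2 * x) := by positivity
    nlinarith [sq_nonneg (besselJ0 x - bJ1 x), sq_nonneg (besselJ0 x), sq_nonneg (bJ1 x)]
  have hx0 : 0 < x := by linarith
  rw [Real.rpow_neg hx0.le, ← Real.sqrt_eq_rpow, ← Real.sqrt_inv, ← Real.sqrt_mul (by positivity)]
  apply Real.abs_le_sqrt
  have : F 1 ≤ |F 1| := le_abs_self _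
  rw [← div_eq_mul_inv, le_div_iff₀ hx0]
  nlinarith


/-- dominating function -/
noncomputable def Bd (t : ℝ) : ℝ := if t ≤ 1 then t ^ (-(1/2) : ℝ) else t ^ (-(3/2) : ℝ)

lemma Bd_int : IntegrableOn Bd (Ioi 0) := by
  have h1 : IntegrableOn Bd (Ioc 0 1) := by
    have : IntegrableOn (fun t : ℝ => t ^ (-(1/2) : ℝ)) (Ioc 0 1) := by
      rw [← intervalIntegrable_iff_integrableOn_Ioc_of_le zero_le_one]
      exact intervalIntegral.intervalIntegrable_rpow' (by norm_num)
    refine this.congr_fun (fun t ht => ?_) measurableSet_Ioc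
    simp [Bd, ht.2]
  have h2 : IntegrableOn Bd (Ioi 1) := by
    have : IntegrableOn (fun t : ℝ => t ^ (-(3/2) : ℝ)) (Ioi 1) :=
      integrableOn_Ioi_rpow_of_lt (by norm_num) one_pos
    refine this.congr_fun (fun t ht => ?_) measurableSet_Ioi
    simp [Bd, not_le.2 (show (1:ℝ) < t from ht)]
  have := h1.union h2
  rwa [Ioc_union_Ioi_eq_Ioi zero_le_one] at this

lemma Bd_nonneg {t : ℝ} (ht : 0 < t) : 0 ≤ Bd t := by
  unfold Bd; split_ifs <;> positivity

lemma int_of_Bd {E : Type*} [NormedAddCommGroup E] {f : ℝ → E} {C : ℝ}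
    (hf : AEStronglyMeasurable f (volume.restrict (Ioi 0)))
    (h : ∀ t, 0 < t → ‖f t‖ ≤ C * Bd t) : IntegrableOn f (Ioi 0) := by
  refine Integrable.mono' (Bd_int.const_mul C) hf ?_
  filter_upwards [ae_restrict_mem measurableSet_Ioi] with t ht using h t ht

lemma FTC0 {f f' : ℝ → ℝ} {l : ℝ} (h : ∀ x, 0 < x → HasDerivAt f (f' x) x)
    (hi : IntegrableOn f' (Ioi 0)) (h0 : Tendsto f (𝓝[>] 0) (𝓝 l))
    (h1 : Tendsto f atTop (𝓝 0)) : ∫ x in Ioi (0:ℝ), f' x = - l := by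
  have hu : ∀ x, x ≠ 0 → Function.update f 0 l x = f x := fun x hx => by simp [hx]
  have := integral_Ioi_of_hasDerivAt_of_tendsto (f := Function.update f 0 l) (f' := f') (a := 0)
    (m := 0) ?_ ?_ hi ?_
  · simpa using this
  · rw [continuousWithinAt_update_same]
    have : Ici (0:ℝ) \ {0} = Ioi 0 := Ici_sdiff_left
    rw [this]; exact h0
  · intro x hx
    refine (h x hx).congr_of_eventuallyEq ?_
    filter_upwards [isOpen_ne.mem_nhds (ne_of_gt hx)] with y hy using hu y hy
  · refine h1.congr' ?_
    filter_upwards [eventually_gt_atTop 0] with y hy using (hu y (ne_of_gt hy)).symm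

lemma exp_rpow_le {y a : ℝ} (hy : 0 < y) (ha : 0 < a) (ha2 : a ≤ 2) :
    Real.exp (-y) ≤ 2 * y ^ (-a) := by
  rw [Real.exp_neg, Real.rpow_neg hy.le, ← div_eq_mul_inv, inv_eq_one_div,
    div_le_div_iff₀ (Real.exp_pos y) (by positivity), one_mul]
  rcases le_or_gt y 1 with h | h
  · have := Real.rpow_le_one hy.le h ha.le
    have := Real.add_one_le_exp y
    linarith
  · have h1 : y ^ a ≤ y ^ (2:ℝ) := Real.rpow_le_rpow_of_exponent_le h.le ha2
    rw [Real.rpow_two] at h1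
    have := Real.quadratic_le_exp_of_nonneg hy.le
    nlinarith

noncomputable def kap (z : ℝ) : ℝ := ∫ q in Ioi (0:ℝ), Real.exp (-z / q - q) / q
noncomputable def lam (z : ℝ) : ℝ := - ∫ q in Ioi (0:ℝ), Real.exp (-z / q - q)

lemma ker_le {z q a : ℝ} (hz : 0 < z) (hq : 0 < q) (ha : 0 < a) (ha2 : a ≤ 2) :
    Real.exp (-z / q - q) ≤ 2 * z ^ (-a) * (Real.exp (-q) * q ^ a) := by
  have h := exp_rpow_le (y := z / q) (by positivity) ha ha2
  rw [Real.div_rpow hz.le hq.le, Real.rpow_neg hq.le a, div_inv_eq_mul] at h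
  rw [sub_eq_add_neg, Real.exp_add, neg_div]
  nlinarith [Real.exp_pos (-q)]

lemma ker_meas (z : ℝ) (j : ℕ) :
    AEStronglyMeasurable (fun q => Real.exp (-z / q - q) / q ^ j) (volume.restrict (Ioi 0)) := by
  refine ContinuousOn.aestronglyMeasurable ?_ measurableSet_Ioi
  intro q hq
  have : q ≠ 0 := ne_of_gt hq
  have h2 : q ^ j ≠ 0 := pow_ne_zero _ this
  exact ContinuousAt.continuousWithinAt (by fun_prop (disch := assumption))

lemma ker_le' {z q a : ℝ} (hz : 0 < z) (hq : 0 < q) (ha : 0 < a) (ha2 : a ≤ 2) (j : ℕ) :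
    Real.exp (-z / q - q) / q ^ j ≤ 2 * z ^ (-a) * (Real.exp (-q) * q ^ ((a + 1 - j) - 1)) := by
  rw [div_le_iff₀ (by positivity)]
  refine (ker_le hz hq ha ha2).trans_eq ?_
  rw [show (a + 1 - j) - 1 = a - j by ring, Real.rpow_sub hq, Real.rpow_natCast]
  field_simp

lemma ker_int {z : ℝ} (hz : 0 < z) {j : ℕ} (hj : j ≤ 2) :
    IntegrableOn (fun q => Real.exp (-z / q - q) / q ^ j) (Ioi 0) := by
  have hs : (0:ℝ) < 2 + 1 - j := by
    have : (j:ℝ) ≤ 2 := by exact_mod_cast hj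
    linarith
  refine Integrable.mono' ((Real.GammaIntegral_convergent hs).const_mul (2 * z ^ (-2:ℝ)))
    (ker_meas z j) ?_
  filter_upwards [ae_restrict_mem measurableSet_Ioi] with q hq
  have hq' : (0:ℝ) < q := hq
  rw [Real.norm_of_nonneg (by positivity)]
  exact ker_le' hz hq (by norm_num) le_rfl j

lemma ker_int0 {z : ℝ} (hz : 0 < z) : IntegrableOn (fun q => Real.exp (-z / q - q)) (Ioi 0) := by
  simpa using ker_int hz (j := 0) (by norm_num)
lemma ker_int1 {z : ℝ} (hz : 0 < z) : IntegrableOn (fun q => Real.exp (-z / q - q) / q) (Ioi 0) := by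
  simpa using ker_int hz (j := 1) (by norm_num)

lemma kap_nonneg (z : ℝ) : 0 ≤ kap z :=
  setIntegral_nonneg measurableSet_Ioi fun q hq => by
    have hq' : (0:ℝ) < q := hq
    positivity

lemma kap_le {z a : ℝ} (hz : 0 < z) (ha : 0 < a) (ha2 : a ≤ 2) :
    kap z ≤ 2 * Real.Gamma a * z ^ (-a) := by
  have h : kap z ≤ ∫ q in Ioi (0:ℝ), 2 * z ^ (-a) * (Real.exp (-q) * q ^ (a - 1)) := by
    refine setIntegral_mono_on (ker_int1 hz) ((Real.GammaIntegral_convergent ha).const_mul _)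
      measurableSet_Ioi fun q hq => ?_
    simpa using ker_le' hz hq ha ha2 1
  rw [integral_const_mul, ← Real.Gamma_eq_integral ha] at h
  linarith

lemma lam_abs_le {z a : ℝ} (hz : 0 < z) (ha : 0 < a) (ha2 : a ≤ 2) :
    |lam z| ≤ 2 * Real.Gamma (a + 1) * z ^ (-a) := by
  have h : ∫ q in Ioi (0:ℝ), Real.exp (-z / q - q) ≤
      ∫ q in Ioi (0:ℝ), 2 * z ^ (-a) * (Real.exp (-q) * q ^ (a + 1 - 1)) := by
    refine setIntegral_mono_on (ker_int0 hz)
      ((Real.GammaIntegral_convergent (by positivity)).const_mul _)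
      measurableSet_Ioi fun q hq => ?_
    simpa using ker_le' hz hq ha ha2 0
  rw [integral_const_mul, ← Real.Gamma_eq_integral (by positivity)] at h
  rw [lam, abs_neg, abs_of_nonneg]
  · linarith
  · exact setIntegral_nonneg measurableSet_Ioi fun q hq => by positivity

lemma exp_neg_int : IntegrableOn (fun q : ℝ => Real.exp (-q)) (Ioi 0) := by
  simpa using Real.GammaIntegral_convergent (s := 1) one_pos

lemma exp_neg_integral : ∫ q in Ioi (0:ℝ), Real.exp (-q) = 1 := by
  simpa using (Real.Gamma_eq_integral (s := 1) one_pos).symm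

lemma lam_abs_le_one {z : ℝ} (hz : 0 < z) : |lam z| ≤ 1 := by
  rw [lam, abs_neg, abs_of_nonneg, ← exp_neg_integral]
  · refine setIntegral_mono_on (ker_int0 hz) exp_neg_int measurableSet_Ioi fun q hq => ?_
    have hq' : (0:ℝ) < q := hq
    apply Real.exp_le_exp.2
    have : 0 < z / q := by positivity
    rw [neg_div]; linarith
  · exact setIntegral_nonneg measurableSet_Ioi fun q hq => by positivity

lemma ker_deriv {z : ℝ} (hz : 0 < z) (j : ℕ) (hj : j ≤ 1) :
    HasDerivAt (fun z => ∫ q in Ioi (0:ℝ), Real.exp (-z / q - q) / q ^ j)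
      (∫ q in Ioi (0:ℝ), -(Real.exp (-z / q - q) / q ^ (j + 1))) z := by
  refine (hasDerivAt_integral_of_dominated_loc_of_deriv_le (s := Ioi (z / 2))
    (bound := fun q => Real.exp (-(z/2) / q - q) / q ^ (j + 1)) (Ioi_mem_nhds (by linarith))
    (F := fun z q => Real.exp (-z / q - q) / q ^ j)
    (F' := fun z q => -(Real.exp (-z / q - q) / q ^ (j + 1)))
    (Eventually.of_forall fun z => ker_meas z j) (ker_int hz (by omega))
    (ker_meas z (j + 1)).neg ?_ (ker_int (by positivity) (by omega)) ?_).2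
  · filter_upwards [ae_restrict_mem measurableSet_Ioi] with q hq x hx
    have hq' : (0:ℝ) < q := hq
    have hx' : z / 2 < x := hx
    rw [norm_neg, Real.norm_of_nonneg (by positivity)]
    gcongr
  · filter_upwards [ae_restrict_mem measurableSet_Ioi] with q hq x hx
    have hq' : (0:ℝ) < q := hq
    have h1 : HasDerivAt (fun x : ℝ => -x / q - q) (-1 / q) x :=
      (((hasDerivAt_id x).neg).div_const q).sub_const q
    refine (h1.exp.div_const (q ^ j)).congr_deriv ?_
    field_simp
    ring

lemma lam_deriv {z : ℝ} (hz : 0 < z) : HasDerivAt lam (kap z) z := by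
  have := (ker_deriv hz 0 (by norm_num)).neg
  refine HasDerivAt.congr_deriv (f := lam) (f' := -∫ q in Ioi (0:ℝ), -(Real.exp (-z / q - q) / q ^ (0 + 1))) ?_ ?_
  · have e : lam = fun z => -∫ q in Ioi (0:ℝ), Real.exp (-z / q - q) / q ^ 0 := by
      ext z; simp [lam]
    rw [e]; exact this
  · rw [integral_neg, neg_neg]; simp [kap]

lemma ker_zero_lim {z : ℝ} (hz : 0 < z) : Tendsto (fun q : ℝ => Real.exp (-z / q - q)) (𝓝[>] 0) (𝓝 0) := by
  have hb : Tendsto (fun q : ℝ => 2 * z ^ (-(1:ℝ)) * q) (𝓝[>] 0) (𝓝 0) := by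
    have : Tendsto (fun q : ℝ => 2 * z ^ (-(1:ℝ)) * q) (𝓝 0) (𝓝 (2 * z ^ (-(1:ℝ)) * 0)) :=
      (continuous_const.mul continuous_id).tendsto 0
    rw [mul_zero] at this
    exact this.mono_left nhdsWithin_le_nhds
  refine squeeze_zero' (Eventually.of_forall fun q => (Real.exp_pos _).le) ?_ hb
  filter_upwards [self_mem_nhdsWithin] with q hq
  have hq' : (0:ℝ) < q := hq
  have := ker_le hz hq' one_pos (by norm_num)
  rw [Real.rpow_one] at this
  refine this.trans ?_
  have h2 : Real.exp (-q) ≤ 1 := Real.exp_le_one_iff.2 (by linarith)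
  gcongr
  nlinarith

lemma kap_deriv {z : ℝ} (hz : 0 < z) : HasDerivAt kap (lam z / z) z := by
  have := ker_deriv hz 1 le_rfl
  refine HasDerivAt.congr_deriv (f := kap) (f' := ∫ q in Ioi (0:ℝ), -(Real.exp (-z / q - q) / q ^ (1 + 1))) ?_ ?_
  · have e : kap = fun z => ∫ q in Ioi (0:ℝ), Real.exp (-z / q - q) / q ^ 1 := by
      ext z; simp [kap]
    rw [e]; exact this
  · have hi0 := ker_int0 hz
    have hi2 := ker_int hz (j := 2) le_rfl
    have := FTC0 (f := fun q => Real.exp (-z / q - q))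
      (f' := fun q => z * (Real.exp (-z / q - q) / q ^ 2) - Real.exp (-z / q - q)) (l := 0) ?_
      (by exact (hi2.const_mul z).sub hi0) (ker_zero_lim hz) ?_
    · rw [integral_sub (hi2.const_mul z) hi0, integral_const_mul] at this
      rw [integral_neg, lam]
      norm_num at this ⊢
      rw [eq_div_iff hz.ne']
      linarith
    · intro q hq
      have h1 : HasDerivAt (fun q : ℝ => -z / q - q) (z / q ^ 2 - 1) q := by
        have := ((hasDerivAt_const q (-z)).div (hasDerivAt_id q) (ne_of_gt hq)).sub (hasDerivAt_id q)
        refine this.congr_deriv ?_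
        simp
      refine h1.exp.congr_deriv ?_
      ring
    · refine squeeze_zero' (Eventually.of_forall fun q => (Real.exp_pos _).le) ?_
        (Real.tendsto_exp_neg_atTop_nhds_zero)
      filter_upwards [eventually_gt_atTop 0] with q hq
      apply Real.exp_le_exp.2
      have : 0 < z / q := by positivity
      rw [neg_div]; linarith

lemma lam_zero_lim : Tendsto lam (𝓝[>] 0) (𝓝 (-1)) := by
  have : Tendsto (fun z => ∫ q in Ioi (0:ℝ), Real.exp (-z / q - q)) (𝓝[>] 0)
      (𝓝 (∫ q in Ioi (0:ℝ), Real.exp (-q))) := by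
    refine tendsto_integral_filter_of_dominated_convergence (fun q => Real.exp (-q)) ?_ ?_
      exp_neg_int ?_
    · refine Eventually.of_forall fun z => ?_
      simpa using ker_meas z 0
    · filter_upwards [self_mem_nhdsWithin] with z hz
      filter_upwards [ae_restrict_mem measurableSet_Ioi] with q hq
      have hq' : (0:ℝ) < q := hq
      have hz' : (0:ℝ) < z := hz
      rw [Real.norm_of_nonneg (by positivity)]
      apply Real.exp_le_exp.2
      have : 0 < z / q := by positivity
      rw [neg_div]; linarith
    · filter_upwards [ae_restrict_mem measurableSet_Ioi] with q hq
      have : Tendsto (fun z : ℝ => Real.exp (-z / q - q)) (𝓝 0) (𝓝 (Real.exp (-0 / q - q))) :=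
        (by fun_prop : Continuous (fun z : ℝ => Real.exp (-z / q - q))).tendsto 0
      simp only [neg_zero, zero_div, zero_sub] at this
      exact this.mono_left nhdsWithin_le_nhds
  rw [exp_neg_integral] at this
  exact this.neg

lemma kap_contOn : ContinuousOn kap (Ioi 0) := fun z hz => (kap_deriv hz).continuousAt.continuousWithinAt
lemma lam_contOn : ContinuousOn lam (Ioi 0) := fun z hz => (lam_deriv hz).continuousAt.continuousWithinAt

lemma kap_lim_top : Tendsto kap atTop (𝓝 0) := by
  have h := (tendsto_rpow_neg_atTop (y := 1) one_pos).const_mul (2 * Real.Gamma 1)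
  rw [mul_zero] at h
  refine squeeze_zero' (Eventually.of_forall kap_nonneg) ?_ h
  filter_upwards [eventually_gt_atTop 0] with q hq using kap_le hq one_pos (by norm_num)

/-- uniform bound in terms of powers -/
lemma kap_Bd : ∃ C, 0 ≤ C ∧ ∀ z, 0 < z → kap z ≤ C * Bd z := by
  refine ⟨2 * Real.Gamma (1/2) + 2 * Real.Gamma (3/2), by positivity, fun z hz => ?_⟩
  have g1 : 0 < Real.Gamma (1/2) := Real.Gamma_pos_of_pos (by norm_num)
  have g2 : 0 < Real.Gamma (3/2) := Real.Gamma_pos_of_pos (by norm_num)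
  unfold Bd
  split_ifs
  · have := kap_le hz (a := 1/2) (by norm_num) (by norm_num)
    have h : 0 ≤ z ^ (-(1/2) : ℝ) := by positivity
    nlinarith
  · have := kap_le hz (a := 3/2) (by norm_num) (by norm_num)
    have h : 0 ≤ z ^ (-(3/2) : ℝ) := by positivity
    nlinarith

lemma kap_int : IntegrableOn kap (Ioi 0) := by
  obtain ⟨C, _, h⟩ := kap_Bd
  refine int_of_Bd (kap_contOn.aestronglyMeasurable measurableSet_Ioi) (C := C) fun t ht => ?_
  rw [Real.norm_of_nonneg (kap_nonneg t)]; exact h t ht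

lemma kap_mellin (μ : ℝ) : ∫ z in Ioi (0:ℝ), Complex.exp (Complex.I * μ * Real.log z) * (kap z : ℂ)
    = Complex.Gamma (1 + Complex.I * μ) ^ 2 := by
  have hs : 0 < (1 + Complex.I * μ).re := by simp
  set F : ℝ → ℝ → ℂ := fun z q => Complex.exp (Complex.I * μ * Real.log z) *
    ((Real.exp (-z / q - q) / q : ℝ) : ℂ) with hF
  have hinner : ∀ q : ℝ, 0 < q → ∫ z in Ioi (0:ℝ), F z q =
      Complex.Gamma (1 + Complex.I * μ) * (Complex.exp (-q) * (q:ℂ) ^ (1 + Complex.I * μ - 1)) := by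
    intro q hq
    have h := Complex.integral_cpow_mul_exp_neg_mul_Ioi (a := 1 + Complex.I * μ) (r := (1 / q : ℝ)) hs
      (by positivity)
    have e : ∀ z ∈ Ioi (0:ℝ), F z q = (Complex.exp (-q) / q) *
        ((z:ℂ) ^ (1 + Complex.I * μ - 1) * Complex.exp (-(((1 / q : ℝ) : ℂ) * z))) := by
      intro z hz
      have hz' : (z:ℂ) ≠ 0 := by exact_mod_cast (ne_of_gt hz)
      simp only [hF]
      rw [Complex.cpow_def_of_ne_zero hz', ← Complex.ofReal_log (le_of_lt hz)]
      push_cast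
      rw [show (-(z:ℂ) / q - q) = -((1 / (q:ℂ)) * z) + -q by ring, Complex.exp_add]
      rw [show (Complex.I * μ * (Real.log z : ℂ)) = (Real.log z : ℂ) * (1 + Complex.I * μ - 1) by ring]
      ring
    rw [setIntegral_congr_fun measurableSet_Ioi e, integral_const_mul, h]
    have hq' : (q:ℂ) ≠ 0 := by exact_mod_cast hq.ne'
    have : (1 / ((1 / q : ℝ) : ℂ)) = q := by push_cast; simp
    rw [this, Complex.cpow_sub _ _ hq', Complex.cpow_one]
    field_simp
  have hmeas : AEStronglyMeasurable (Function.uncurry F)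
      ((volume.restrict (Ioi (0:ℝ))).prod (volume.restrict (Ioi (0:ℝ)))) := by
    apply Measurable.aestronglyMeasurable
    simp only [hF, Function.uncurry_def]
    fun_prop
  have hint : Integrable (Function.uncurry F)
      ((volume.restrict (Ioi (0:ℝ))).prod (volume.restrict (Ioi (0:ℝ)))) := by
    rw [integrable_prod_iff hmeas]
    have hn : ∀ z q, 0 < q → ‖F z q‖ = Real.exp (-z / q - q) / q := by
      intro z q hq
      simp only [hF]
      rw [norm_mul, Complex.norm_exp, Complex.norm_real, Real.norm_of_nonneg (by positivity)]
      simp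
    constructor
    · filter_upwards [ae_restrict_mem measurableSet_Ioi] with z hz
      refine (ker_int1 (show (0:ℝ) < z from hz)).mono' ?_ ?_
      · apply Measurable.aestronglyMeasurable
        simp only [hF, Function.uncurry_def]
        fun_prop
      · filter_upwards [ae_restrict_mem measurableSet_Ioi] with q hq
        exact (hn z q hq).le
    · refine kap_int.congr_fun (fun z hz => ?_) measurableSet_Ioi
      exact setIntegral_congr_fun measurableSet_Ioi fun q hq => (hn z q hq).symm
  calc _ = ∫ z in Ioi (0:ℝ), ∫ q in Ioi (0:ℝ), F z q := by
        refine setIntegral_congr_fun measurableSet_Ioi fun z hz => ?_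
        simp only [hF, kap]
        rw [integral_const_mul, integral_complex_ofReal]
    _ = ∫ q in Ioi (0:ℝ), ∫ z in Ioi (0:ℝ), F z q := integral_integral_swap hint
    _ = ∫ q in Ioi (0:ℝ), Complex.Gamma (1 + Complex.I * μ) * (Complex.exp (-q) * (q:ℂ) ^ (1 + Complex.I * μ - 1)) :=
        setIntegral_congr_fun measurableSet_Ioi fun q hq => hinner q hq
    _ = _ := by
        rw [integral_const_mul, sq, Complex.Gamma_eq_integral hs, Complex.GammaIntegral]
        simp


lemma le_sinh {t : ℝ} (ht : 0 ≤ t) : t ≤ Real.sinh t := Real.self_le_sinh_iff.2 ht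

/-- good profile functions -/
def Gd (g : ℝ → ℝ) : Prop := ContinuousOn g (Ioi 0) ∧ ∃ K, 0 ≤ K ∧ ∀ z, 0 < z →
  |g z| ≤ K * z ^ (-(1/4) : ℝ) ∧ |g z| ≤ K * z ^ (-2 : ℝ)

lemma Gd_kap : Gd kap := by
  refine ⟨kap_contOn, 2 * Real.Gamma (1/4) + 2 * Real.Gamma 2, by positivity, fun z hz => ?_⟩
  rw [abs_of_nonneg (kap_nonneg z)]
  have g1 : 0 < Real.Gamma (1/4) := Real.Gamma_pos_of_pos (by norm_num)
  have g2 : 0 < Real.Gamma 2 := Real.Gamma_pos_of_pos (by norm_num)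
  constructor
  · refine (kap_le hz (a := 1/4) (by norm_num) (by norm_num)).trans ?_
    gcongr
    linarith
  · refine (kap_le hz (a := 2) (by norm_num) (by norm_num)).trans ?_
    gcongr
    linarith

lemma Gd_lam : Gd lam := by
  refine ⟨lam_contOn, 2 * Real.Gamma (1/4 + 1) + 2 * Real.Gamma (2 + 1), by positivity, fun z hz => ?_⟩
  have g1 : 0 < Real.Gamma (1/4 + 1) := Real.Gamma_pos_of_pos (by norm_num)
  have g2 : 0 < Real.Gamma (2 + 1) := Real.Gamma_pos_of_pos (by norm_num)
  constructor
  · refine (lam_abs_le hz (a := 1/4) (by norm_num) (by norm_num)).trans ?_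
    gcongr
    exact le_add_of_nonneg_right (mul_nonneg zero_le_two g2.le)
  · refine (lam_abs_le hz (a := 2) (by norm_num) (by norm_num)).trans ?_
    gcongr
    linarith

lemma Gd_dom {g : ℝ → ℝ} (hg : Gd g) {X1 : ℝ} (hX1 : 0 < X1) : ∃ C, 0 ≤ C ∧ ∀ X, X1 ≤ X → ∀ t, 0 < t →
    Real.cosh t ^ 2 * |g (X * Real.sinh t ^ 2)| ≤ C * Bd t := by
  obtain ⟨-, K, hK, h⟩ := hg
  refine ⟨Real.cosh 1 ^ 2 * (K * X1 ^ (-(1/4) : ℝ)) + 2 * K * X1 ^ (-2:ℝ), by positivity, fun X hX t ht => ?_⟩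
  have hX0 : 0 < X := by linarith
  have hs : t ≤ Real.sinh t := le_sinh ht.le
  have hs0 : 0 < Real.sinh t := by linarith
  obtain ⟨h1, h2⟩ := h (X * Real.sinh t ^ 2) (by positivity)
  unfold Bd
  split_ifs with htt
  · have e1 : Real.cosh t ≤ Real.cosh 1 := by
      rw [Real.cosh_le_cosh, abs_of_pos ht]; simpa using htt
    have e2 : (X * Real.sinh t ^ 2) ^ (-(1/4) : ℝ) ≤ X1 ^ (-(1/4) : ℝ) * t ^ (-(1/2) : ℝ) := by
      have : X1 ^ (-(1/4) : ℝ) * t ^ (-(1/2) : ℝ) = (X1 * t ^ 2) ^ (-(1/4) : ℝ) := by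
        rw [Real.mul_rpow hX1.le (by positivity), ← Real.rpow_natCast t 2, ← Real.rpow_mul ht.le]
        norm_num
      rw [this]
      refine Real.rpow_le_rpow_of_nonpos (by positivity) ?_ (by norm_num)
      gcongr
    calc _ ≤ Real.cosh 1 ^ 2 * (K * (X1 ^ (-(1/4) : ℝ) * t ^ (-(1/2) : ℝ))) := by
          gcongr
          exact h1.trans (by gcongr)
      _ ≤ _ := by
          have : 0 ≤ 2 * K * X1 ^ (-2:ℝ) * t ^ (-(1/2) : ℝ) := by positivity
          linarith
  · have ht1 : 1 < t := not_le.1 htt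
    have e1 : Real.cosh t ^ 2 ≤ 2 * Real.sinh t ^ 2 := by
      rw [Real.cosh_sq]; nlinarith
    have e2 : (X * Real.sinh t ^ 2) ^ (-2 : ℝ) ≤ X1 ^ (-2 : ℝ) * (Real.sinh t ^ 2) ^ (-2:ℝ) := by
      rw [← Real.mul_rpow hX1.le (by positivity)]
      refine Real.rpow_le_rpow_of_nonpos (by positivity) ?_ (by norm_num)
      gcongr
    have e3 : Real.sinh t ^ 2 * (Real.sinh t ^ 2) ^ (-2:ℝ) ≤ t ^ (-(3/2) : ℝ) := by
      have : Real.sinh t ^ 2 * (Real.sinh t ^ 2) ^ (-2:ℝ) = Real.sinh t ^ (-2:ℝ) := by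
        rw [← Real.rpow_natCast, ← Real.rpow_mul hs0.le, ← Real.rpow_add hs0]; norm_num
      rw [this]
      calc _ ≤ t ^ (-2:ℝ) := Real.rpow_le_rpow_of_nonpos ht hs (by norm_num)
        _ ≤ _ := Real.rpow_le_rpow_of_exponent_le ht1.le (by norm_num)
    calc _ ≤ (2 * Real.sinh t ^ 2) * (K * (X1 ^ (-2 : ℝ) * (Real.sinh t ^ 2) ^ (-2:ℝ))) := by
          gcongr
          exact h2.trans (by gcongr)
      _ = 2 * K * X1 ^ (-2:ℝ) * (Real.sinh t ^ 2 * (Real.sinh t ^ 2) ^ (-2:ℝ)) := by ring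
      _ ≤ 2 * K * X1 ^ (-2:ℝ) * t ^ (-(3/2) : ℝ) := by gcongr
      _ ≤ _ := by
          have : 0 ≤ Real.cosh 1 ^ 2 * (K * X1 ^ (-(1/4) : ℝ)) * t ^ (-(3/2) : ℝ) := by positivity
          linarith

lemma Gd_cont {g : ℝ → ℝ} (hg : Gd g) {X : ℝ} (hX : 0 < X) :
    ContinuousOn (fun t => g (X * Real.sinh t ^ 2)) (Ioi 0) := by
  refine hg.1.comp (by fun_prop) fun t ht => ?_
  have : 0 < Real.sinh t := by simpa using ht
  show 0 < X * Real.sinh t ^ 2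
  positivity

lemma Gd_int {g φ : ℝ → ℝ} (hg : Gd g) {A X : ℝ} (hX : 0 < X) (hφ : ContinuousOn φ (Ioi 0))
    (hA : ∀ t, 0 < t → |φ t| ≤ A * Real.cosh t ^ 2) :
    IntegrableOn (fun t => φ t * g (X * Real.sinh t ^ 2)) (Ioi 0) := by
  obtain ⟨C, hC, h⟩ := Gd_dom hg hX
  refine int_of_Bd (C := |A| * C) ((hφ.mul (Gd_cont hg hX)).aestronglyMeasurable measurableSet_Ioi) fun t ht => ?_
  rw [norm_mul, Real.norm_eq_abs, Real.norm_eq_abs]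
  calc _ ≤ (|A| * Real.cosh t ^ 2) * |g (X * Real.sinh t ^ 2)| := by
        gcongr
        exact (hA t ht).trans (by gcongr; exact le_abs_self A)
    _ = |A| * (Real.cosh t ^ 2 * |g (X * Real.sinh t ^ 2)|) := by ring
    _ ≤ |A| * (C * Bd t) := mul_le_mul_of_nonneg_left (h X le_rfl t ht) (abs_nonneg A)
    _ = _ := by ring

lemma Gd_top {g φ : ℝ → ℝ} (hg : Gd g) {A X : ℝ} (hX : 0 < X)
    (hA : ∀ t, 0 < t → |φ t| ≤ A * Real.cosh t ^ 2) :
    Tendsto (fun t => φ t * g (X * Real.sinh t ^ 2)) atTop (𝓝 0) := by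
  obtain ⟨C, hC, h⟩ := Gd_dom hg hX
  have hl := (tendsto_rpow_neg_atTop (y := 3/2) (by norm_num)).const_mul (|A| * C)
  rw [mul_zero] at hl
  refine squeeze_zero_norm' ?_ hl
  filter_upwards [eventually_gt_atTop 1] with t ht
  have ht0 : 0 < t := by linarith
  have hB : Bd t = t ^ (-(3/2) : ℝ) := by simp [Bd, not_le.2 ht]
  rw [← hB, norm_mul, Real.norm_eq_abs, Real.norm_eq_abs]
  calc _ ≤ (|A| * Real.cosh t ^ 2) * |g (X * Real.sinh t ^ 2)| := by
        gcongr
        exact (hA t ht0).trans (by gcongr; exact le_abs_self A)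
    _ = |A| * (Real.cosh t ^ 2 * |g (X * Real.sinh t ^ 2)|) := by ring
    _ ≤ |A| * (C * Bd t) := mul_le_mul_of_nonneg_left (h X le_rfl t ht0) (abs_nonneg A)
    _ = _ := by ring

lemma Gd_zero {g φ : ℝ → ℝ} (hg : Gd g) {A X : ℝ} (hX : 0 < X)
    (hA : ∀ t, 0 < t → t ≤ 1 → |φ t| ≤ A * t) :
    Tendsto (fun t => φ t * g (X * Real.sinh t ^ 2)) (𝓝[>] 0) (𝓝 0) := by
  obtain ⟨C, hC, h⟩ := Gd_dom hg hX
  have hl : Tendsto (fun t : ℝ => |A| * C * t ^ (1/2:ℝ)) (𝓝[>] 0) (𝓝 0) := by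
    have : Tendsto (fun t : ℝ => |A| * C * t ^ (1/2:ℝ)) (𝓝 0) (𝓝 (|A| * C * 0 ^ (1/2:ℝ))) :=
      ((Real.continuousAt_rpow_const 0 (1/2:ℝ) (Or.inr (by norm_num))).tendsto).const_mul _
    rw [Real.zero_rpow (by norm_num), mul_zero] at this
    exact this.mono_left nhdsWithin_le_nhds
  refine squeeze_zero_norm' ?_ hl
  filter_upwards [self_mem_nhdsWithin, Ioo_mem_nhdsGT (zero_lt_one' ℝ)] with t ht0 ht1
  have ht0 : 0 < t := ht0
  have hB : t * Bd t = t ^ (1/2 : ℝ) := by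
    have e : Bd t = t ^ (-(1/2) : ℝ) := by simp [Bd, ht1.2.le]
    rw [e]; nth_rw 1 [← Real.rpow_one t]
    rw [← Real.rpow_add ht0]; norm_num
  rw [← hB, norm_mul, Real.norm_eq_abs, Real.norm_eq_abs]
  have h1 : |g (X * Real.sinh t ^ 2)| ≤ C * Bd t := by
    refine le_trans ?_ (h X le_rfl t ht0)
    have : 1 ≤ Real.cosh t ^ 2 := one_le_pow₀ (Real.one_le_cosh t)
    exact le_mul_of_one_le_left (abs_nonneg _) this
  calc _ ≤ (|A| * t) * (C * Bd t) := by
        gcongr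
        exact (hA t ht0 ht1.2.le).trans (by gcongr; exact le_abs_self A)
    _ = _ := by ring

noncomputable def KK (φ : ℝ → ℝ) (X : ℝ) : ℝ := ∫ t in Ioi (0:ℝ), φ t * kap (X * Real.sinh t ^ 2)
noncomputable def LL (φ : ℝ → ℝ) (X : ℝ) : ℝ := ∫ t in Ioi (0:ℝ), φ t * lam (X * Real.sinh t ^ 2)

lemma KK_deriv {φ : ℝ → ℝ} {A X : ℝ} (hX : 0 < X) (hφ : ContinuousOn φ (Ioi 0))
    (hA : ∀ t, 0 < t → |φ t| ≤ A * Real.cosh t ^ 2) : HasDerivAt (KK φ) (LL φ X / X) X := by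
  obtain ⟨C, hC, h⟩ := Gd_dom Gd_lam (X1 := X / 2) (by positivity)
  have key := (hasDerivAt_integral_of_dominated_loc_of_deriv_le (s := Ioi (X / 2)) (x₀ := X)
    (μ := volume.restrict (Ioi (0:ℝ)))
    (bound := fun t => (|A| * C * (2 / X)) * Bd t) (Ioi_mem_nhds (by linarith))
    (F := fun X t => φ t * kap (X * Real.sinh t ^ 2))
    (F' := fun X t => φ t * lam (X * Real.sinh t ^ 2) / X) ?_ (Gd_int Gd_kap hX hφ hA)
    ((Gd_int Gd_lam hX hφ hA).div_const X).aestronglyMeasurable ?_ (Bd_int.const_mul _) ?_).2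
  · refine HasDerivAt.congr_deriv (f := KK φ) key ?_
    rw [integral_div]; rfl
  · filter_upwards [Ioi_mem_nhds hX] with Y hY using (Gd_int Gd_kap hY hφ hA).aestronglyMeasurable
  · filter_upwards [ae_restrict_mem measurableSet_Ioi] with t ht Y hY
    have ht : 0 < t := ht
    have hY : X / 2 < Y := hY
    have hY0 : 0 < Y := by linarith
    rw [norm_div, norm_mul, Real.norm_eq_abs, Real.norm_eq_abs, Real.norm_of_nonneg hY0.le, div_eq_mul_inv]
    have e1 : Y⁻¹ ≤ 2 / X := by
      rw [inv_eq_one_div, div_le_div_iff₀ hY0 hX]; linarith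
    have e2 : |φ t| * |lam (Y * Real.sinh t ^ 2)| ≤ |A| * (C * Bd t) := by
      calc _ ≤ (|A| * Real.cosh t ^ 2) * |lam (Y * Real.sinh t ^ 2)| := by
            gcongr
            exact (hA t ht).trans (by gcongr; exact le_abs_self A)
        _ = |A| * (Real.cosh t ^ 2 * |lam (Y * Real.sinh t ^ 2)|) := by ring
        _ ≤ |A| * (C * Bd t) := mul_le_mul_of_nonneg_left (h Y hY.le t ht) (abs_nonneg A)
    calc _ ≤ |A| * (C * Bd t) * (2 / X) := by
            gcongr
            exact mul_nonneg (abs_nonneg A) (mul_nonneg hC (Bd_nonneg ht))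
      _ = _ := by ring
  · filter_upwards [ae_restrict_mem measurableSet_Ioi] with t ht Y hY
    have hs : 0 < Real.sinh t := by simpa using ht
    have hY : X / 2 < Y := hY
    have hY0 : 0 < Y := by linarith
    have h1 : HasDerivAt (fun Y => Y * Real.sinh t ^ 2) (Real.sinh t ^ 2) Y := by
      simpa using (hasDerivAt_id Y).mul_const (Real.sinh t ^ 2)
    have h2 := (kap_deriv (z := Y * Real.sinh t ^ 2) (by positivity)).comp Y h1
    refine (h2.const_mul (φ t)).congr_deriv ?_
    field_simp

lemma LL_deriv {φ : ℝ → ℝ} {A X : ℝ} (hX : 0 < X) (hφ : ContinuousOn φ (Ioi 0))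
    (hA : ∀ t, 0 < t → |φ t| ≤ A) : HasDerivAt (LL φ) (KK (fun t => φ t * Real.sinh t ^ 2) X) X := by
  obtain ⟨C, hC, h⟩ := Gd_dom Gd_kap (X1 := X / 2) (by positivity)
  have hA' : ∀ t, 0 < t → |φ t| ≤ |A| * Real.cosh t ^ 2 := fun t ht => by
    have : 1 ≤ Real.cosh t ^ 2 := one_le_pow₀ (Real.one_le_cosh t)
    have := hA t ht
    have := le_abs_self A
    nlinarith [abs_nonneg A]
  have hA2 : ∀ t, 0 < t → |φ t * Real.sinh t ^ 2| ≤ |A| * Real.cosh t ^ 2 := fun t ht => by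
    rw [abs_mul, abs_of_nonneg (sq_nonneg (Real.sinh t)), Real.cosh_sq]
    have := hA t ht
    have := le_abs_self A
    have : |φ t| * Real.sinh t ^ 2 ≤ |A| * Real.sinh t ^ 2 :=
      mul_le_mul_of_nonneg_right (by linarith) (sq_nonneg _)
    nlinarith [abs_nonneg A]
  have hφ2 : ContinuousOn (fun t => φ t * Real.sinh t ^ 2) (Ioi 0) := hφ.mul (by fun_prop)
  have key := (hasDerivAt_integral_of_dominated_loc_of_deriv_le (s := Ioi (X / 2)) (x₀ := X)
    (μ := volume.restrict (Ioi (0:ℝ)))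
    (bound := fun t => (|A| * C) * Bd t) (Ioi_mem_nhds (by linarith))
    (F := fun X t => φ t * lam (X * Real.sinh t ^ 2))
    (F' := fun X t => φ t * Real.sinh t ^ 2 * kap (X * Real.sinh t ^ 2)) ?_ (Gd_int Gd_lam hX hφ hA')
    (Gd_int Gd_kap hX hφ2 hA2).aestronglyMeasurable ?_ (Bd_int.const_mul _) ?_).2
  · exact key
  · filter_upwards [Ioi_mem_nhds hX] with Y hY using (Gd_int Gd_lam hY hφ hA').aestronglyMeasurable
  · filter_upwards [ae_restrict_mem measurableSet_Ioi] with t ht Y hY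
    have ht : 0 < t := ht
    have hY : X / 2 < Y := hY
    rw [norm_mul, Real.norm_eq_abs, Real.norm_eq_abs]
    calc _ ≤ (|A| * Real.cosh t ^ 2) * |kap (Y * Real.sinh t ^ 2)| := by
            gcongr
            exact hA2 t ht
        _ = |A| * (Real.cosh t ^ 2 * |kap (Y * Real.sinh t ^ 2)|) := by ring
        _ ≤ |A| * (C * Bd t) := mul_le_mul_of_nonneg_left (h Y hY.le t ht) (abs_nonneg A)
        _ = _ := by ring
  · filter_upwards [ae_restrict_mem measurableSet_Ioi] with t ht Y hY
    have hs : 0 < Real.sinh t := by simpa using ht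
    have hY : X / 2 < Y := hY
    have hY0 : 0 < Y := by linarith
    have h1 : HasDerivAt (fun Y => Y * Real.sinh t ^ 2) (Real.sinh t ^ 2) Y := by
      simpa using (hasDerivAt_id Y).mul_const (Real.sinh t ^ 2)
    have h2 := (lam_deriv (z := Y * Real.sinh t ^ 2) (by positivity)).comp Y h1
    refine (h2.const_mul (φ t)).congr_deriv ?_
    ring

lemma kapX_deriv {X t : ℝ} (hX : 0 < X) (ht : 0 < t) : HasDerivAt (fun t => kap (X * Real.sinh t ^ 2))
    (2 * Real.cosh t / Real.sinh t * lam (X * Real.sinh t ^ 2)) t := by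
  have hs : 0 < Real.sinh t := by simpa using ht
  have h1 : HasDerivAt (fun t => X * Real.sinh t ^ 2) (X * (2 * Real.sinh t * Real.cosh t)) t := by
    refine (((Real.hasDerivAt_sinh t).pow 2).const_mul X).congr_deriv ?_
    ring
  have h2 := (kap_deriv (z := X * Real.sinh t ^ 2) (by positivity)).comp t h1
  refine h2.congr_deriv ?_
  field_simp

lemma lamX_deriv {X t : ℝ} (hX : 0 < X) (ht : 0 < t) : HasDerivAt (fun t => lam (X * Real.sinh t ^ 2))
    (X * (2 * Real.sinh t * Real.cosh t) * kap (X * Real.sinh t ^ 2)) t := by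
  have hs : 0 < Real.sinh t := by simpa using ht
  have h1 : HasDerivAt (fun t => X * Real.sinh t ^ 2) (X * (2 * Real.sinh t * Real.cosh t)) t := by
    refine (((Real.hasDerivAt_sinh t).pow 2).const_mul X).congr_deriv ?_
    ring
  have h2 := (lam_deriv (z := X * Real.sinh t ^ 2) (by positivity)).comp t h1
  refine h2.congr_deriv ?_
  ring


lemma cosh_sq_ge (t : ℝ) : 1 ≤ Real.cosh t ^ 2 := one_le_pow₀ (Real.one_le_cosh t)

lemma bd1 {A : ℝ} (φ : ℝ → ℝ) (h : ∀ t, |φ t| ≤ 1) (hA : 0 ≤ A) (t : ℝ) : |A * φ t| ≤ A * Real.cosh t ^ 2 := by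
  rw [abs_mul, abs_of_nonneg hA]
  have := cosh_sq_ge t
  have := h t
  gcongr; linarith

lemma cos_bd (m t : ℝ) : |Real.cos (m * t)| ≤ 1 * Real.cosh t ^ 2 := by
  have := Real.abs_cos_le_one (m * t)
  have := cosh_sq_ge t
  linarith

lemma sin_bd (m t : ℝ) : |Real.sin (m * t)| ≤ 1 * Real.cosh t ^ 2 := by
  have := Real.abs_sin_le_one (m * t)
  have := cosh_sq_ge t
  linarith

lemma mul_bd {t y : ℝ} {φ : ℝ} (h : |φ| ≤ 1) {A : ℝ} (hy : |y| ≤ A * Real.cosh t ^ 2) :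
    |φ * y| ≤ A * Real.cosh t ^ 2 := by
  rw [abs_mul]
  nlinarith [abs_nonneg y, abs_nonneg φ]

lemma sq_bd (t : ℝ) : |Real.sinh t ^ 2| ≤ 1 * Real.cosh t ^ 2 := by
  rw [abs_of_nonneg (sq_nonneg _), Real.cosh_sq]; linarith

lemma sc_bd (t : ℝ) : |Real.sinh t * Real.cosh t| ≤ 1 * Real.cosh t ^ 2 := by
  rw [abs_le]; have := Real.cosh_sq t
  constructor <;> nlinarith [sq_nonneg (Real.sinh t - Real.cosh t), sq_nonneg (Real.sinh t + Real.cosh t)]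

lemma sin_abs_le (m : ℝ) (hm : 0 < m) {t : ℝ} (ht : 0 < t) : |Real.sin (m * t)| ≤ m * t := by
  have := Real.abs_sin_le_abs (x := m * t)
  rwa [abs_of_pos (by positivity : 0 < m * t)] at this

noncomputable def n0 (m X : ℝ) : ℝ := KK (fun t => Real.cos (m * t)) X
noncomputable def n1 (m X : ℝ) : ℝ := LL (fun t => Real.cos (m * t)) X
noncomputable def r1 (m X : ℝ) : ℝ := X * KK (fun t => Real.cos (m * t) * Real.sinh t ^ 2) X
noncomputable def n2 (m X : ℝ) : ℝ := r1 m X + m ^ 2 / 4 * n0 m X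

lemma n0_deriv (m : ℝ) {X : ℝ} (hX : 0 < X) : HasDerivAt (n0 m) (n1 m X / X) X :=
  KK_deriv hX (by fun_prop) (fun t _ => cos_bd m t)

lemma n1_deriv (m : ℝ) {X : ℝ} (hX : 0 < X) : HasDerivAt (n1 m) (r1 m X / X) X := by
  refine (LL_deriv (A := 1) hX (by fun_prop) (fun t _ => Real.abs_cos_le_one _)).congr_deriv ?_
  rw [r1]; field_simp

lemma lam_int {φ : ℝ → ℝ} {A X : ℝ} (hX : 0 < X) (hφ : ContinuousOn φ (Ioi 0))
    (hA : ∀ t, 0 < t → |φ t| ≤ A * Real.cosh t ^ 2) :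
    IntegrableOn (fun t => φ t * lam (X * Real.sinh t ^ 2)) (Ioi 0) := Gd_int Gd_lam hX hφ hA

/-- general integration by parts identity -/
lemma parts (m : ℝ) (hm : 0 < m) {X : ℝ} (hX : 0 < X) :
    m ^ 2 * n1 m X + 2 * X * n0 m X + 4 * X * KK (fun t => Real.cos (m * t) * Real.sinh t ^ 2) X
      + 4 * X * n1 m X + 4 * X * LL (fun t => Real.cos (m * t) * Real.sinh t ^ 2) X = 0 := by
  have c0 : ContinuousOn (fun t => Real.cos (m * t)) (Ioi 0) := by fun_prop
  have c1 : ContinuousOn (fun t => Real.cos (m * t) * Real.sinh t ^ 2) (Ioi 0) := by fun_prop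
  have b1 : ∀ t, 0 < t → |Real.cos (m * t) * Real.sinh t ^ 2| ≤ 1 * Real.cosh t ^ 2 := fun t _ =>
    mul_bd (Real.abs_cos_le_one _) (sq_bd t)
  have i1 := Gd_int Gd_lam hX c0 (fun t _ => cos_bd m t)
  have i2 := Gd_int Gd_kap hX c0 (fun t _ => cos_bd m t)
  have i3 := Gd_int Gd_kap hX c1 b1
  have i4 := Gd_int Gd_lam hX c1 b1
  have h := FTC0 (l := 0) (f := fun t => m * (Real.sin (m * t) * lam (X * Real.sinh t ^ 2)) +
      2 * X * ((Real.cos (m * t) * (Real.sinh t * Real.cosh t)) * kap (X * Real.sinh t ^ 2)))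
    (f' := fun t => m ^ 2 * (Real.cos (m * t) * lam (X * Real.sinh t ^ 2)) +
      2 * X * (Real.cos (m * t) * kap (X * Real.sinh t ^ 2)) +
      4 * X * (Real.cos (m * t) * Real.sinh t ^ 2 * kap (X * Real.sinh t ^ 2)) +
      4 * X * (Real.cos (m * t) * lam (X * Real.sinh t ^ 2)) +
      4 * X * (Real.cos (m * t) * Real.sinh t ^ 2 * lam (X * Real.sinh t ^ 2)))
    ?_ ?_ ?_ ?_
  · rw [integral_add ((((i1.const_mul _).fun_add (i2.const_mul _)).fun_add (i3.const_mul _)).fun_add (i1.const_mul _)) (i4.const_mul _),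
      integral_add (((i1.const_mul _).fun_add (i2.const_mul _)).fun_add (i3.const_mul _)) (i1.const_mul _),
      integral_add ((i1.const_mul _).fun_add (i2.const_mul _)) (i3.const_mul _),
      integral_add (i1.const_mul _) (i2.const_mul _)] at h
    simp only [integral_const_mul] at h
    simp only [n1, n0, KK, LL]
    linarith
  · intro t ht
    have hs : 0 < Real.sinh t := by simpa using ht
    have d1 : HasDerivAt (fun t => Real.sin (m * t)) (Real.cos (m * t) * m) t :=
      (((hasDerivAt_id t).const_mul m).congr_deriv (mul_one m)).sin
    have d2 : HasDerivAt (fun t => Real.cos (m * t)) (-Real.sin (m * t) * m) t :=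
      (((hasDerivAt_id t).const_mul m).congr_deriv (mul_one m)).cos
    have d3 := d2.mul ((Real.hasDerivAt_sinh t).mul (Real.hasDerivAt_cosh t))
    refine (((d1.mul (lamX_deriv hX ht)).const_mul m).add
      ((d3.mul (kapX_deriv hX ht)).const_mul (2 * X))).congr_deriv ?_
    simp only [Pi.mul_apply]
    have hc := Real.cosh_sq t
    field_simp
    rw [hc]
    ring
  · exact (((((i1.const_mul _).add (i2.const_mul _)).add (i3.const_mul _)).add (i1.const_mul _)).add (i4.const_mul _))
  · have z1 := (Gd_zero Gd_lam hX (φ := fun t => Real.sin (m * t)) (A := m) (fun t ht _ => sin_abs_le m hm ht)).const_mul m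
    have z2 := (Gd_zero Gd_kap hX (φ := fun t => Real.cos (m * t) * (Real.sinh t * Real.cosh t)) (A := Real.cosh 1 ^ 2) ?_).const_mul (2 * X)
    · simpa using z1.add z2
    · intro t ht ht1
      have hs : 0 < Real.sinh t := by simpa using ht
      have e1 : Real.cosh t ≤ Real.cosh 1 := by
        rw [Real.cosh_le_cosh, abs_of_pos ht]; simpa using ht1
      have e2 : Real.sinh t ≤ t * Real.cosh t := by
        obtain ⟨c, hc, e⟩ := exists_hasDerivAt_eq_slope Real.sinh Real.cosh ht
          Real.continuous_sinh.continuousOn (fun x _ => Real.hasDerivAt_sinh x)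
        rw [Real.sinh_zero, sub_zero, sub_zero, eq_div_iff ht.ne'] at e
        have : Real.cosh c ≤ Real.cosh t := by
          rw [Real.cosh_le_cosh, abs_of_pos ht, abs_of_pos hc.1]; exact hc.2.le
        nlinarith
      have e3 := Real.abs_cos_le_one (m * t)
      have e4 := Real.cosh_pos t
      rw [abs_mul, abs_of_pos (mul_pos hs e4)]
      calc _ ≤ 1 * (t * Real.cosh t * Real.cosh t) := by gcongr
        _ ≤ 1 * (t * Real.cosh 1 * Real.cosh 1) := by gcongr
        _ = _ := by ring
  · have z1 := (Gd_top Gd_lam hX (φ := fun t => Real.sin (m * t)) (fun t ht => sin_bd m t)).const_mul m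
    have z2 := (Gd_top Gd_kap hX (φ := fun t => Real.cos (m * t) * (Real.sinh t * Real.cosh t)) (A := 1)
      (fun t _ => mul_bd (Real.abs_cos_le_one _) (sc_bd t))).const_mul (2 * X)
    simpa using z1.add z2

lemma n2_deriv (m : ℝ) (hm : 0 < m) {X : ℝ} (hX : 0 < X) :
    HasDerivAt (n2 m) (-(n1 m X + n0 m X / 2)) X := by
  have c1 : ContinuousOn (fun t => Real.cos (m * t) * Real.sinh t ^ 2) (Ioi 0) := by fun_prop
  have b1 : ∀ t, 0 < t → |Real.cos (m * t) * Real.sinh t ^ 2| ≤ 1 * Real.cosh t ^ 2 := fun t _ =>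
    mul_bd (Real.abs_cos_le_one _) (sq_bd t)
  have h := ((hasDerivAt_id X).mul (KK_deriv hX c1 b1)).add ((n0_deriv m hX).const_mul (m ^ 2 / 4))
  refine HasDerivAt.congr_deriv (f := n2 m) h ?_
  have := parts m hm hX
  simp only [id]
  field_simp
  linarith

/-- asymptotic identities -/
lemma id_n1 (m : ℝ) (hm : 0 < m) {X : ℝ} (hX : 0 < X) :
    m * n1 m X = - (2 * X * KK (fun t => Real.sin (m * t) * (Real.sinh t * Real.cosh t)) X) := by
  have i1 := Gd_int Gd_lam hX (φ := fun t => Real.cos (m * t)) (by fun_prop) (fun t _ => cos_bd m t)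
  have i2 := Gd_int Gd_kap hX (φ := fun t => Real.sin (m * t) * (Real.sinh t * Real.cosh t)) (by fun_prop)
    (fun t _ => mul_bd (Real.abs_sin_le_one _) (sc_bd t))
  have h := FTC0 (l := 0) (f := fun t => Real.sin (m * t) * lam (X * Real.sinh t ^ 2))
    (f' := fun t => m * (Real.cos (m * t) * lam (X * Real.sinh t ^ 2)) +
      2 * X * (Real.sin (m * t) * (Real.sinh t * Real.cosh t) * kap (X * Real.sinh t ^ 2))) ?_
      (by exact (i1.const_mul _).add (i2.const_mul _))
      (Gd_zero Gd_lam hX (fun t ht _ => sin_abs_le m hm ht)) (Gd_top Gd_lam hX (fun t ht => sin_bd m t))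
  · rw [integral_add (i1.const_mul _) (i2.const_mul _), integral_const_mul, integral_const_mul] at h
    simp only [n1, KK, LL]
    linarith
  · intro t ht
    have d1 : HasDerivAt (fun t => Real.sin (m * t)) (Real.cos (m * t) * m) t :=
      (((hasDerivAt_id t).const_mul m).congr_deriv (mul_one m)).sin
    refine (d1.mul (lamX_deriv hX ht)).congr_deriv ?_
    ring

lemma coth_bd (m : ℝ) (hm : 0 < m) {t : ℝ} (ht : 0 < t) :
    |Real.sin (m * t) * (Real.cosh t / Real.sinh t)| ≤ m * Real.cosh t ^ 2 := by
  have hs : 0 < Real.sinh t := by simpa using ht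
  have := sin_abs_le m hm ht
  have h1 := le_sinh ht.le
  have h2 := Real.one_le_cosh t
  rw [abs_mul, abs_of_pos (div_pos (Real.cosh_pos t) hs)]
  calc _ ≤ (m * Real.sinh t) * (Real.cosh t / Real.sinh t) := by
        gcongr; exact this.trans (by gcongr)
    _ = m * Real.cosh t := by field_simp
    _ ≤ _ := by gcongr; nlinarith

lemma coth_cont (m : ℝ) : ContinuousOn (fun t => Real.sin (m * t) * (Real.cosh t / Real.sinh t)) (Ioi 0) := by
  intro t ht
  have hs : Real.sinh t ≠ 0 := by have : 0 < Real.sinh t := by simpa using ht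
                                  exact this.ne'
  exact ContinuousAt.continuousWithinAt (by fun_prop (disch := assumption))

lemma id_n0 (m : ℝ) (hm : 0 < m) {X : ℝ} (hX : 0 < X) :
    m * n0 m X = - (2 * LL (fun t => Real.sin (m * t) * (Real.cosh t / Real.sinh t)) X) := by
  have i1 := Gd_int Gd_kap hX (φ := fun t => Real.cos (m * t)) (by fun_prop) (fun t _ => cos_bd m t)
  have i2 := Gd_int Gd_lam hX (coth_cont m) (fun t ht => coth_bd m hm ht)
  have h := FTC0 (l := 0) (f := fun t => Real.sin (m * t) * kap (X * Real.sinh t ^ 2))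
    (f' := fun t => m * (Real.cos (m * t) * kap (X * Real.sinh t ^ 2)) +
      2 * (Real.sin (m * t) * (Real.cosh t / Real.sinh t) * lam (X * Real.sinh t ^ 2))) ?_
      (by exact (i1.const_mul _).add (i2.const_mul _))
      (Gd_zero Gd_kap hX (fun t ht _ => sin_abs_le m hm ht)) (Gd_top Gd_kap hX (fun t ht => sin_bd m t))
  · rw [integral_add (i1.const_mul _) (i2.const_mul _), integral_const_mul, integral_const_mul] at h
    simp only [n0, KK, LL]
    linarith
  · intro t ht
    have d1 : HasDerivAt (fun t => Real.sin (m * t)) (Real.cos (m * t) * m) t :=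
      (((hasDerivAt_id t).const_mul m).congr_deriv (mul_one m)).sin
    refine (d1.mul (kapX_deriv hX ht)).congr_deriv ?_
    ring

lemma sinhsq_lim {X : ℝ} (hX : 0 < X) : Tendsto (fun t => X * Real.sinh t ^ 2) (𝓝[>] 0) (𝓝[>] 0) := by
  rw [tendsto_nhdsWithin_iff]
  constructor
  · have : Tendsto (fun t => X * Real.sinh t ^ 2) (𝓝 0) (𝓝 (X * Real.sinh 0 ^ 2)) :=
      (by fun_prop : Continuous (fun t => X * Real.sinh t ^ 2)).tendsto 0
    simp only [Real.sinh_zero, ne_eq, OfNat.ofNat_ne_zero, not_false_eq_true, zero_pow, mul_zero] at this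
    exact this.mono_left nhdsWithin_le_nhds
  · filter_upwards [self_mem_nhdsWithin] with t ht
    have hs : 0 < Real.sinh t := by simpa using ht
    show 0 < X * Real.sinh t ^ 2
    positivity

lemma id_one (m : ℝ) {X : ℝ} (hX : 0 < X) :
    2 * X * KK (fun t => Real.cos (m * t) * (Real.sinh t * Real.cosh t)) X
      - m * LL (fun t => Real.sin (m * t)) X = 1 := by
  have i1 := Gd_int Gd_lam hX (φ := fun t => Real.sin (m * t)) (by fun_prop) (fun t _ => sin_bd m t)
  have i2 := Gd_int Gd_kap hX (φ := fun t => Real.cos (m * t) * (Real.sinh t * Real.cosh t)) (by fun_prop)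
    (fun t _ => mul_bd (Real.abs_cos_le_one _) (sc_bd t))
  have h := FTC0 (l := -1) (f := fun t => Real.cos (m * t) * lam (X * Real.sinh t ^ 2))
    (f' := fun t => 2 * X * (Real.cos (m * t) * (Real.sinh t * Real.cosh t) * kap (X * Real.sinh t ^ 2)) -
      m * (Real.sin (m * t) * lam (X * Real.sinh t ^ 2))) ?_
      (by exact (i2.const_mul _).sub (i1.const_mul _))
      ?_ (Gd_top Gd_lam hX (fun t ht => cos_bd m t))
  · rw [integral_sub (i2.const_mul _) (i1.const_mul _), integral_const_mul, integral_const_mul] at h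
    simp only [KK, LL]
    linarith
  · intro t ht
    have d1 : HasDerivAt (fun t => Real.cos (m * t)) (-Real.sin (m * t) * m) t :=
      (((hasDerivAt_id t).const_mul m).congr_deriv (mul_one m)).cos
    refine (d1.mul (lamX_deriv hX ht)).congr_deriv ?_
    ring
  · have h1 : Tendsto (fun t => Real.cos (m * t)) (𝓝 0) (𝓝 (Real.cos (m * 0))) :=
      (by fun_prop : Continuous (fun t => Real.cos (m * t))).tendsto 0
    have h2 := (h1.mono_left (nhdsWithin_le_nhds (s := Ioi 0))).mul (lam_zero_lim.comp (sinhsq_lim hX))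
    simpa using h2


lemma kap_anti {y z : ℝ} (hy : 0 < y) (h : y ≤ z) : kap z ≤ kap y := by
  refine setIntegral_mono_on (ker_int1 (hy.trans_le h)) (ker_int1 hy) measurableSet_Ioi fun q hq => ?_
  have hq : 0 < q := hq
  gcongr

lemma kapsq_int : IntegrableOn (fun u => kap (u ^ 2)) (Ioi 0) := by
  refine int_of_Bd (C := 2 * Real.Gamma (1/4) + 2 * Real.Gamma (3/4)) ?_ fun t ht => ?_
  · refine ContinuousOn.aestronglyMeasurable ?_ measurableSet_Ioi
    refine kap_contOn.comp (by fun_prop) fun t ht => ?_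
    have : 0 < t := ht
    show 0 < t ^ 2
    positivity
  · rw [Real.norm_of_nonneg (kap_nonneg _)]
    have g1 : 0 < Real.Gamma (1/4) := Real.Gamma_pos_of_pos (by norm_num)
    have g2 : 0 < Real.Gamma (3/4) := Real.Gamma_pos_of_pos (by norm_num)
    unfold Bd
    split_ifs
    · refine (kap_le (z := t ^ 2) (by positivity) (a := 1/4) (by norm_num) (by norm_num)).trans ?_
      rw [← Real.rpow_natCast t 2, ← Real.rpow_mul ht.le]
      norm_num
      gcongr
      norm_num at g2
      linarith
    · refine (kap_le (z := t ^ 2) (by positivity) (a := 3/4) (by norm_num) (by norm_num)).trans ?_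
      rw [← Real.rpow_natCast t 2, ← Real.rpow_mul ht.le]
      norm_num
      gcongr
      norm_num at g1
      linarith

lemma one_bd (t : ℝ) : |(1:ℝ)| ≤ 1 * Real.cosh t ^ 2 := by
  have := cosh_sq_ge t
  simpa using this

lemma kapsinh_int {X : ℝ} (hX : 0 < X) : IntegrableOn (fun t => kap (X * Real.sinh t ^ 2)) (Ioi 0) := by
  simpa using Gd_int Gd_kap (φ := fun _ => 1) hX (by fun_prop) (fun t _ => one_bd t)

noncomputable def C0 : ℝ := ∫ u in Ioi (0:ℝ), kap (u ^ 2)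

lemma C0_nonneg : 0 ≤ C0 := setIntegral_nonneg measurableSet_Ioi fun _ _ => kap_nonneg _

lemma kapsinh_le {x : ℝ} (hx : 0 < x) : ∫ t in Ioi (0:ℝ), kap (x ^ 2 * Real.sinh t ^ 2) ≤ C0 / x := by
  have h1 := integral_comp_mul_left_Ioi (fun u => kap (u ^ 2)) 0 hx
  have h2 : IntegrableOn (fun t => kap ((x * t) ^ 2)) (Ioi 0) := by
    have := (integrableOn_Ioi_comp_mul_left_iff (fun u => kap (u ^ 2)) 0 hx).2 (by simpa using kapsq_int)
    exact this
  rw [mul_zero] at h1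
  calc _ ≤ ∫ t in Ioi (0:ℝ), kap ((x * t) ^ 2) := by
        refine setIntegral_mono_on (kapsinh_int (by positivity)) h2 measurableSet_Ioi fun t ht => ?_
        have ht : 0 < t := ht
        have := le_sinh ht.le
        refine kap_anti (by positivity) ?_
        rw [mul_pow]; gcongr
    _ = C0 / x := by rw [h1, C0, smul_eq_mul]; field_simp

lemma KK_abs_le {φ : ℝ → ℝ} {A x : ℝ} (hx : 0 < x) (hφ : ∀ t, 0 < t → |φ t| ≤ A) :
    |KK φ (x ^ 2)| ≤ A * (C0 / x) := by
  have hA : 0 ≤ A := (abs_nonneg _).trans (hφ 1 one_pos)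
  calc |KK φ (x ^ 2)| ≤ ∫ t in Ioi (0:ℝ), A * kap (x ^ 2 * Real.sinh t ^ 2) := by
        rw [← Real.norm_eq_abs]
        refine norm_integral_le_of_norm_le ((kapsinh_int (by positivity)).const_mul A) ?_
        filter_upwards [ae_restrict_mem measurableSet_Ioi] with t ht
        rw [norm_mul, Real.norm_eq_abs, Real.norm_of_nonneg (kap_nonneg _)]
        exact mul_le_mul_of_nonneg_right (hφ t ht) (kap_nonneg _)
    _ ≤ _ := by
        rw [integral_const_mul]
        exact mul_le_mul_of_nonneg_left (kapsinh_le hx) hA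

noncomputable def Zre (m X : ℝ) : ℝ := 2 * X * KK (fun t => Real.cos (m * t) * (Real.sinh t * Real.cosh t)) X
noncomputable def Zim (m X : ℝ) : ℝ := 2 * X * KK (fun t => Real.sin (m * t) * (Real.sinh t * Real.cosh t)) X
noncomputable def err (m X : ℝ) : ℝ := X * KK (fun t => Real.cos (m * t) * (Real.sinh t ^ 2 - Real.sinh t * Real.cosh t)) X

lemma ssc_eq (t : ℝ) : Real.sinh t ^ 2 - Real.sinh t * Real.cosh t = - ((1 - Real.exp (-(2*t))) / 2) := by
  have e : Real.exp (-(2 * t)) = Real.exp (-t) * Real.exp (-t) := by rw [← Real.exp_add]; ring_nf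
  have e2 : Real.exp t * Real.exp (-t) = 1 := by rw [← Real.exp_add]; simp
  rw [Real.sinh_eq, Real.cosh_eq, e]; linear_combination (-1/2) * e2

lemma err_lim (m : ℝ) : Tendsto (err m) (𝓝[>] 0) (𝓝 0) := by
  have hl : Tendsto (fun X : ℝ => 1 / 2 * C0 * Real.sqrt X) (𝓝[>] 0) (𝓝 0) := by
    have : Tendsto (fun X : ℝ => 1 / 2 * C0 * Real.sqrt X) (𝓝 0) (𝓝 (1/2 * C0 * Real.sqrt 0)) :=
      (by fun_prop : Continuous (fun X : ℝ => 1 / 2 * C0 * Real.sqrt X)).tendsto 0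
    rw [Real.sqrt_zero, mul_zero] at this
    exact this.mono_left nhdsWithin_le_nhds
  refine squeeze_zero_norm' ?_ hl
  filter_upwards [self_mem_nhdsWithin] with X hX
  have hX : 0 < X := hX
  have hs : 0 < Real.sqrt X := Real.sqrt_pos.2 hX
  have h := KK_abs_le (A := 1/2) hs (φ := fun t => Real.cos (m * t) * (Real.sinh t ^ 2 - Real.sinh t * Real.cosh t)) ?_
  · rw [Real.sq_sqrt hX.le] at h
    rw [err, Real.norm_eq_abs, abs_mul, abs_of_pos hX]
    calc _ ≤ X * (1 / 2 * (C0 / Real.sqrt X)) := by gcongr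
      _ = 1 / 2 * C0 * (X / Real.sqrt X) := by ring
      _ = _ := by rw [Real.div_sqrt]
  · intro t ht
    rw [abs_mul, ssc_eq, abs_neg]
    have h1 := Real.abs_cos_le_one (m * t)
    have h2 : Real.exp (-(2 * t)) ≤ 1 := Real.exp_le_one_iff.2 (by linarith)
    have h3 := Real.exp_pos (-(2 * t))
    rw [abs_of_nonneg (show 0 ≤ (1 - Real.exp (-(2*t))) / 2 by linarith)]
    nlinarith [abs_nonneg (Real.cos (m * t))]

lemma KK_add {φ ψ : ℝ → ℝ} {A B X : ℝ} (hX : 0 < X) (hφ : ContinuousOn φ (Ioi 0)) (hψ : ContinuousOn ψ (Ioi 0))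
    (hA : ∀ t, 0 < t → |φ t| ≤ A * Real.cosh t ^ 2) (hB : ∀ t, 0 < t → |ψ t| ≤ B * Real.cosh t ^ 2) :
    KK (fun t => φ t + ψ t) X = KK φ X + KK ψ X := by
  simp only [KK]
  rw [← integral_add (Gd_int Gd_kap hX hφ hA) (Gd_int Gd_kap hX hψ hB)]
  congr 1; ext t; ring

lemma LL_add {φ ψ : ℝ → ℝ} {A B X : ℝ} (hX : 0 < X) (hφ : ContinuousOn φ (Ioi 0)) (hψ : ContinuousOn ψ (Ioi 0))
    (hA : ∀ t, 0 < t → |φ t| ≤ A * Real.cosh t ^ 2) (hB : ∀ t, 0 < t → |ψ t| ≤ B * Real.cosh t ^ 2) :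
    LL (fun t => φ t + ψ t) X = LL φ X + LL ψ X := by
  simp only [LL]
  rw [← integral_add (Gd_int Gd_lam hX hφ hA) (Gd_int Gd_lam hX hψ hB)]
  congr 1; ext t; ring

lemma r1_eq (m : ℝ) {X : ℝ} (hX : 0 < X) : r1 m X = Zre m X / 2 + err m X := by
  have b1 : ∀ t, 0 < t → |Real.cos (m * t) * (Real.sinh t * Real.cosh t)| ≤ 1 * Real.cosh t ^ 2 := fun t _ =>
    mul_bd (Real.abs_cos_le_one _) (sc_bd t)
  have b2 : ∀ t, 0 < t → |Real.cos (m * t) * (Real.sinh t ^ 2 - Real.sinh t * Real.cosh t)| ≤ 2 * Real.cosh t ^ 2 :=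
    fun t _ => mul_bd (Real.abs_cos_le_one _) (by
      have := abs_sub (Real.sinh t ^ 2) (Real.sinh t * Real.cosh t)
      have h1 := sq_bd t
      have h2 := sc_bd t
      linarith)
  have h := KK_add hX (by fun_prop) (by fun_prop) b1 b2
  have e : (fun t => Real.cos (m * t) * Real.sinh t ^ 2) = fun t => Real.cos (m * t) * (Real.sinh t * Real.cosh t) +
    Real.cos (m * t) * (Real.sinh t ^ 2 - Real.sinh t * Real.cosh t) := by ext t; ring
  rw [r1, e, h, Zre, err]; ring

lemma cm1_eq {t : ℝ} (ht : 0 < t) : Real.cosh t / Real.sinh t - 1 = Real.exp (-t) / Real.sinh t := by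
  have hs : 0 < Real.sinh t := by simpa using ht
  field_simp
  rw [Real.cosh_sub_sinh]

lemma cm1_bd (m : ℝ) (hm : 0 < m) {t : ℝ} (ht : 0 < t) :
    |Real.sin (m * t) * (Real.cosh t / Real.sinh t - 1)| ≤ m * Real.exp (-t) := by
  have hs : 0 < Real.sinh t := by simpa using ht
  rw [cm1_eq ht, abs_mul, abs_of_pos (div_pos (Real.exp_pos _) hs)]
  have := sin_abs_le m hm ht
  have h1 := le_sinh ht.le
  calc _ ≤ (m * Real.sinh t) * (Real.exp (-t) / Real.sinh t) := by
        gcongr; exact this.trans (by gcongr)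
    _ = _ := by field_simp

lemma n2_eq (m : ℝ) (hm : 0 < m) {X : ℝ} (hX : 0 < X) :
    n2 m X = 1 / 2 - m / 2 * LL (fun t => Real.sin (m * t) * (Real.cosh t / Real.sinh t - 1)) X + err m X := by
  have hc : ContinuousOn (fun t => Real.sin (m * t) * (Real.cosh t / Real.sinh t - 1)) (Ioi 0) := by
    have e : (fun t => Real.sin (m * t) * (Real.cosh t / Real.sinh t - 1)) =
      fun t => Real.sin (m * t) * (Real.cosh t / Real.sinh t) - Real.sin (m * t) := by ext t; ring
    rw [e]
    exact (coth_cont m).sub (by fun_prop)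
  have h := LL_add hX hc (ψ := fun t => Real.sin (m * t)) (by fun_prop) (A := m) (B := 1) (fun t ht => by
      refine (cm1_bd m hm ht).trans ?_
      have := cosh_sq_ge t
      have : Real.exp (-t) ≤ 1 := Real.exp_le_one_iff.2 (by linarith)
      gcongr; linarith) (fun t _ => sin_bd m t)
  have e : (fun t => Real.sin (m * t) * (Real.cosh t / Real.sinh t - 1) + Real.sin (m * t)) =
      fun t => Real.sin (m * t) * (Real.cosh t / Real.sinh t) := by ext t; ring
  rw [e] at h
  have h1 := id_n0 m hm hX
  have h2 := id_one m hX
  rw [n2, r1_eq m hX, Zre]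
  linear_combination (1/2) * h2 + m / 4 * h1 - m / 2 * h

lemma XLim {s : ℝ} (hs : 0 < s) : Tendsto (fun X : ℝ => X * s ^ 2) (𝓝[>] 0) (𝓝[>] 0) := by
  rw [tendsto_nhdsWithin_iff]
  constructor
  · have : Tendsto (fun X => X * s ^ 2) (𝓝 0) (𝓝 (0 * s ^ 2)) :=
      (by fun_prop : Continuous (fun X : ℝ => X * s ^ 2)).tendsto 0
    rw [zero_mul] at this
    exact this.mono_left nhdsWithin_le_nhds
  · filter_upwards [self_mem_nhdsWithin] with X hX
    have hX : 0 < X := hX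
    show 0 < X * s ^ 2
    positivity

lemma LL_lim (m : ℝ) (hm : 0 < m) : Tendsto (LL (fun t => Real.sin (m * t) * (Real.cosh t / Real.sinh t - 1))) (𝓝[>] 0)
    (𝓝 (-∫ t in Ioi (0:ℝ), Real.sin (m * t) * (Real.cosh t / Real.sinh t - 1))) := by
  rw [← integral_neg]
  have hc : ContinuousOn (fun t => Real.sin (m * t) * (Real.cosh t / Real.sinh t - 1)) (Ioi 0) := by
    have e : (fun t => Real.sin (m * t) * (Real.cosh t / Real.sinh t - 1)) =
      fun t => Real.sin (m * t) * (Real.cosh t / Real.sinh t) - Real.sin (m * t) := by ext t; ring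
    rw [e]
    exact (coth_cont m).sub (by fun_prop)
  refine tendsto_integral_filter_of_dominated_convergence (fun t => m * Real.exp (-t)) ?_ ?_
      (exp_neg_int.const_mul m) ?_
  · filter_upwards [self_mem_nhdsWithin] with X hX
    exact (hc.mul (Gd_cont Gd_lam hX)).aestronglyMeasurable measurableSet_Ioi
  · filter_upwards [self_mem_nhdsWithin] with X hX
    have hX : 0 < X := hX
    filter_upwards [ae_restrict_mem measurableSet_Ioi] with t ht
    have ht : 0 < t := ht
    have hs : 0 < Real.sinh t := by simpa using ht
    rw [norm_mul, Real.norm_eq_abs, Real.norm_eq_abs]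
    have h1 := cm1_bd m hm ht
    have h2 := lam_abs_le_one (z := X * Real.sinh t ^ 2) (by positivity)
    calc _ ≤ (m * Real.exp (-t)) * 1 := by gcongr
      _ = _ := mul_one _
  · filter_upwards [ae_restrict_mem measurableSet_Ioi] with t ht
    have ht : 0 < t := ht
    have hs : 0 < Real.sinh t := by simpa using ht
    have := (lam_zero_lim.comp (XLim hs)).const_mul (Real.sin (m * t) * (Real.cosh t / Real.sinh t - 1))
    simpa using this


lemma expmul_int {b : ℝ} (hb : 0 < b) : IntegrableOn (fun t => Real.exp (-(b * t))) (Ioi 0) := by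
  simpa using exp_neg_integrableOn_Ioi 0 hb

lemma texp_integral {b : ℝ} (hb : 0 < b) : ∫ t in Ioi (0:ℝ), t * Real.exp (-(b * t)) = (1 / b) ^ 2 := by
  have := Real.integral_rpow_mul_exp_neg_mul_Ioi (a := 2) (r := b) (by norm_num) hb
  norm_num at this
  rw [this]; norm_num

lemma texp_int {b : ℝ} (hb : 0 < b) : IntegrableOn (fun t => t * Real.exp (-(b * t))) (Ioi 0) := by
  by_contra h
  have := integral_undef h
  rw [texp_integral hb] at this
  have : 0 < (1 / b) ^ 2 := by positivity
  linarith

lemma sinexp_int (m : ℝ) {b : ℝ} (hb : 0 < b) : IntegrableOn (fun t => Real.sin (m * t) * Real.exp (-(b * t))) (Ioi 0) := by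
  refine Integrable.mono' (expmul_int hb) (by fun_prop) (Eventually.of_forall fun t => ?_)
  rw [norm_mul, Real.norm_eq_abs, Real.norm_of_nonneg (Real.exp_pos _).le]
  have := Real.abs_sin_le_one (m * t)
  have := Real.exp_pos (-(b * t))
  nlinarith

lemma sinexp_integral (m : ℝ) {b : ℝ} (hb : 0 < b) :
    ∫ t in Ioi (0:ℝ), Real.sin (m * t) * Real.exp (-(b * t)) = m / (m ^ 2 + b ^ 2) := by
  have hp : 0 < m ^ 2 + b ^ 2 := by positivity
  have h := FTC0 (l := -(m / (m ^ 2 + b ^ 2)))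
    (f := fun t => -(Real.exp (-(b * t)) * (b * Real.sin (m * t) + m * Real.cos (m * t))) / (m ^ 2 + b ^ 2))
    (f' := fun t => Real.sin (m * t) * Real.exp (-(b * t))) ?_ (sinexp_int m hb) ?_ ?_
  · rw [h, neg_neg]
  · intro t ht
    have d1 : HasDerivAt (fun t => Real.sin (m * t)) (Real.cos (m * t) * m) t :=
      (((hasDerivAt_id t).const_mul m).congr_deriv (mul_one m)).sin
    have d2 : HasDerivAt (fun t => Real.cos (m * t)) (-Real.sin (m * t) * m) t :=
      (((hasDerivAt_id t).const_mul m).congr_deriv (mul_one m)).cos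
    have d3 : HasDerivAt (fun t => Real.exp (-(b * t))) (Real.exp (-(b * t)) * (-b)) t :=
      ((((hasDerivAt_id t).const_mul b).congr_deriv (mul_one b)).neg).exp
    refine (((d3.mul ((d1.const_mul b).add (d2.const_mul m))).neg).div_const _).congr_deriv ?_
    simp only [Pi.add_apply]
    field_simp
    ring
  · have : Tendsto (fun t => -(Real.exp (-(b * t)) * (b * Real.sin (m * t) + m * Real.cos (m * t))) / (m ^ 2 + b ^ 2)) (𝓝 0)
      (𝓝 (-(Real.exp (-(b * 0)) * (b * Real.sin (m * 0) + m * Real.cos (m * 0))) / (m ^ 2 + b ^ 2))) :=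
      (by fun_prop : Continuous fun t => -(Real.exp (-(b * t)) * (b * Real.sin (m * t) + m * Real.cos (m * t))) / (m ^ 2 + b ^ 2)).tendsto 0
    simp only [mul_zero, neg_zero, Real.exp_zero, Real.sin_zero, Real.cos_zero, mul_one, zero_add, one_mul] at this
    rw [← neg_div]
    exact this.mono_left nhdsWithin_le_nhds
  · have hl : Tendsto (fun t => Real.exp (-(b * t)) * ((b + |m|) / (m ^ 2 + b ^ 2))) atTop (𝓝 0) := by
      have : Tendsto (fun t => Real.exp (-(b * t))) atTop (𝓝 0) :=
        Real.tendsto_exp_neg_atTop_nhds_zero.comp (tendsto_id.const_mul_atTop hb)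
      simpa using this.mul_const ((b + |m|) / (m ^ 2 + b ^ 2))
    refine squeeze_zero_norm (fun t => ?_) hl
    have : |b * Real.sin (m * t) + m * Real.cos (m * t)| ≤ b + |m| := by
      refine (abs_add_le _ _).trans ?_
      rw [abs_mul, abs_mul, abs_of_pos hb]
      have := Real.abs_sin_le_one (m * t)
      have := Real.abs_cos_le_one (m * t)
      nlinarith [abs_nonneg m]
    rw [norm_div, norm_neg, norm_mul, Real.norm_of_nonneg (Real.exp_pos _).le, Real.norm_eq_abs,
      Real.norm_of_nonneg hp.le, mul_div_assoc]
    gcongr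

lemma coth_integral (m : ℝ) (hm : 0 < m) :
    HasSum (fun k : ℕ => 2 * m / (m ^ 2 + 4 * ((k:ℝ) + 1) ^ 2))
      (∫ t in Ioi (0:ℝ), Real.sin (m * t) * (Real.cosh t / Real.sinh t - 1)) := by
  set F : ℕ → ℝ → ℝ := fun k t => 2 * (Real.sin (m * t) * Real.exp (-((2 * ((k:ℝ) + 1)) * t))) with hF
  have hb : ∀ k : ℕ, (0:ℝ) < 2 * ((k:ℝ) + 1) := fun k => by positivity
  have h := hasSum_integral_of_summable_integral_norm (μ := volume.restrict (Ioi (0:ℝ))) (F := F)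
    (fun k => (sinexp_int m (hb k)).const_mul 2) ?_
  · have e1 : (fun k => ∫ t in Ioi (0:ℝ), F k t) = fun k : ℕ => 2 * m / (m ^ 2 + 4 * ((k:ℝ) + 1) ^ 2) := by
      ext k
      simp only [hF]
      rw [integral_const_mul, sinexp_integral m (hb k)]
      ring
    have e2 : ∫ t in Ioi (0:ℝ), ∑' k, F k t = ∫ t in Ioi (0:ℝ), Real.sin (m * t) * (Real.cosh t / Real.sinh t - 1) := by
      refine setIntegral_congr_fun measurableSet_Ioi fun t ht => ?_
      have ht : 0 < t := ht
      have hs : 0 < Real.sinh t := by simpa using ht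
      have hx : Real.exp (-(2 * t)) < 1 := by rw [Real.exp_lt_one_iff]; linarith
      have hg := (hasSum_geometric_of_lt_one (Real.exp_pos (-(2 * t))).le hx).mul_left
        (2 * (Real.sin (m * t) * Real.exp (-(2 * t))))
      have e : (fun k => F k t) = fun k : ℕ => 2 * (Real.sin (m * t) * Real.exp (-(2 * t))) * Real.exp (-(2 * t)) ^ k := by
        ext k
        simp only [hF]
        rw [show -(2 * ((k:ℝ) + 1) * t) = -(2 * t) + k * -(2 * t) by ring, Real.exp_add, Real.exp_nat_mul]
        ring
      show ∑' k, F k t = _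
      rw [e, hg.tsum_eq, cm1_eq ht]
      have e3 : 1 - Real.exp (-(2 * t)) = 2 * Real.sinh t * Real.exp (-t) := by
        have e : Real.exp (-(2 * t)) = Real.exp (-t) * Real.exp (-t) := by rw [← Real.exp_add]; ring_nf
        have e2 : Real.exp t * Real.exp (-t) = 1 := by rw [← Real.exp_add]; simp
        rw [Real.sinh_eq, e]; linear_combination (-1) * e2
      have e4 : Real.exp (-(2 * t)) = Real.exp (-t) * Real.exp (-t) := by rw [← Real.exp_add]; ring_nf
      have e5 := Real.exp_pos (-t)
      rw [e3, e4]
      field_simp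
    rw [e1, e2] at h
    exact h
  · refine Summable.of_nonneg_of_le (fun k => integral_nonneg fun t => norm_nonneg _)
      (f := fun k : ℕ => m / 2 * (1 / ((k:ℝ) + 1) ^ 2)) (fun k => ?_) ?_
    · calc _ ≤ ∫ t in Ioi (0:ℝ), 2 * m * (t * Real.exp (-((2 * ((k:ℝ) + 1)) * t))) := by
            refine setIntegral_mono_on (((sinexp_int m (hb k)).const_mul 2).norm)
              ((texp_int (hb k)).const_mul _) measurableSet_Ioi fun t ht => ?_
            simp only [hF]
            rw [norm_mul, norm_mul, Real.norm_eq_abs, Real.norm_eq_abs, Real.norm_of_nonneg (Real.exp_pos _).le, abs_two]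
            have := sin_abs_le m hm ht
            have e := Real.exp_pos (-((2 * ((k:ℝ) + 1)) * t))
            nlinarith
        _ = _ := by
            rw [integral_const_mul, texp_integral (hb k)]
            field_simp
    · refine Summable.mul_left _ ?_
      have := (summable_nat_add_iff 1).2 (Real.summable_one_div_nat_pow.2 (one_lt_two))
      simpa using this

lemma coth_sum (m : ℝ) (hm : 0 < m) :
    1 / 2 + m / 2 * ∫ t in Ioi (0:ℝ), Real.sin (m * t) * (Real.cosh t / Real.sinh t - 1)
      = m * Real.pi / 4 * (Real.cosh (Real.pi * m / 2) / Real.sinh (Real.pi * m / 2)) := by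
  have hz : (Complex.I * (m / 2 : ℝ) : ℂ) ∈ Complex.integerComplement := by
    rintro ⟨n, hn⟩
    have := congrArg Complex.im hn
    simp at this
    linarith
  have h := cot_series_rep' hz
  have hs := (coth_integral m hm)
  have hm' : (m:ℂ) ≠ 0 := by exact_mod_cast hm.ne'
  have h2 : HasSum (fun n : ℕ => (1 / (Complex.I * (m / 2 : ℝ) - ((n:ℂ) + 1)) + 1 / (Complex.I * (m / 2 : ℝ) + ((n:ℂ) + 1))))
      (-2 * Complex.I * ((∫ t in Ioi (0:ℝ), Real.sin (m * t) * (Real.cosh t / Real.sinh t - 1) : ℝ) : ℂ)) := by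
    have := (Complex.hasSum_ofReal.2 hs).mul_left (-2 * Complex.I)
    refine this.congr_fun ?_
    intro n
    have a1 : (Complex.I * (m / 2 : ℝ) - ((n:ℂ) + 1)) ≠ 0 := by
      intro h; have := congrArg Complex.im h; simp at this; linarith
    have a2 : (Complex.I * (m / 2 : ℝ) + ((n:ℂ) + 1)) ≠ 0 := by
      intro h; have := congrArg Complex.im h; simp at this; linarith
    have a3 : ((m:ℂ) ^ 2 + 4 * ((n:ℂ) + 1) ^ 2) ≠ 0 := by
      have : (0:ℝ) < m ^ 2 + 4 * ((n:ℝ) + 1) ^ 2 := by positivity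
      exact_mod_cast this.ne'
    rw [div_add_div _ _ a1 a2]
    push_cast
    rw [eq_comm, ← mul_div_assoc, div_eq_div_iff a3 (by push_cast at a1 a2; exact mul_ne_zero a1 a2)]
    ring_nf
    have i2 : Complex.I ^ 2 = -1 := Complex.I_sq
    have i3 : Complex.I ^ 3 = -Complex.I := by rw [pow_succ, i2]; ring
    simp only [i3]
    ring
  rw [h2.tsum_eq, Complex.cot, show (Real.pi : ℂ) * (Complex.I * ((m / 2 : ℝ) : ℂ)) = ((Real.pi * m / 2 : ℝ) : ℂ) * Complex.I by push_cast; ring,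
    Complex.cos_mul_I, Complex.sin_mul_I, ← Complex.ofReal_cosh, ← Complex.ofReal_sinh] at h
  have hsh : (Real.sinh (Real.pi * m / 2) : ℂ) ≠ 0 := by
    have : 0 < Real.sinh (Real.pi * m / 2) := by rw [Real.sinh_pos_iff]; positivity
    exact_mod_cast this.ne'
  generalize (∫ t in Ioi (0:ℝ), Real.sin (m * t) * (Real.cosh t / Real.sinh t - 1)) = J at *
  have k1 : (Real.cosh (Real.pi * m / 2) : ℂ) / ((Real.sinh (Real.pi * m / 2) : ℂ) * Complex.I) =
      -Complex.I * ((Real.cosh (Real.pi * m / 2) : ℂ) / (Real.sinh (Real.pi * m / 2) : ℂ)) := by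
    rw [← div_div, div_eq_mul_inv _ Complex.I, Complex.inv_I]; ring
  have k2 : 1 / (Complex.I * ((m / 2 : ℝ) : ℂ)) = -Complex.I * (2 / m) := by
    rw [← div_div, div_eq_mul_inv 1 Complex.I, Complex.inv_I]; push_cast; field_simp
  rw [k1, k2] at h
  have h3 : ((Real.pi * (Real.cosh (Real.pi * m / 2) / Real.sinh (Real.pi * m / 2)) : ℝ) : ℂ) - 2 / m = 2 * J := by
    have := mul_left_cancel₀ Complex.I_ne_zero (a := Complex.I)
      (b := ((Real.pi * (Real.cosh (Real.pi * m / 2) / Real.sinh (Real.pi * m / 2)) : ℝ) : ℂ) - 2 / m) (c := 2 * J)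
    apply this
    push_cast at h ⊢
    linear_combination -h
  have h4 : Real.pi * (Real.cosh (Real.pi * m / 2) / Real.sinh (Real.pi * m / 2)) - 2 / m = 2 * J := by
    exact_mod_cast h3
  generalize Real.cosh (Real.pi * m / 2) / Real.sinh (Real.pi * m / 2) = c at h4
  field_simp at h4 ⊢
  linear_combination -2 * h4


lemma kapc_int {g : ℝ → ℝ} (hg : Continuous g) :
    IntegrableOn (fun z => Complex.exp (Complex.I * g z) * (kap z : ℂ)) (Ioi 0) := by
  refine Integrable.mono' kap_int ?_ ?_
  · refine AEStronglyMeasurable.mul (by fun_prop) ?_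
    exact Complex.continuous_ofReal.comp_aestronglyMeasurable (kap_contOn.aestronglyMeasurable measurableSet_Ioi)
  · refine Eventually.of_forall fun z => ?_
    rw [norm_mul, Complex.norm_real, Real.norm_of_nonneg (kap_nonneg z), mul_comm Complex.I, Complex.norm_exp_ofReal_mul_I, one_mul]

lemma Z_eq (m : ℝ) {X : ℝ} (hX : 0 < X) : (Zre m X : ℂ) + Complex.I * (Zim m X : ℂ) =
    ∫ z in Ioi (0:ℝ), Complex.exp (Complex.I * (m * Real.arsinh (Real.sqrt (z / X)) : ℝ)) * (kap z : ℂ) := by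
  set g : ℝ → ℂ := fun z => Complex.exp (Complex.I * (m * Real.arsinh (Real.sqrt (z / X)) : ℝ)) * (kap z : ℂ) with hg
  have hg1 : IntegrableOn g (Ioi 0) := kapc_int (g := fun z => m * Real.arsinh (Real.sqrt (z / X)))
    (by have := Real.continuous_arsinh; fun_prop)
  have i1 := Gd_int Gd_kap hX (φ := fun t => Real.cos (m * t) * (Real.sinh t * Real.cosh t)) (by fun_prop)
    (fun t _ => mul_bd (Real.abs_cos_le_one _) (sc_bd t))
  have i2 := Gd_int Gd_kap hX (φ := fun t => Real.sin (m * t) * (Real.sinh t * Real.cosh t)) (by fun_prop)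
    (fun t _ => mul_bd (Real.abs_sin_le_one _) (sc_bd t))
  have i1' : IntegrableOn (fun t => (2 * X : ℂ) * ((Real.cos (m * t) * (Real.sinh t * Real.cosh t) * kap (X * Real.sinh t ^ 2) : ℝ) : ℂ)) (Ioi 0) := by
    exact (i1.ofReal (𝕜 := ℂ)).const_mul (2 * X : ℂ)
  have i2' : IntegrableOn (fun t => (2 * X * Complex.I : ℂ) * ((Real.sin (m * t) * (Real.sinh t * Real.cosh t) * kap (X * Real.sinh t ^ 2) : ℝ) : ℂ)) (Ioi 0) := by
    exact (i2.ofReal (𝕜 := ℂ)).const_mul (2 * X * Complex.I : ℂ)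
  have i3 : IntegrableOn (fun t => (2 * X : ℂ) * ((Real.cos (m * t) * (Real.sinh t * Real.cosh t) * kap (X * Real.sinh t ^ 2) : ℝ) : ℂ) +
      (2 * X * Complex.I : ℂ) * ((Real.sin (m * t) * (Real.sinh t * Real.cosh t) * kap (X * Real.sinh t ^ 2) : ℝ) : ℂ)) (Ioi 0) := by
    exact i1'.add i2'
  have e : ∀ t ∈ Ioi (0:ℝ), (X * (2 * Real.sinh t * Real.cosh t)) • (g ∘ (fun t => X * Real.sinh t ^ 2)) t =
      (2 * X : ℂ) * ((Real.cos (m * t) * (Real.sinh t * Real.cosh t) * kap (X * Real.sinh t ^ 2) : ℝ) : ℂ) +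
      (2 * X * Complex.I : ℂ) * ((Real.sin (m * t) * (Real.sinh t * Real.cosh t) * kap (X * Real.sinh t ^ 2) : ℝ) : ℂ) := by
    intro t ht
    have hs : 0 < Real.sinh t := by simpa using ht
    simp only [hg, Function.comp]
    rw [mul_div_cancel_left₀ _ hX.ne', Real.sqrt_sq hs.le, Real.arsinh_sinh, mul_comm Complex.I, Complex.exp_mul_I,
      ← Complex.ofReal_cos, ← Complex.ofReal_sin, Complex.real_smul]
    push_cast
    ring
  have key := integral_deriv_smul_comp_Ioi (f := fun t => X * Real.sinh t ^ 2)
    (f' := fun t => X * (2 * Real.sinh t * Real.cosh t)) (g := g) (a := 0) (by fun_prop) ?_ ?_ ?_ ?_ ?_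
  · rw [setIntegral_congr_fun measurableSet_Ioi e, integral_add i1' i2', integral_const_mul, integral_const_mul] at key
    simp only [Real.sinh_zero, ne_eq, OfNat.ofNat_ne_zero, not_false_eq_true, zero_pow, mul_zero] at key
    rw [← key]
    rw [integral_complex_ofReal, integral_complex_ofReal]
    simp only [Zre, Zim, KK]
    push_cast
    ring
  · have h1 : Tendsto Real.sinh atTop atTop :=
      tendsto_atTop_mono' _ (by filter_upwards [eventually_ge_atTop 0] with t ht using le_sinh ht) tendsto_id
    exact ((tendsto_pow_atTop two_ne_zero).comp h1).const_mul_atTop hX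
  · intro t ht
    have h1 : HasDerivAt (fun t => X * Real.sinh t ^ 2) (X * (2 * Real.sinh t * Real.cosh t)) t := by
      refine (((Real.hasDerivAt_sinh t).pow 2).const_mul X).congr_deriv ?_
      ring
    exact h1.hasDerivWithinAt
  · have hsub : (fun t => X * Real.sinh t ^ 2) '' Ioi 0 ⊆ Ioi 0 := by
      rintro _ ⟨t, ht, rfl⟩
      have hs : 0 < Real.sinh t := by simpa using ht
      show 0 < X * Real.sinh t ^ 2
      positivity
    refine ContinuousOn.mono ?_ hsub
    refine ContinuousOn.mul ?_ (Complex.continuous_ofReal.comp_continuousOn kap_contOn)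
    have := Real.continuous_arsinh
    fun_prop
  · have hsub : (fun t => X * Real.sinh t ^ 2) '' Ici 0 ⊆ Ici 0 := by
      rintro _ ⟨t, ht, rfl⟩
      show 0 ≤ X * Real.sinh t ^ 2
      positivity
    have hg2 : IntegrableOn g (Ici 0) := by rw [integrableOn_Ici_iff_integrableOn_Ioi]; exact hg1
    exact hg2.mono_set hsub
  · rw [integrableOn_Ici_iff_integrableOn_Ioi]
    exact i3.congr_fun (fun t ht => (e t ht).symm) measurableSet_Ioi

lemma arsinh_sub_log : Tendsto (fun y : ℝ => Real.arsinh y - Real.log y) atTop (𝓝 (Real.log 2)) := by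
  have h1 : Tendsto (fun y : ℝ => Real.log (1 + Real.sqrt (1 + (y⁻¹) ^ 2))) atTop (𝓝 (Real.log (1 + Real.sqrt (1 + 0 ^ 2)))) := by
    refine Tendsto.log ?_ (by positivity)
    have c : Continuous (fun w : ℝ => 1 + Real.sqrt (1 + w ^ 2)) := by fun_prop
    exact (c.tendsto 0).comp tendsto_inv_atTop_zero
  have e : Real.log (1 + Real.sqrt (1 + 0 ^ 2)) = Real.log 2 := by norm_num
  rw [e] at h1
  refine h1.congr' ?_
  filter_upwards [eventually_gt_atTop 0] with y hy
  rw [Real.arsinh, ← Real.log_div (by positivity) hy.ne']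
  congr 1
  rw [add_div, div_self hy.ne']
  congr 1
  rw [eq_div_iff hy.ne', ← Real.sqrt_sq hy.le, ← Real.sqrt_mul (by positivity), Real.sqrt_sq hy.le]
  congr 1
  field_simp
  ring

lemma Z_lim (m : ℝ) : Tendsto (fun X : ℝ => (Zre m X : ℂ) + Complex.I * (Zim m X : ℂ) -
    Complex.exp (Complex.I * (m / 2 * Real.log (4 / X) : ℝ)) * Complex.Gamma (1 + Complex.I * (m / 2 : ℝ)) ^ 2) (𝓝[>] 0) (𝓝 0) := by
  have h1 : Tendsto (fun X : ℝ => ∫ z in Ioi (0:ℝ), Complex.exp (Complex.I * (m * Real.arsinh (Real.sqrt (z / X)) - m / 2 * Real.log (4 / X) : ℝ)) * (kap z : ℂ))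
      (𝓝[>] 0) (𝓝 (∫ z in Ioi (0:ℝ), Complex.exp (Complex.I * (m / 2 : ℝ) * Real.log z) * (kap z : ℂ))) := by
    refine tendsto_integral_filter_of_dominated_convergence kap ?_ ?_ kap_int ?_
    · filter_upwards [self_mem_nhdsWithin] with X hX
      exact (kapc_int (g := fun z => m * Real.arsinh (Real.sqrt (z / X)) - m / 2 * Real.log (4 / X))
        (by have := Real.continuous_arsinh; fun_prop)).aestronglyMeasurable
    · refine Eventually.of_forall fun X => Eventually.of_forall fun z => ?_
      rw [norm_mul, Complex.norm_real, Real.norm_of_nonneg (kap_nonneg z), mul_comm Complex.I, Complex.norm_exp_ofReal_mul_I, one_mul]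
    · filter_upwards [ae_restrict_mem measurableSet_Ioi] with z hz
      have hz : 0 < z := hz
      refine Tendsto.mul_const _ ?_
      have hy : Tendsto (fun X : ℝ => Real.sqrt (z / X)) (𝓝[>] 0) atTop := by
        have h9 : Tendsto (fun X : ℝ => z / X) (𝓝[>] 0) atTop := by
          simp only [div_eq_mul_inv]
          exact tendsto_inv_nhdsGT_zero.const_mul_atTop hz
        exact Real.tendsto_sqrt_atTop.comp h9
      have h2 := ((arsinh_sub_log.comp hy).const_mul m).add_const (m / 2 * Real.log z - m * Real.log 2)
      have h3 : Tendsto (fun X : ℝ => m * Real.arsinh (Real.sqrt (z / X)) - m / 2 * Real.log (4 / X)) (𝓝[>] 0) (𝓝 (m / 2 * Real.log z)) := by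
        have e : m * Real.log 2 + (m / 2 * Real.log z - m * Real.log 2) = m / 2 * Real.log z := by ring
        rw [e] at h2
        refine h2.congr' ?_
        filter_upwards [self_mem_nhdsWithin] with X hX
        have hX : 0 < X := hX
        simp only [Function.comp]
        rw [Real.log_sqrt (by positivity), Real.log_div hz.ne' hX.ne', Real.log_div (by norm_num) hX.ne',
          show (4:ℝ) = 2 ^ 2 by norm_num, Real.log_pow]
        push_cast
        ring
      have c : Continuous (fun w : ℝ => Complex.exp (Complex.I * (w : ℂ))) := by fun_prop
      have h4 := (c.tendsto (m / 2 * Real.log z)).comp h3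
      rw [show Complex.I * ((m / 2 : ℝ) : ℂ) * (Real.log z : ℂ) = Complex.I * ((m / 2 * Real.log z : ℝ) : ℂ) by push_cast; ring]
      exact h4
  rw [kap_mellin] at h1
  have h5 := tendsto_iff_norm_sub_tendsto_zero.1 h1
  rw [tendsto_zero_iff_norm_tendsto_zero]
  refine h5.congr' ?_
  filter_upwards [self_mem_nhdsWithin] with X hX
  rw [Z_eq m hX]
  have e : ∫ z in Ioi (0:ℝ), Complex.exp (Complex.I * (m * Real.arsinh (Real.sqrt (z / X)) : ℝ)) * (kap z : ℂ) =
    Complex.exp (Complex.I * (m / 2 * Real.log (4 / X) : ℝ)) * ∫ z in Ioi (0:ℝ), Complex.exp (Complex.I * (m * Real.arsinh (Real.sqrt (z / X)) - m / 2 * Real.log (4 / X) : ℝ)) * (kap z : ℂ) := by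
    rw [← integral_const_mul]
    congr 1; ext z
    rw [← mul_assoc, ← Complex.exp_add]
    congr 2
    push_cast; ring
  rw [e, ← mul_sub, norm_mul, mul_comm Complex.I ((m / 2 * Real.log (4 / X) : ℝ) : ℂ), Complex.norm_exp_ofReal_mul_I, one_mul]

/-- limit statements for the Nicholson integral -/
noncomputable def Zas (m X : ℝ) : ℂ :=
  Complex.exp (Complex.I * (m / 2 * Real.log (4 / X) : ℝ)) * Complex.Gamma (1 + Complex.I * (m / 2 : ℝ)) ^ 2

lemma n1_lim (m : ℝ) (hm : 0 < m) : Tendsto (fun X => n1 m X + (Zas m X).im / m) (𝓝[>] 0) (𝓝 0) := by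
  have h := (Complex.continuous_im.tendsto 0).comp (Z_lim m)
  have h2 := h.const_mul (-(1 / m))
  simp only [Complex.zero_im, mul_zero] at h2
  refine h2.congr' ?_
  filter_upwards [self_mem_nhdsWithin] with X hX
  have := id_n1 m hm hX
  have e : n1 m X = - Zim m X / m := by rw [eq_div_iff hm.ne', Zim]; linarith
  rw [e]
  simp only [Function.comp, Zas, Complex.sub_im, Complex.add_im, Complex.ofReal_im, Complex.mul_im, Complex.I_re, Complex.I_im, Complex.ofReal_re]
  ring

lemma r1_lim (m : ℝ) : Tendsto (fun X => r1 m X - (Zas m X).re / 2) (𝓝[>] 0) (𝓝 0) := by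
  have h := (Complex.continuous_re.tendsto 0).comp (Z_lim m)
  have h2 := (h.const_mul (1 / 2)).add (err_lim m)
  simp only [Complex.zero_re, mul_zero, add_zero] at h2
  refine h2.congr' ?_
  filter_upwards [self_mem_nhdsWithin] with X hX
  rw [r1_eq m hX]
  simp only [Function.comp, Zas, Complex.sub_re, Complex.add_re, Complex.ofReal_im, Complex.mul_re, Complex.I_re, Complex.I_im, Complex.ofReal_re]
  ring

lemma n2_lim (m : ℝ) (hm : 0 < m) : Tendsto (n2 m) (𝓝[>] 0)
    (𝓝 (m * Real.pi / 4 * (Real.cosh (Real.pi * m / 2) / Real.sinh (Real.pi * m / 2)))) := by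
  rw [← coth_sum m hm]
  have h := (((LL_lim m hm).const_mul (m / 2)).const_sub (1 / 2)).add (err_lim m)
  refine (h.congr' ?_).trans (by rw [mul_neg, sub_neg_eq_add, add_zero])
  filter_upwards [self_mem_nhdsWithin] with X hX
  rw [n2_eq m hm hX]


lemma gron {g g' : ℝ → ℝ} (h : ∀ X, 0 < X → HasDerivAt g (g' X) X) (hn : ∀ X, 0 < X → g' X ≤ 0)
    (hl : Tendsto g (𝓝[>] 0) (𝓝 0)) (X : ℝ) (hX : 0 < X) : g X ≤ 0 := by
  have ha : AntitoneOn g (Ioi 0) := by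
    refine antitoneOn_of_deriv_nonpos (convex_Ioi 0) (fun x hx => (h x hx).continuousAt.continuousWithinAt) ?_ ?_
    · rw [interior_Ioi]; exact fun x hx => (h x hx).differentiableAt.differentiableWithinAt
    · rw [interior_Ioi]; intro x hx; rw [(h x hx).deriv]; exact hn x hx
  refine ge_of_tendsto hl ?_
  filter_upwards [Ioo_mem_nhdsGT hX] with y hy
  exact ha hy.1 hX hy.2.le

lemma energy {a : ℝ} {f0 f1 f2 : ℝ → ℝ} {μ : ℝ} (ha : a * μ = 1) (h0 : ∀ X, 0 < X → HasDerivAt f0 (f1 X / X) X)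
    (h1 : ∀ X, 0 < X → HasDerivAt f1 ((f2 X - μ ^ 2 * f0 X) / X) X)
    (h2 : ∀ X, 0 < X → HasDerivAt f2 (-(f1 X + f0 X / 2)) X)
    (l1 : Tendsto f1 (𝓝[>] 0) (𝓝 0)) (l0 : Tendsto (fun X => f2 X - μ ^ 2 * f0 X) (𝓝[>] 0) (𝓝 0))
    (l2 : Tendsto f2 (𝓝[>] 0) (𝓝 0)) (X : ℝ) (hX : 0 < X) : f0 X = 0 := by
  set C := 5 + 5 * a ^ 2 + 5 * a ^ 4
  set En : ℝ → ℝ := fun X => f2 X ^ 2 + f1 X ^ 2 + (a * (f2 X - μ ^ 2 * f0 X)) ^ 2 with hEn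
  have hE : ∀ X, 0 < X → HasDerivAt En (2 * (f1 X + f0 X / 2) * (-f2 X - a ^ 2 * (f2 X - μ ^ 2 * f0 X))) X := by
    intro X hX
    refine ((((h2 X hX).pow 2).add ((h1 X hX).pow 2)).add ((((h2 X hX).sub ((h0 X hX).const_mul (μ ^ 2))).const_mul a).pow 2)).congr_deriv ?_
    simp only [Pi.sub_apply]
    have e : a ^ 2 * μ ^ 2 = 1 := by rw [← mul_pow, ha, one_pow]
    field_simp
    push_cast
    ring_nf
    linear_combination 2 * (f2 X * f1 X * (-2) + 2 * f1 X * μ ^ 2 * f0 X) * e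
  have hE0 : Tendsto En (𝓝[>] 0) (𝓝 0) := by
    have := ((l2.pow 2).add (l1.pow 2)).add ((l0.const_mul a).pow 2)
    simpa using this
  have key := gron (g := fun X => En X * Real.exp (-C * X)) (g' := fun X =>
    (2 * (f1 X + f0 X / 2) * (-f2 X - a ^ 2 * (f2 X - μ ^ 2 * f0 X)) - C * En X) * Real.exp (-C * X)) ?_ ?_ ?_ X hX
  · have hE1 : En X ≤ 0 := by
      by_contra hc
      push Not at hc
      have := mul_pos hc (Real.exp_pos (-C * X))
      linarith
    simp only [hEn] at hE1
    have e1 : f2 X = 0 := by nlinarith [sq_nonneg (f2 X), sq_nonneg (f1 X), sq_nonneg (a * (f2 X - μ ^ 2 * f0 X))]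
    have e2 : (a * (f2 X - μ ^ 2 * f0 X)) = 0 := by nlinarith [sq_nonneg (f2 X), sq_nonneg (f1 X), sq_nonneg (a * (f2 X - μ ^ 2 * f0 X))]
    have h3 : μ * (a * (a * (f2 X - μ ^ 2 * f0 X))) = 0 := by rw [e2]; ring
    rw [e1] at h3
    linear_combination -a * h3 + (-(a * μ) ^ 2 * f0 X - (a * μ) * f0 X - f0 X) * ha
  · intro X hX
    refine ((hE X hX).mul (((hasDerivAt_id X).const_mul (-C)).exp)).congr_deriv ?_
    simp only [id]
    ring
  · intro X hX
    refine mul_nonpos_of_nonpos_of_nonneg ?_ (Real.exp_pos _).le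
    simp only [hEn]
    set s := a * (f2 X - μ ^ 2 * f0 X)
    have e0 : f0 X = - a * s + a ^ 2 * f2 X := by
      simp only [s]
      linear_combination (-(a * μ) * f0 X - f0 X) * ha
    have e1 : a ^ 2 * (f2 X - μ ^ 2 * f0 X) = a * s := by simp only [s]; ring
    rw [e1]
    generalize f2 X = p at *
    generalize f1 X = q at *
    rw [e0]
    clear_value s
    simp only [C]
    nlinarith [sq_nonneg (q + (-a * s + a ^ 2 * p) / 2 - (-p - a * s)), sq_nonneg (q + a * s), sq_nonneg (q - a ^ 2 * p), sq_nonneg (a * s + a ^ 2 * p), sq_nonneg (p - a * s), sq_nonneg q, sq_nonneg (a * q), sq_nonneg (a ^ 2 * q), sq_nonneg (a ^ 2 * s), sq_nonneg (a * p), sq_nonneg p, sq_nonneg s, sq_nonneg (a * s), sq_nonneg (a ^ 2 * p)]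
  · have c : Continuous (fun X => Real.exp (-C * X)) := by fun_prop
    have := hE0.mul ((c.tendsto 0).mono_left nhdsWithin_le_nhds)
    simpa using this

lemma energyC {f0 f1 f2 : ℝ → ℂ} {a μ : ℝ} (ha : a * μ = 1) (h0 : ∀ X, 0 < X → HasDerivAt f0 (f1 X / X) X)
    (h1 : ∀ X, 0 < X → HasDerivAt f1 ((f2 X - μ ^ 2 * f0 X) / X) X)
    (h2 : ∀ X, 0 < X → HasDerivAt f2 (-(f1 X + f0 X / 2)) X)
    (l1 : Tendsto f1 (𝓝[>] 0) (𝓝 0)) (l0 : Tendsto (fun X => f2 X - μ ^ 2 * f0 X) (𝓝[>] 0) (𝓝 0))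
    (l2 : Tendsto f2 (𝓝[>] 0) (𝓝 0)) (X : ℝ) (hX : 0 < X) : f0 X = 0 := by
  have cr := fun (f : ℝ → ℂ) f' (X : ℝ) (h : HasDerivAt f f' X) => Complex.reCLM.hasFDerivAt.comp_hasDerivAt X h
  have ci := fun (f : ℝ → ℂ) f' (X : ℝ) (h : HasDerivAt f f' X) => Complex.imCLM.hasFDerivAt.comp_hasDerivAt X h
  have er : ∀ z : ℂ, ((μ : ℂ) ^ 2 * z).re = μ ^ 2 * z.re := fun z => by rw [← Complex.ofReal_pow, Complex.re_ofReal_mul]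
  have ei : ∀ z : ℂ, ((μ : ℂ) ^ 2 * z).im = μ ^ 2 * z.im := fun z => by rw [← Complex.ofReal_pow, Complex.im_ofReal_mul]
  apply Complex.ext
  · refine energy ha (f0 := fun X => (f0 X).re) (f1 := fun X => (f1 X).re) (f2 := fun X => (f2 X).re) ?_ ?_ ?_ ?_ ?_ ?_ X hX
    · intro X hX
      refine (cr _ _ X (h0 X hX)).congr_deriv ?_
      simp [Complex.div_ofReal_re]
    · intro X hX
      refine (cr _ _ X (h1 X hX)).congr_deriv ?_
      simp [Complex.div_ofReal_re, er]
    · intro X hX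
      refine (cr _ _ X (h2 X hX)).congr_deriv ?_
      simp [Complex.div_ofNat_re]
    · exact (Complex.continuous_re.tendsto 0).comp l1
    · have := (Complex.continuous_re.tendsto 0).comp l0
      simpa [Function.comp_def, er] using this
    · exact (Complex.continuous_re.tendsto 0).comp l2
  · refine energy ha (f0 := fun X => (f0 X).im) (f1 := fun X => (f1 X).im) (f2 := fun X => (f2 X).im) ?_ ?_ ?_ ?_ ?_ ?_ X hX
    · intro X hX
      refine (ci _ _ X (h0 X hX)).congr_deriv ?_
      simp [Complex.div_ofReal_im]
    · intro X hX
      refine (ci _ _ X (h1 X hX)).congr_deriv ?_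
      simp [Complex.div_ofReal_im, ei]
    · intro X hX
      refine (ci _ _ X (h2 X hX)).congr_deriv ?_
      simp [Complex.div_ofNat_im]
    · exact (Complex.continuous_im.tendsto 0).comp l1
    · have := (Complex.continuous_im.tendsto 0).comp l0
      simpa [Function.comp_def, ei] using this
    · exact (Complex.continuous_im.tendsto 0).comp l2

/-- regular part of the Bessel function -/
lemma J_struct (ν : ℂ) (hν : ν.re = 0) : ∃ p q : ℝ → ℂ,
    (∀ x, 0 < x → besselJ ν x = Complex.exp (ν / 2 * (Real.log (x ^ 2 / 4) : ℝ)) * p (x ^ 2)) ∧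
    (∀ X, 0 < X → HasDerivAt (fun X : ℝ => Complex.exp (ν / 2 * (Real.log (X / 4) : ℝ)) * p X)
      (Complex.exp (ν / 2 * (Real.log (X / 4) : ℝ)) * q X / X) X) ∧
    (∀ X, 0 < X → HasDerivAt (fun X : ℝ => Complex.exp (ν / 2 * (Real.log (X / 4) : ℝ)) * q X)
      ((ν ^ 2 - X) / 4 * (Complex.exp (ν / 2 * (Real.log (X / 4) : ℝ)) * p X) / X) X) ∧
    Tendsto p (𝓝[>] 0) (𝓝 (1 / Complex.Gamma (1 + ν))) ∧
    Tendsto q (𝓝[>] 0) (𝓝 (ν / 2 * (1 / Complex.Gamma (1 + ν)))) := by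
  set c : ℕ → ℂ := fun k => (-1) ^ k / ((Nat.factorial k : ℂ) * Complex.Gamma (ν + k + 1)) with hc
  have hne : ∀ k : ℕ, ν + k + 1 ≠ 0 := by
    intro k h
    have := congrArg Complex.re h
    simp [hν] at this
    have h2 : (0:ℝ) ≤ k := Nat.cast_nonneg k
    linarith
  have hpos : ∀ k : ℕ, 0 < (ν + k + 1).re := by
    intro k
    simp [hν]; positivity
  have hG : ∀ k : ℕ, Complex.Gamma (ν + k + 1) ≠ 0 := fun k => Complex.Gamma_ne_zero_of_re_pos (hpos k)
  have hΓ : ∀ k : ℕ, Complex.Gamma (ν + (k + 1 : ℕ) + 1) = (ν + k + 1) * Complex.Gamma (ν + k + 1) := by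
    intro k
    rw [← Complex.Gamma_add_one _ (hne k)]
    push_cast; congr 1; ring
  have hΓn : ∀ k : ℕ, ‖Complex.Gamma (ν + (0:ℕ) + 1)‖ ≤ ‖Complex.Gamma (ν + k + 1)‖ := by
    intro k
    induction k with
    | zero => exact le_rfl
    | succ k ih =>
      rw [hΓ, norm_mul]
      have h1 : 1 ≤ ‖ν + k + 1‖ := by
        refine le_trans ?_ (Complex.abs_re_le_norm _)
        refine le_trans ?_ (le_abs_self _)
        simp [hν]
      nlinarith [norm_nonneg (Complex.Gamma (ν + k + 1))]
  obtain ⟨P1, P2, d1, d2, ode⟩ := ser_ode c (1 / ‖Complex.Gamma (ν + (0:ℕ) + 1)‖) ν (by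
    intro k
    simp only [hc]
    rw [norm_div, norm_mul, norm_pow, norm_neg, norm_one, one_pow, Complex.norm_natCast, div_div, mul_comm]
    have := norm_pos_iff.2 (hG 0)
    gcongr
    exact hΓn k) (by
    intro k
    simp only [hc]
    rw [hΓ, Nat.factorial_succ]
    push_cast
    have h1 := hne k
    have h2 := hG k
    have h3 : (Nat.factorial k : ℂ) ≠ 0 := by exact_mod_cast Nat.factorial_ne_zero k
    have h4 : (k + 1 : ℂ) ≠ 0 := by exact_mod_cast Nat.succ_ne_zero k
    rw [show (k + 1 + ν : ℂ) = ν + k + 1 by ring]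
    field_simp
    ring)
  set P : ℂ → ℂ := fun y => ∑' k, c k * y ^ k with hP
  have hy : ∀ X : ℝ, HasDerivAt (fun X : ℝ => (X / 4 : ℂ)) (1 / 4) X := fun X => by
    exact (Complex.ofRealCLM.hasDerivAt (x := X)).div_const 4
  have hp : ∀ X : ℝ, HasDerivAt (fun X : ℝ => P (X / 4)) (P1 (X / 4) * (1 / 4)) X := fun X =>
    HasDerivAt.comp (h₂ := P) X (d1 (X / 4)) (hy X)
  have hp1 : ∀ X : ℝ, HasDerivAt (fun X : ℝ => P1 (X / 4)) (P2 (X / 4) * (1 / 4)) X := fun X =>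
    HasDerivAt.comp (h₂ := P1) X (d2 (X / 4)) (hy X)
  have hq : ∀ X : ℝ, HasDerivAt (fun X : ℝ => ν / 2 * P (X / 4) + (X / 4) * P1 (X / 4))
      (ν / 2 * (P1 (X / 4) * (1 / 4)) + (1 / 4 * P1 (X / 4) + (X / 4) * (P2 (X / 4) * (1 / 4)))) X := fun X =>
    ((hp X).const_mul (ν / 2)).add ((hy X).mul (hp1 X))
  have he : ∀ X : ℝ, 0 < X → HasDerivAt (fun X : ℝ => Complex.exp (ν / 2 * (Real.log (X / 4) : ℝ)))
      (Complex.exp (ν / 2 * (Real.log (X / 4) : ℝ)) * (ν / 2 * (1 / X))) X := by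
    intro X hX
    have h1 : HasDerivAt (fun X : ℝ => Real.log (X / 4)) (1 / X) X := by
      refine (((hasDerivAt_id X).div_const 4).log (by simp; positivity)).congr_deriv ?_
      simp only [id]; field_simp
    have h2 := ((h1.ofReal_comp).const_mul (ν / 2)).cexp
    refine h2.congr_deriv ?_
    push_cast; ring
  have P0 : P 0 = 1 / Complex.Gamma (1 + ν) := by
    simp only [hP]
    rw [tsum_eq_single 0]
    · simp [hc, add_comm]
    · intro k hk; simp [hk]
  refine ⟨fun X => P (X / 4), fun X => ν / 2 * P (X / 4) + (X / 4) * P1 (X / 4), ?_, ?_, ?_, ?_, ?_⟩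
  · intro x hx
    rw [besselJ, hP, ← tsum_mul_left]
    congr 1; ext k
    have e1 : Real.log (x ^ 2 / 4) = 2 * Real.log (x / 2) := by
      rw [show x ^ 2 / 4 = (x / 2) ^ 2 by ring, Real.log_pow]; push_cast; ring
    rw [e1, add_mul, Complex.exp_add]
    have e2 : Complex.exp (2 * k * (Real.log (x / 2) : ℂ)) = (((x ^ 2 : ℝ) : ℂ) / 4) ^ k := by
      rw [show (2 * k * (Real.log (x / 2) : ℂ)) = k * ((2 * Real.log (x / 2) : ℝ) : ℂ) by push_cast; ring, Complex.exp_nat_mul,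
        ← e1, ← Complex.ofReal_exp, Real.exp_log (by positivity)]
      push_cast; rfl
    rw [e2]
    simp only [hc]
    push_cast
    rw [show ν / 2 * (2 * (Real.log (x / 2) : ℂ)) = ν * (Real.log (x / 2) : ℂ) by ring]
    ring
  · intro X hX
    refine ((he X hX).mul (hp X)).congr_deriv ?_
    have : (X : ℂ) ≠ 0 := by exact_mod_cast hX.ne'
    field_simp
  · intro X hX
    refine ((he X hX).mul (hq X)).congr_deriv ?_
    have : (X : ℂ) ≠ 0 := by exact_mod_cast hX.ne'
    have o := ode (X / 4)
    field_simp
    linear_combination 16 * X * o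
  · have h := ((hp 0).continuousAt.tendsto).mono_left (nhdsWithin_le_nhds (s := Ioi 0))
    simp only [Complex.ofReal_zero, zero_div, P0] at h
    exact h
  · have h := ((hq 0).continuousAt.tendsto).mono_left (nhdsWithin_le_nhds (s := Ioi 0))
    simp only [Complex.ofReal_zero, zero_div, P0, zero_mul, add_zero] at h
    exact h


lemma bdd_mul_lim {u : ℝ → ℂ} {g : ℝ → ℂ} (hu : ∀ X, 0 < X → ‖u X‖ = 1) (hg : Tendsto g (𝓝[>] 0) (𝓝 0)) :
    Tendsto (fun X => u X * g X) (𝓝[>] 0) (𝓝 0) := by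
  rw [tendsto_zero_iff_norm_tendsto_zero] at hg ⊢
  refine hg.congr' ?_
  filter_upwards [self_mem_nhdsWithin] with X hX
  rw [norm_mul, hu X hX, one_mul]

lemma nicholson (m : ℝ) (hm : 0 < m) {x : ℝ} (hx : 0 < x) :
    besselJ (Complex.I * m / 2) x ^ 2 + besselY (Complex.I * m / 2) x ^ 2 = ((4 / Real.pi ^ 2 * n0 m (x ^ 2) : ℝ) : ℂ) := by
  set ν : ℂ := Complex.I * m / 2 with hν
  have hm' : (m : ℂ) ≠ 0 := by exact_mod_cast hm.ne'
  have hπ : (Real.pi : ℂ) ≠ 0 := by exact_mod_cast Real.pi_ne_zero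
  have hre : ν.re = 0 := by simp [hν, Complex.div_ofNat_re]
  have hν0 : ν ≠ 0 := by rw [hν]; simp [hm.ne']
  have hν2 : ν ^ 2 = - ((m / 2 : ℝ) : ℂ) ^ 2 := by rw [hν]; push_cast; rw [div_pow, mul_pow, Complex.I_sq]; ring
  have hsh : 0 < Real.sinh (Real.pi * m / 2) := by have := Real.pi_pos; rw [Real.sinh_pos_iff]; positivity
  have hsn : Complex.sin (Real.pi * ν) = Complex.I * (Real.sinh (Real.pi * m / 2) : ℂ) := by
    rw [show Real.pi * ν = ((Real.pi * m / 2 : ℝ) : ℂ) * Complex.I by rw [hν]; push_cast; ring, Complex.sin_mul_I, Complex.ofReal_sinh]; ring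
  have hcs : Complex.cos (Real.pi * ν) = (Real.cosh (Real.pi * m / 2) : ℂ) := by
    rw [show Real.pi * ν = ((Real.pi * m / 2 : ℝ) : ℂ) * Complex.I by rw [hν]; push_cast; ring, Complex.cos_mul_I, Complex.ofReal_cosh]
  have hs0 : Complex.sin (Real.pi * ν) ≠ 0 := by
    rw [hsn]; exact mul_ne_zero Complex.I_ne_zero (by exact_mod_cast hsh.ne')
  set s := Complex.sin (Real.pi * ν) with hs
  set c := Complex.cos (Real.pi * ν) with hc
  obtain ⟨p, q, hJ, dp, dq, lp, lq⟩ := J_struct ν hre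
  obtain ⟨p', q', hJ', dp', dq', lp', lq'⟩ := J_struct (-ν) (by simp [hre])
  have hrefl : Complex.Gamma (1 + ν) * Complex.Gamma (1 + -ν) = Real.pi * ν / s := by
    rw [add_comm 1 ν, Complex.Gamma_add_one ν hν0, mul_assoc, show 1 + -ν = 1 - ν by ring, Complex.Gamma_mul_Gamma_one_sub]
    ring
  have g1 : Complex.Gamma (1 + ν) ≠ 0 := Complex.Gamma_ne_zero_of_re_pos (by simp [hre])
  have g2 : Complex.Gamma (1 + -ν) ≠ 0 := Complex.Gamma_ne_zero_of_re_pos (by simp [hre])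
  set a := 1 / Complex.Gamma (1 + ν) with ha
  set b := 1 / Complex.Gamma (1 + -ν) with hb
  have hab : a * b = s / (Real.pi * ν) := by
    rw [ha, hb, div_mul_div_comm, hrefl]; field_simp
  have hga : Complex.Gamma (1 + ν) = Real.pi * ν * b / s := by
    rw [hb]; field_simp; field_simp at hrefl; linear_combination hrefl
  have hgb : Complex.Gamma (1 + -ν) = Real.pi * ν * a / s := by
    rw [ha]; field_simp; field_simp at hrefl; linear_combination hrefl
  set e : ℝ → ℂ := fun X => Complex.exp (ν / 2 * (Real.log (X / 4) : ℝ)) with he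
  set e' : ℝ → ℂ := fun X => Complex.exp (-ν / 2 * (Real.log (X / 4) : ℝ)) with he'
  have hee : ∀ X, e X * e' X = 1 := by
    intro X; simp only [he, he']; rw [← Complex.exp_add, show ν / 2 * (Real.log (X / 4) : ℂ) + -ν / 2 * (Real.log (X / 4) : ℂ) = 0 by ring, Complex.exp_zero]
  have ne : ∀ X, ‖e X‖ = 1 := by
    intro X; simp only [he]
    rw [show ν / 2 * (Real.log (X / 4) : ℂ) = ((m / 4 * Real.log (X / 4) : ℝ) : ℂ) * Complex.I by rw [hν]; push_cast; ring]
    exact Complex.norm_exp_ofReal_mul_I _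
  have ne' : ∀ X, ‖e' X‖ = 1 := by
    intro X
    have := congrArg norm (hee X)
    rwa [norm_mul, ne, one_mul, norm_one] at this
  -- Zas
  have hZ : ∀ X, 0 < X → Zas m X = e' X ^ 2 * (Real.pi * ν * b / s) ^ 2 := by
    intro X hX
    rw [Zas, ← hga]
    congr 1
    · simp only [he']
      rw [← Complex.exp_nat_mul, Real.log_div (by norm_num) hX.ne', Real.log_div hX.ne' (by norm_num), hν]
      congr 1; push_cast; ring
    · rw [hν]; congr 3; push_cast; ring
  have hZc : ∀ X, 0 < X → (starRingEnd ℂ) (Zas m X) = e X ^ 2 * (Real.pi * ν * a / s) ^ 2 := by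
    intro X hX
    rw [Zas, ← hgb, map_mul, map_pow, ← Complex.Gamma_conj, ← Complex.exp_conj]
    congr 1
    · simp only [he, map_mul, Complex.conj_I, Complex.conj_ofReal]
      rw [← Complex.exp_nat_mul, Real.log_div (by norm_num) hX.ne', Real.log_div hX.ne' (by norm_num), hν]
      congr 1; push_cast; ring
    · rw [hν]; simp only [map_add, map_mul, map_one, Complex.conj_I, Complex.conj_ofReal]; congr 3; push_cast; ring
  have him : ∀ X, 0 < X → ((Zas m X).im : ℂ) / m = (Real.pi * ν / s) ^ 2 * (b ^ 2 * e' X ^ 2 - a ^ 2 * e X ^ 2) / (4 * ν) := by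
    intro X hX
    have h1 := Complex.sub_conj (Zas m X)
    rw [hZc X hX] at h1
    have h0 := hZ X hX
    have h2 : (4 * ν : ℂ) = 2 * m * Complex.I := by rw [hν]; ring
    rw [h2, div_eq_div_iff hm' (mul_ne_zero (mul_ne_zero two_ne_zero hm') Complex.I_ne_zero)]
    push_cast at h1
    linear_combination (-m) * h1 + m * h0
  have hrel : ∀ X, 0 < X → ((Zas m X).re : ℂ) = (Real.pi * ν / s) ^ 2 * (b ^ 2 * e' X ^ 2 + a ^ 2 * e X ^ 2) / 2 := by
    intro X hX
    have h1 := Complex.add_conj (Zas m X)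
    rw [hZc X hX] at h1
    have h0 := hZ X hX
    push_cast at h1
    linear_combination - (1 / 2) * h1 + (1 / 2) * h0
  set α := 1 / s ^ 2 with hα
  set β := -2 * c / s ^ 2 with hβ
  -- solution family
  set w0 : ℝ → ℂ := fun X => α * (e X * p X) ^ 2 + β * ((e X * p X) * (e' X * p' X)) + α * (e' X * p' X) ^ 2 with hw0
  set w1 : ℝ → ℂ := fun X => α * (2 * (e X * p X) * (e X * q X)) + β * ((e X * q X) * (e' X * p' X) + (e X * p X) * (e' X * q' X))
    + α * (2 * (e' X * p' X) * (e' X * q' X)) with hw1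
  set w2 : ℝ → ℂ := fun X => α * (2 * (e X * q X) ^ 2 - (ν ^ 2 + X) / 2 * (e X * p X) ^ 2)
    + β * (2 * (e X * q X) * (e' X * q' X) - (ν ^ 2 + X) / 2 * ((e X * p X) * (e' X * p' X)))
    + α * (2 * (e' X * q' X) ^ 2 - (ν ^ 2 + X) / 2 * (e' X * p' X) ^ 2) with hw2
  have dw0 : ∀ X, 0 < X → HasDerivAt w0 (w1 X / X) X := by
    intro X hX
    refine (((((dp X hX).pow 2).const_mul α).add (((dp X hX).mul (dp' X hX)).const_mul β)).add (((dp' X hX).pow 2).const_mul α)).congr_deriv ?_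
    simp only [hw1, he, he']
    push_cast
    ring
  have dw1 : ∀ X, 0 < X → HasDerivAt w1 ((w2 X - ((m / 2 : ℝ) : ℂ) ^ 2 * w0 X) / X) X := by
    intro X hX
    refine ((((((dp X hX).const_mul 2).mul (dq X hX)).const_mul α).add ((((dq X hX).mul (dp' X hX)).add ((dp X hX).mul (dq' X hX))).const_mul β)).add
      ((((dp' X hX).const_mul 2).mul (dq' X hX)).const_mul α)).congr_deriv ?_
    rw [show ((m / 2 : ℝ) : ℂ) ^ 2 = - ν ^ 2 by rw [hν2]; ring]
    simp only [hw0, hw2, he, he']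
    ring
  have dw2 : ∀ X, 0 < X → HasDerivAt w2 (-(w1 X + w0 X / 2)) X := by
    intro X hX
    have hX' : (X : ℂ) ≠ 0 := by exact_mod_cast hX.ne'
    have h1 : HasDerivAt (fun X : ℝ => (ν ^ 2 + X) / 2) (1 / 2) X := by
      exact ((Complex.ofRealCLM.hasDerivAt (x := X)).const_add (ν ^ 2)).div_const 2
    refine ((((((dq X hX).pow 2).const_mul 2).sub (h1.mul ((dp X hX).pow 2))).const_mul α).add
      (((((dq X hX).const_mul 2).mul (dq' X hX)).sub (h1.mul ((dp X hX).mul (dp' X hX)))).const_mul β) |>.add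
      (((((dq' X hX).pow 2).const_mul 2).sub (h1.mul ((dp' X hX).pow 2))).const_mul α)).congr_deriv ?_
    simp only [hw1, hw0, he, he', Pi.pow_apply, Pi.mul_apply]
    push_cast
    field_simp
    ring
  have lX : Tendsto (fun X : ℝ => (X : ℂ)) (𝓝[>] 0) (𝓝 0) := by
    have := (Complex.continuous_ofReal.tendsto 0).mono_left (nhdsWithin_le_nhds (s := Ioi 0))
    simpa using this
  have ne2 : ∀ X, 0 < X → ‖e X ^ 2‖ = 1 := fun X _ => by rw [norm_pow, ne, one_pow]
  have ne2' : ∀ X, 0 < X → ‖e' X ^ 2‖ = 1 := fun X _ => by rw [norm_pow, ne', one_pow]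
  have toC : ∀ {g : ℝ → ℝ}, Tendsto g (𝓝[>] 0) (𝓝 0) → Tendsto (fun X => (g X : ℂ)) (𝓝[>] 0) (𝓝 0) := by
    intro g hg
    have := (Complex.continuous_ofReal.tendsto 0).comp hg
    simpa [Function.comp_def] using this
  have shift : ∀ {g : ℝ → ℂ} {l : ℂ}, Tendsto g (𝓝[>] 0) (𝓝 l) → ∀ k κ, l = k → Tendsto (fun X => κ * (g X - k)) (𝓝[>] 0) (𝓝 0) := by
    intro g l hg k κ hk
    subst hk
    have := (hg.sub_const l).const_mul κ
    rwa [sub_self, mul_zero] at this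
  set K : ℂ := 4 / (Real.pi : ℂ) ^ 2 with hK
  have key := energyC (a := 2 / m) (μ := m / 2) (f0 := fun X => K * (n0 m X : ℂ) - w0 X)
    (f1 := fun X => K * (n1 m X : ℂ) - w1 X) (f2 := fun X => K * (n2 m X : ℂ) - w2 X) (by field_simp) ?_ ?_ ?_ ?_ ?_ ?_ (x ^ 2) (by positivity)
  · have hy : besselY ν x = (besselJ ν x * c - besselJ (-ν) x) / s := rfl
    have hsc : s ^ 2 + c ^ 2 = 1 := Complex.sin_sq_add_cos_sq _
    have : K * (n0 m (x ^ 2) : ℂ) = w0 (x ^ 2) := by linear_combination key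
    push_cast
    rw [this, hy]
    simp only [hw0, he, he', ← hJ x hx, ← hJ' x hx, hα, hβ]
    field_simp
    linear_combination (besselJ ν x) ^ 2 * hsc
  · intro X hX
    refine (((n0_deriv m hX).ofReal_comp.const_mul K).sub (dw0 X hX)).congr_deriv ?_
    push_cast; ring
  · intro X hX
    refine (((n1_deriv m hX).ofReal_comp.const_mul K).sub (dw1 X hX)).congr_deriv ?_
    rw [n2]
    push_cast; ring
  · intro X hX
    refine (((n2_deriv m hm hX).ofReal_comp.const_mul K).sub (dw2 X hX)).congr_deriv ?_
    push_cast; ring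
  · have t0 := (toC (n1_lim m hm)).const_mul K
    have t1 := bdd_mul_lim ne2 (shift ((lp.const_mul 2).mul lq) (ν * a ^ 2) α (by ring))
    have t2 := bdd_mul_lim ne2' (shift ((lp'.const_mul 2).mul lq') (-ν * b ^ 2) α (by ring))
    have t3 := shift ((lq.mul lp').add (lp.mul lq')) 0 β (by ring)
    have t := ((t0.sub t1).sub t2).sub t3
    simp only [mul_zero, sub_zero] at t
    refine t.congr' ?_
    filter_upwards [self_mem_nhdsWithin] with X hX
    push_cast
    rw [him X hX]
    simp only [hw1, hK, hα]
    have h9 := hee X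
    field_simp
    linear_combination (β * (q X * p' X + p X * q' X) * Real.pi ^ 2 * s ^ 2) * h9
  · have t0 := (toC (r1_lim m)).const_mul K
    have t1 := bdd_mul_lim ne2 (shift (((lq.pow 2).const_mul 2).add (((lX.const_sub (ν ^ 2)).div_const 2).mul (lp.pow 2))) (ν ^ 2 * a ^ 2) α (by ring))
    have t2 := bdd_mul_lim ne2' (shift (((lq'.pow 2).const_mul 2).add (((lX.const_sub (ν ^ 2)).div_const 2).mul (lp'.pow 2))) (ν ^ 2 * b ^ 2) α (by ring))
    have t3 := shift (((lq.mul lq').const_mul 2).add (((lX.const_sub (ν ^ 2)).div_const 2).mul (lp.mul lp'))) 0 β (by ring)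
    have t := ((t0.sub t1).sub t2).sub t3
    simp only [mul_zero, sub_zero] at t
    refine t.congr' ?_
    filter_upwards [self_mem_nhdsWithin] with X hX
    have e8 : ((m / 2 : ℝ) : ℂ) ^ 2 = - ν ^ 2 := by rw [hν2]; ring
    have e7 : (n2 m X : ℂ) = r1 m X - ν ^ 2 * n0 m X := by
      have : (m : ℂ) ^ 2 / 4 = ((m / 2 : ℝ) : ℂ) ^ 2 := by push_cast; ring
      rw [n2]; push_cast; rw [this, e8]; ring
    rw [e8, e7]
    push_cast
    rw [hrel X hX]
    simp only [hw0, hw2, hK, hα]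
    have h9 := hee X
    field_simp
    linear_combination (2 * β * (4 * q X * q' X + (ν ^ 2 - X) * p X * p' X) * Real.pi ^ 2 * s ^ 2) * h9
  · have hn := (Complex.continuous_ofReal.tendsto _).comp (n2_lim m hm)
    have t0 := shift hn _ K rfl
    have t1 := bdd_mul_lim ne2 (shift (((lq.pow 2).const_mul 2).sub (((lX.const_add (ν ^ 2)).div_const 2).mul (lp.pow 2))) 0 α (by ring))
    have t2 := bdd_mul_lim ne2' (shift (((lq'.pow 2).const_mul 2).sub (((lX.const_add (ν ^ 2)).div_const 2).mul (lp'.pow 2))) 0 α (by ring))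
    have t3 := shift (((lq.mul lq').const_mul 2).sub (((lX.const_add (ν ^ 2)).div_const 2).mul (lp.mul lp'))) (- ν ^ 2 * (a * b)) β (by ring)
    have t := ((t0.sub t1).sub t2).sub t3
    simp only [mul_zero, sub_zero] at t
    refine t.congr' ?_
    filter_upwards [self_mem_nhdsWithin] with X hX
    simp only [Function.comp]
    have h8 : K * ((m * Real.pi / 4 * (Real.cosh (Real.pi * m / 2) / Real.sinh (Real.pi * m / 2)) : ℝ) : ℂ) = - β * ν ^ 2 * (a * b) := by
      rw [hab, hβ, hcs, hsn, hK]
      have h7 : (Real.sinh (Real.pi * m / 2) : ℂ) ≠ 0 := by exact_mod_cast hsh.ne'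
      have h6 := Complex.I_ne_zero
      rw [hν]
      push_cast
      field_simp
    rw [mul_sub, h8]
    simp only [hw2]
    have h9 := hee X
    linear_combination (β * (2 * q X * q' X - (ν ^ 2 + X) / 2 * p X * p' X)) * h9


noncomputable def Phi (n : ℕ) (x : ℝ) : ℝ :=
  x * ∫ u in (0:ℝ)..Real.pi, besselJ0 (2 * x * Real.cosh u) * Real.sinh (2 * u) * Real.sin (n * u)

lemma Phi_cont (n : ℕ) : Continuous (Phi n) := by
  unfold Phi
  refine continuous_id.mul ?_
  apply intervalIntegral.continuous_parametric_intervalIntegral_of_continuous'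
  have h0 := J0_cont
  have := Real.continuous_cosh
  have := Real.continuous_sinh
  simp only [Function.uncurry_def]
  fun_prop

lemma Phi_parts (n : ℕ) (x : ℝ) :
    Phi n x = - ∫ u in (0:ℝ)..Real.pi, Real.cosh u * bJ1 (2 * x * Real.cosh u) * (n * Real.cos (n * u)) := by
  have h0 := J0_cont
  have h1 := J1_cont
  have hc := Real.continuous_cosh
  have hs := Real.continuous_sinh
  have key : ∀ u, HasDerivAt (fun u => (2 * x * Real.cosh u) * bJ1 (2 * x * Real.cosh u))
      (2 * x * Real.cosh u * besselJ0 (2 * x * Real.cosh u) * (2 * x * Real.sinh u)) u := by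
    intro u
    exact (xJ1_deriv (2 * x * Real.cosh u)).comp u ((Real.hasDerivAt_cosh u).const_mul (2 * x))
  have hv : ∀ u : ℝ, HasDerivAt (fun u : ℝ => Real.sin (n * u)) (n * Real.cos (n * u)) u := by
    intro u
    refine (((hasDerivAt_id u).const_mul (n:ℝ)).sin).congr_deriv ?_
    simp; ring
  have ibp := intervalIntegral.integral_mul_deriv_eq_deriv_mul (a := 0) (b := Real.pi)
    (u := fun u => (2 * x * Real.cosh u) * bJ1 (2 * x * Real.cosh u)) (v := fun u : ℝ => Real.sin (n * u))
    (fun u _ => key u) (fun u _ => hv u)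
    (Continuous.intervalIntegrable (by fun_prop) _ _) (Continuous.intervalIntegrable (by fun_prop) _ _)
  simp only [Real.sin_nat_mul_pi, mul_zero, Real.sin_zero, sub_zero, zero_sub] at ibp
  rcases eq_or_ne x 0 with rfl | hx
  · simp [Phi, J1_zero]
  have e1 : ∫ u in (0:ℝ)..Real.pi, 2 * x * Real.cosh u * bJ1 (2 * x * Real.cosh u) * (n * Real.cos (n * u))
     = 2 * x * ∫ u in (0:ℝ)..Real.pi, Real.cosh u * bJ1 (2 * x * Real.cosh u) * (n * Real.cos (n * u)) := by
    rw [← intervalIntegral.integral_const_mul]; congr 1; ext u; ring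
  have e2 : ∫ u in (0:ℝ)..Real.pi, 2 * x * Real.cosh u * besselJ0 (2 * x * Real.cosh u) * (2 * x * Real.sinh u) * Real.sin (n * u)
     = 2 * x * Phi n x := by
    rw [Phi, ← mul_assoc, ← intervalIntegral.integral_const_mul]; congr 1; ext u; rw [Real.sinh_two_mul]; ring
  rw [e1, e2] at ibp
  have : (2 * x) ≠ 0 := by positivity
  apply mul_left_cancel₀ this
  linarith

lemma Phi_le_small (n : ℕ) {x : ℝ} (hx : 0 < x) : |Phi n x| ≤ x * (Real.sinh (2 * Real.pi) * Real.pi) := by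
  rw [Phi, abs_mul, abs_of_pos hx]
  refine mul_le_mul_of_nonneg_left ?_ hx.le
  have := intervalIntegral.norm_integral_le_of_norm_le_const (a := 0) (b := Real.pi) (C := Real.sinh (2 * Real.pi))
    (f := fun u => besselJ0 (2 * x * Real.cosh u) * Real.sinh (2 * u) * Real.sin (n * u)) ?_
  · rwa [Real.norm_eq_abs, sub_zero, abs_of_pos Real.pi_pos] at this
  · intro u hu
    rw [uIoc_of_le Real.pi_pos.le] at hu
    have a1 := J0_le (2 * x * Real.cosh u) (by have := Real.cosh_pos u; positivity)
    have a2 : |Real.sinh (2 * u)| ≤ Real.sinh (2 * Real.pi) := by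
      rw [abs_of_nonneg (Real.sinh_nonneg_iff.2 (by linarith [hu.1]))]
      exact Real.sinh_le_sinh.2 (by linarith [hu.2])
    rw [Real.norm_eq_abs, abs_mul, abs_mul]
    calc _ ≤ 1 * Real.sinh (2 * Real.pi) * 1 :=
          mul_le_mul (mul_le_mul a1 a2 (abs_nonneg _) zero_le_one) (Real.abs_sin_le_one _) (abs_nonneg _) (by have := (abs_nonneg _).trans a2; positivity)
      _ = _ := by ring

lemma Phi_bd (n : ℕ) : ∃ C, 0 ≤ C ∧ ∀ x, 0 < x → |Phi n x| ≤ C * (x * Bd x) := by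
  obtain ⟨D, hD, hJ⟩ := J1_decay
  set A := Real.sinh (2 * Real.pi) * Real.pi with hA
  have hA0 : 0 ≤ A := mul_nonneg (Real.sinh_nonneg_iff.2 (by positivity)) Real.pi_pos.le
  set B := Real.cosh Real.pi * D * n * Real.pi with hB
  have hB0 : 0 ≤ B := by have := Real.cosh_pos Real.pi; have := Real.pi_pos; positivity
  refine ⟨A + B, by positivity, fun x hx => ?_⟩
  unfold Bd
  split_ifs with h
  · have h1 : 1 ≤ x ^ (-(1/2) : ℝ) := Real.one_le_rpow_of_pos_of_le_one_of_nonpos hx h (by norm_num)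
    calc _ ≤ x * A := Phi_le_small n hx
      _ ≤ x * A * x ^ (-(1/2) : ℝ) := le_mul_of_one_le_right (by positivity) h1
      _ ≤ _ := by nlinarith [mul_nonneg hB0 (mul_nonneg hx.le (zero_le_one.trans h1))]
  · push Not at h
    have hx2 : x * x ^ (-(3/2) : ℝ) = x ^ (-(1/2) : ℝ) := by
      rw [← Real.rpow_one_add' hx.le (by norm_num)]; norm_num
    rw [hx2]
    have hp : 0 ≤ x ^ (-(1/2) : ℝ) := by positivity
    suffices |Phi n x| ≤ B * x ^ (-(1/2) : ℝ) by nlinarith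
    rw [Phi_parts, abs_neg]
    have := intervalIntegral.norm_integral_le_of_norm_le_const (a := 0) (b := Real.pi)
      (C := Real.cosh Real.pi * (D * x ^ (-(1/2) : ℝ)) * n)
      (f := fun u => Real.cosh u * bJ1 (2 * x * Real.cosh u) * (n * Real.cos (n * u))) ?_
    · rw [Real.norm_eq_abs, sub_zero, abs_of_pos Real.pi_pos] at this
      refine this.trans (le_of_eq ?_)
      rw [hB]; ring
    · intro u hu
      rw [uIoc_of_le Real.pi_pos.le] at hu
      have hc1 := Real.one_le_cosh u
      have hy : x ≤ 2 * x * Real.cosh u := by nlinarith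
      have a1 : |bJ1 (2 * x * Real.cosh u)| ≤ D * x ^ (-(1/2) : ℝ) :=
        (hJ _ (by linarith)).trans (mul_le_mul_of_nonneg_left (Real.rpow_le_rpow_of_nonpos hx hy (by norm_num)) hD)
      have a2 : |Real.cosh u| ≤ Real.cosh Real.pi := by
        rw [abs_of_pos (Real.cosh_pos u)]
        apply Real.cosh_le_cosh.2
        rw [abs_of_pos hu.1, abs_of_pos Real.pi_pos]; exact hu.2
      rw [Real.norm_eq_abs, abs_mul, abs_mul, abs_mul, Nat.abs_cast]
      calc _ ≤ Real.cosh Real.pi * (D * x ^ (-(1/2) : ℝ)) * (n * 1) :=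
            mul_le_mul (mul_le_mul a2 a1 (abs_nonneg _) (Real.cosh_pos _).le)
              (mul_le_mul_of_nonneg_left (Real.abs_cos_le_one _) (Nat.cast_nonneg n)) (by positivity) (by have := Real.cosh_pos Real.pi; positivity)
        _ = _ := by ring

lemma xkap_Bd {s : ℝ} (hs : 0 < s) : ∃ C, 0 ≤ C ∧ ∀ x, 0 < x → x * kap (x ^ 2 * s ^ 2) ≤ C * Bd x := by
  set A := 2 * Real.Gamma (1/2) * (s^2) ^ (-(1/2) : ℝ) with hA
  set B := 2 * Real.Gamma (5/4) * (s^2) ^ (-(5/4) : ℝ) with hB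
  have hA0 : 0 ≤ A := by have := Real.Gamma_pos_of_pos (s := 1/2) (by norm_num); positivity
  have hB0 : 0 ≤ B := by have := Real.Gamma_pos_of_pos (s := 5/4) (by norm_num); positivity
  refine ⟨A + B, by positivity, fun x hx => ?_⟩
  have hz : 0 < x ^ 2 * s ^ 2 := by positivity
  unfold Bd
  split_ifs with h
  · have h1 : 1 ≤ x ^ (-(1/2) : ℝ) := Real.one_le_rpow_of_pos_of_le_one_of_nonpos hx h (by norm_num)
    have k := kap_le hz (a := 1/2) (by norm_num) (by norm_num)
    have e : (x ^ 2 * s ^ 2) ^ (-(1/2) : ℝ) = x⁻¹ * (s^2) ^ (-(1/2) : ℝ) := by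
      rw [Real.mul_rpow (by positivity) (by positivity)]
      congr 1
      rw [← Real.rpow_natCast, ← Real.rpow_mul hx.le]; norm_num [Real.rpow_neg_one]
    rw [e] at k
    calc x * kap (x ^ 2 * s ^ 2) ≤ x * (2 * Real.Gamma (1/2) * (x⁻¹ * (s^2) ^ (-(1/2) : ℝ))) := mul_le_mul_of_nonneg_left k hx.le
      _ = A := by rw [hA]; field_simp
      _ ≤ _ := by nlinarith [mul_nonneg hB0 (zero_le_one.trans h1)]
  · push Not at h
    have k := kap_le hz (a := 5/4) (by norm_num) (by norm_num)
    have e : (x ^ 2 * s ^ 2) ^ (-(5/4) : ℝ) = x ^ (-(5/2) : ℝ) * (s^2) ^ (-(5/4) : ℝ) := by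
      rw [Real.mul_rpow (by positivity) (by positivity)]
      congr 1
      rw [← Real.rpow_natCast, ← Real.rpow_mul hx.le]; norm_num
    have hx2 : x * x ^ (-(5/2) : ℝ) = x ^ (-(3/2) : ℝ) := by
      rw [← Real.rpow_one_add' hx.le (by norm_num)]; norm_num
    rw [e] at k
    have hp : 0 ≤ x ^ (-(3/2) : ℝ) := by positivity
    calc x * kap (x ^ 2 * s ^ 2) ≤ x * (2 * Real.Gamma (5/4) * (x ^ (-(5/2) : ℝ) * (s^2) ^ (-(5/4) : ℝ))) := mul_le_mul_of_nonneg_left k hx.le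
      _ = B * x ^ (-(3/2) : ℝ) := by rw [hB, ← hx2]; ring
      _ ≤ _ := by nlinarith

lemma xkap_contOn {s : ℝ} (hs : 0 < s) : ContinuousOn (fun x => kap (x ^ 2 * s ^ 2)) (Ioi 0) :=
  kap_contOn.comp (by fun_prop) (fun x hx => by have : 0 < x := hx; show 0 < x^2*s^2; positivity)

lemma xkap_int {s : ℝ} (hs : 0 < s) : IntegrableOn (fun x => x * kap (x ^ 2 * s ^ 2)) (Ioi 0) := by
  obtain ⟨C, _, h⟩ := xkap_Bd hs
  refine int_of_Bd (C := C) ((continuousOn_id.mul (xkap_contOn hs)).aestronglyMeasurable measurableSet_Ioi) fun x hx => ?_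
  rw [Real.norm_eq_abs, abs_of_nonneg (mul_nonneg hx.le (kap_nonneg _))]; exact h x hx

lemma hankel_kap {s a : ℝ} (hs : 0 < s) (ha : 0 < a) :
    ∫ x in Ioi (0:ℝ), x * besselJ0 (a * x) * kap (x ^ 2 * s ^ 2) = 2 / (4 * s ^ 2 + a ^ 2) := by
  have h0 := J0_cont
  have h1 := J1_cont
  have hint : IntegrableOn (fun x => x * besselJ0 (a * x) * kap (x ^ 2 * s ^ 2)) (Ioi 0) := by
    refine (xkap_int hs).mono' (((by fun_prop : Continuous fun x => x * besselJ0 (a * x)).continuousOn.mul (xkap_contOn hs)).aestronglyMeasurable measurableSet_Ioi) ?_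
    refine (ae_restrict_iff' measurableSet_Ioi).2 (ae_of_all _ fun x (hx : 0 < x) => ?_)
    rw [Real.norm_eq_abs, abs_mul, abs_mul, abs_of_pos hx, abs_of_nonneg (kap_nonneg _)]
    refine mul_le_mul_of_nonneg_right ?_ (kap_nonneg _)
    exact mul_le_of_le_one_right hx.le (J0_le _ (by positivity))
  have hz : ∀ x : ℝ, 0 < x → HasDerivAt (fun x => x ^ 2 * s ^ 2) (2 * x * s ^ 2) x := by
    intro x _
    refine ((hasDerivAt_pow 2 x).mul_const (s^2)).congr_deriv ?_
    norm_num
  have hax : ∀ x : ℝ, HasDerivAt (fun x => a * x) a x := by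
    intro x; refine ((hasDerivAt_id x).const_mul a).congr_deriv (by ring)
  have hF := FTC0 (f := fun x => 2 * (lam (x ^ 2 * s ^ 2) * besselJ0 (a * x)) + (a * x * bJ1 (a * x)) * kap (x ^ 2 * s ^ 2))
    (f' := fun x => (4 * s ^ 2 + a ^ 2) * (x * besselJ0 (a * x) * kap (x ^ 2 * s ^ 2))) (l := -2) ?_ (hint.const_mul _) ?_ ?_
  · rw [integral_const_mul] at hF
    have : (0:ℝ) < 4 * s ^ 2 + a ^ 2 := by positivity
    rw [eq_div_iff this.ne']; linarith
  · intro x hx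
    have hzz : 0 < x ^ 2 * s ^ 2 := by positivity
    have d1 := (HasDerivAt.comp x (lam_deriv hzz) (hz x hx))
    have d2 := (HasDerivAt.comp x (kap_deriv hzz) (hz x hx))
    have d3 := (HasDerivAt.comp x (J0_deriv (a * x)) (hax x))
    have d4 := (HasDerivAt.comp x (xJ1_deriv (a * x)) (hax x))
    refine (((d1.mul d3).const_mul 2).add (d4.mul d2)).congr_deriv ?_
    simp only [Function.comp]
    field_simp
    ring
  · have l0 : Tendsto (fun x : ℝ => x ^ 2 * s ^ 2) (𝓝[>] 0) (𝓝[>] 0) := by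
      refine tendsto_nhdsWithin_iff.2 ⟨?_, ?_⟩
      · have : Tendsto (fun x : ℝ => x ^ 2 * s ^ 2) (𝓝 0) (𝓝 (0 ^ 2 * s ^ 2)) := (by fun_prop : Continuous fun x : ℝ => x ^ 2 * s ^ 2).tendsto 0
        simpa using this.mono_left nhdsWithin_le_nhds
      · filter_upwards [self_mem_nhdsWithin] with x hx
        have : (0:ℝ) < x := hx
        show 0 < x ^ 2 * s ^ 2
        positivity
    have t1 := lam_zero_lim.comp l0
    have t2 : Tendsto (fun x => besselJ0 (a * x)) (𝓝[>] 0) (𝓝 1) := by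
      have : Tendsto (fun x => besselJ0 (a * x)) (𝓝 0) (𝓝 (besselJ0 (a * 0))) := (by fun_prop : Continuous fun x => besselJ0 (a * x)).tendsto 0
      rw [mul_zero, J0_zero] at this
      exact this.mono_left nhdsWithin_le_nhds
    have t3 : Tendsto (fun x => (a * x * bJ1 (a * x)) * kap (x ^ 2 * s ^ 2)) (𝓝[>] 0) (𝓝 0) := by
      set A := 2 * Real.Gamma (1/2) * (s^2) ^ (-(1/2) : ℝ) with hA
      have tb : Tendsto (fun x => a * |bJ1 (a * x)| * A) (𝓝[>] 0) (𝓝 0) := by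
        have : Tendsto (fun x => a * |bJ1 (a * x)| * A) (𝓝 0) (𝓝 (a * |bJ1 (a * 0)| * A)) := (by fun_prop : Continuous fun x => a * |bJ1 (a * x)| * A).tendsto 0
        rw [mul_zero, J1_zero] at this
        simp only [abs_zero, mul_zero, zero_mul] at this
        exact this.mono_left nhdsWithin_le_nhds
      refine squeeze_zero_norm' ?_ tb
      filter_upwards [self_mem_nhdsWithin] with x hx
      have hx : (0:ℝ) < x := hx
      have k := kap_le (by positivity : 0 < x ^ 2 * s ^ 2) (a := 1/2) (by norm_num) (by norm_num)
      have e : (x ^ 2 * s ^ 2) ^ (-(1/2) : ℝ) = x⁻¹ * (s^2) ^ (-(1/2) : ℝ) := by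
        rw [Real.mul_rpow (by positivity) (by positivity)]
        congr 1
        rw [← Real.rpow_natCast, ← Real.rpow_mul hx.le]; norm_num [Real.rpow_neg_one]
      rw [e] at k
      rw [Real.norm_eq_abs, abs_mul, abs_mul, abs_mul, abs_of_pos ha, abs_of_pos hx, abs_of_nonneg (kap_nonneg _)]
      calc _ ≤ a * x * |bJ1 (a * x)| * (2 * Real.Gamma (1/2) * (x⁻¹ * (s^2) ^ (-(1/2) : ℝ))) := mul_le_mul_of_nonneg_left k (by positivity)
        _ = _ := by rw [hA]; field_simp
    have := ((t1.mul t2).const_mul 2).add t3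
    refine Tendsto.congr (fun x => rfl) ?_ |>.trans (le_of_eq (by norm_num : 𝓝 (2 * (-1 * 1) + 0) = 𝓝 (-2:ℝ)))
    exact this
  · obtain ⟨C, hC, hk⟩ := xkap_Bd hs
    have hxt : Tendsto (fun x : ℝ => x ^ (-(3/2) : ℝ)) atTop (𝓝 0) := tendsto_rpow_neg_atTop (by norm_num)
    have l1 : Tendsto (fun x : ℝ => 2 * (2 * Real.Gamma (1+1) * (x ^ 2 * s ^ 2) ^ (-1 : ℝ)) + a * (C * x ^ (-(3/2) : ℝ))) atTop (𝓝 0) := by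
      have l2 : Tendsto (fun x : ℝ => x ^ 2 * s ^ 2) atTop atTop := (tendsto_pow_atTop (by norm_num)).atTop_mul_const (by positivity)
      have l3 := (tendsto_rpow_neg_atTop (y := 1) (by norm_num)).comp l2
      have := ((l3.const_mul (2 * Real.Gamma (1+1))).const_mul 2).add ((hxt.const_mul C).const_mul a)
      simpa using this
    refine squeeze_zero_norm' ?_ l1
    filter_upwards [eventually_gt_atTop 1] with x hx1
    have hx : 0 < x := by linarith
    have b1 := lam_abs_le (by positivity : 0 < x ^ 2 * s ^ 2) (a := 1) (by norm_num) (by norm_num)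
    have b2 := hk x hx
    rw [Bd, if_neg (by linarith)] at b2
    have j0 := J0_le (a * x) (by positivity)
    have j1 := J1_le (a * x) (by positivity)
    refine (norm_add_le _ _).trans (add_le_add ?_ ?_)
    · rw [Real.norm_eq_abs, abs_mul, abs_mul, abs_two]
      refine mul_le_mul_of_nonneg_left ?_ (by norm_num)
      exact (mul_le_of_le_one_right (abs_nonneg _) j0).trans b1
    · rw [Real.norm_eq_abs, abs_mul, abs_mul, abs_mul, abs_of_pos ha, abs_of_pos hx, abs_of_nonneg (kap_nonneg _)]
      have : a * x * |bJ1 (a * x)| * kap (x ^ 2 * s ^ 2) = a * ((x * kap (x ^ 2 * s ^ 2)) * |bJ1 (a * x)|) := by ring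
      rw [this]
      refine mul_le_mul_of_nonneg_left ?_ ha.le
      exact (mul_le_of_le_one_right (mul_nonneg hx.le (kap_nonneg _)) j1).trans b2


noncomputable def sc2 (t : ℝ) : ℝ := 1 / Real.cosh t ^ 2

lemma sc2_cont : Continuous sc2 := by
  have := Real.continuous_cosh
  unfold sc2
  exact continuous_const.div (by fun_prop) (fun t => (pow_pos (Real.cosh_pos t) 2).ne')

lemma sc2_nonneg (t : ℝ) : 0 ≤ sc2 t := by unfold sc2; positivity

lemma sg_eq (t : ℝ) : Real.sigmoid (2 * t) = Real.exp t / (2 * Real.cosh t) := by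
  rw [Real.sigmoid_def, Real.cosh_eq, inv_eq_one_div, div_eq_div_iff (by positivity) (by positivity)]
  have : Real.exp (-(2*t)) = Real.exp (-t) * Real.exp (-t) := by rw [← Real.exp_add]; ring_nf
  have h2 : Real.exp t * Real.exp (-t) = 1 := by rw [← Real.exp_add]; simp
  rw [this]
  linear_combination (-Real.exp (-t)) * h2

lemma sg_eq' (t : ℝ) : 1 - Real.sigmoid (2 * t) = Real.exp (-t) / (2 * Real.cosh t) := by
  have := Real.cosh_pos t
  rw [sg_eq, eq_div_iff (by positivity), sub_mul, div_mul_cancel₀ _ (by positivity), Real.cosh_eq]; ring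

lemma sg_deriv (t : ℝ) : HasDerivAt (fun t => Real.sigmoid (2 * t)) (sc2 t / 2) t := by
  have h := (Real.hasDerivAt_sigmoid (2 * t)).comp t ((hasDerivAt_id t).const_mul 2)
  refine h.congr_deriv ?_
  have := Real.cosh_pos t
  have h2 : Real.exp t * Real.exp (-t) = 1 := by rw [← Real.exp_add]; simp
  rw [sg_eq', sg_eq, sc2]
  field_simp
  linear_combination h2

lemma sg_inj : InjOn (fun t => Real.sigmoid (2 * t)) univ := by
  intro a _ b _ h
  have := Real.sigmoid_injective h
  linarith

lemma sg_image : (fun t => Real.sigmoid (2 * t)) '' univ = Ioo 0 1 := by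
  rw [← Real.range_sigmoid, image_univ]
  ext y; constructor
  · rintro ⟨t, rfl⟩; exact ⟨2 * t, rfl⟩
  · rintro ⟨t, rfl⟩; exact ⟨t / 2, by simp only; congr 1; ring⟩

lemma sc2_int : Integrable sc2 := by
  have h := (integrableOn_image_iff_integrableOn_abs_deriv_smul MeasurableSet.univ
    (fun t _ => (sg_deriv t).hasDerivWithinAt) sg_inj (fun _ => (1:ℝ))).1 (by
      rw [sg_image]; exact integrableOn_const (by simp))
  rw [integrableOn_univ] at h
  refine (h.const_mul 2).congr (ae_of_all _ fun t => ?_)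
  simp only [smul_eq_mul, mul_one]
  rw [abs_of_nonneg (div_nonneg (sc2_nonneg t) (by norm_num))]; ring

lemma beta_eq (μ : ℝ) : Complex.betaIntegral (1 + Complex.I * μ) (1 - Complex.I * μ) =
    ∫ t : ℝ, ((sc2 t / 2 : ℝ) : ℂ) * Complex.exp (Complex.I * (2 * μ * t)) := by
  rw [Complex.betaIntegral, intervalIntegral.integral_of_le zero_le_one, integral_Ioc_eq_integral_Ioo, ← sg_image,
    integral_image_eq_integral_abs_deriv_smul MeasurableSet.univ
    (fun t _ => (sg_deriv t).hasDerivWithinAt) sg_inj, setIntegral_univ]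
  congr 1; ext t
  rw [abs_of_nonneg (div_nonneg (sc2_nonneg t) (by norm_num)), Complex.real_smul]
  congr 1
  have p1 := Real.sigmoid_pos (2 * t)
  have p2 : 0 < 1 - Real.sigmoid (2 * t) := by linarith [Real.sigmoid_lt_one (2 * t)]
  have e : (1 - (Real.sigmoid (2 * t) : ℂ)) = ((1 - Real.sigmoid (2 * t) : ℝ) : ℂ) := by push_cast; rfl
  rw [e, Complex.cpow_def_of_ne_zero (by exact_mod_cast p1.ne'), Complex.cpow_def_of_ne_zero (by exact_mod_cast p2.ne'),
    ← Complex.exp_add, ← Complex.ofReal_log p1.le, ← Complex.ofReal_log p2.le]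
  congr 1
  have hl : Real.log (Real.sigmoid (2 * t)) - Real.log (1 - Real.sigmoid (2 * t)) = 2 * t := by
    rw [← Real.log_div p1.ne' p2.ne', sg_eq', sg_eq, div_div_div_cancel_right₀ (by have := Real.cosh_pos t; positivity),
      ← Real.exp_sub, Real.log_exp]; ring
  have hl' : (Real.log (Real.sigmoid (2 * t)) : ℂ) - (Real.log (1 - Real.sigmoid (2 * t)) : ℂ) = 2 * t := by
    exact_mod_cast hl
  linear_combination (Complex.I * μ) * hl'

lemma gam_prod {μ : ℝ} (hμ : 0 < μ) : Complex.Gamma (1 + Complex.I * μ) * Complex.Gamma (1 - Complex.I * μ)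
    = ((Real.pi * μ / Real.sinh (Real.pi * μ) : ℝ) : ℂ) := by
  have h0 : Complex.I * μ ≠ 0 := mul_ne_zero Complex.I_ne_zero (by exact_mod_cast hμ.ne')
  rw [add_comm, Complex.Gamma_add_one _ h0, mul_assoc, Complex.Gamma_mul_Gamma_one_sub]
  have : (Real.pi : ℂ) * (Complex.I * μ) = (Real.pi * μ : ℂ) * Complex.I := by ring
  rw [this, Complex.sin_mul_I]
  push_cast
  have hs : Complex.sinh (Real.pi * μ) ≠ 0 := by
    have : Real.sinh (Real.pi * μ) ≠ 0 := (Real.sinh_pos_iff.2 (mul_pos Real.pi_pos hμ)).ne'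
    exact_mod_cast this
  field_simp

lemma cos_sc2 {m : ℝ} (hm : 0 < m) : ∫ t : ℝ, Real.cos (m * t) * sc2 t = Real.pi * m / Real.sinh (Real.pi * m / 2) := by
  have h1 := Complex.Gamma_mul_Gamma_eq_betaIntegral (s := 1 + Complex.I * (m/2 : ℝ)) (t := 1 - Complex.I * (m/2 : ℝ)) (by simp) (by simp)
  have h2 : (1 + Complex.I * (m/2 : ℝ)) + (1 - Complex.I * (m/2 : ℝ)) = 2 := by ring
  rw [gam_prod (by positivity : 0 < m/2), h2, Complex.Gamma_ofNat_eq_factorial, beta_eq] at h1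
  simp only [Nat.reduceSub, Nat.factorial_one, Nat.cast_one, one_mul] at h1
  have hi : Integrable (fun t : ℝ => ((sc2 t / 2 : ℝ) : ℂ) * Complex.exp (Complex.I * (2 * (m/2 : ℝ) * t))) := by
    have hb : Integrable (fun t : ℝ => ((sc2 t / 2 : ℝ) : ℂ)) := by exact (sc2_int.div_const 2).ofReal
    refine hb.mono (Continuous.aestronglyMeasurable ?_) (ae_of_all _ fun t => ?_)
    · have := sc2_cont; fun_prop
    · rw [norm_mul]
      have : Complex.I * (2 * ((m/2 : ℝ):ℂ) * t) = ((2 * (m/2) * t : ℝ) : ℂ) * Complex.I := by push_cast; ring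
      rw [this, Complex.norm_exp_ofReal_mul_I, mul_one]
  have h3 := congrArg Complex.re h1
  rw [Complex.ofReal_re] at h3
  have h4 := integral_re hi
  simp only [RCLike.re_to_complex] at h4
  rw [← h4] at h3
  have e : ∀ t : ℝ, (((sc2 t / 2 : ℝ) : ℂ) * Complex.exp (Complex.I * (2 * (m/2 : ℝ) * t))).re = (1/2) * (Real.cos (m * t) * sc2 t) := by
    intro t
    have : Complex.I * (2 * ((m/2 : ℝ):ℂ) * t) = ((m * t : ℝ) : ℂ) * Complex.I := by push_cast; ring
    rw [Complex.re_ofReal_mul, this, Complex.exp_ofReal_mul_I_re]; ring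
  simp only [e] at h3
  rw [integral_const_mul] at h3
  have e2 : Real.pi * (m / 2) = Real.pi * m / 2 := by ring
  rw [e2] at h3
  have : ∫ t : ℝ, Real.cos (m * t) * sc2 t = 2 * (Real.pi * m / 2 / Real.sinh (Real.pi * m / 2)) := by linarith
  rw [this]; ring

noncomputable def SS (u t : ℝ) : ℝ := Real.sinh (2 * u) / (Real.cosh (2 * u) + Real.cosh (2 * t))

lemma SS_cont : Continuous (Function.uncurry SS) := by
  have := Real.continuous_cosh
  have := Real.continuous_sinh
  unfold SS Function.uncurry
  refine Continuous.div (by fun_prop) (by fun_prop) (fun p => ?_)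
  have := Real.cosh_pos (2 * p.1); have := Real.cosh_pos (2 * p.2); positivity

lemma SS_abs_le (u t : ℝ) : |SS u t| ≤ |Real.sinh (2 * u)| * sc2 t := by
  unfold SS sc2
  have h1 := Real.one_le_cosh (2 * u)
  have h2 : Real.cosh (2 * t) = 2 * Real.cosh t ^ 2 - 1 := by rw [Real.cosh_two_mul, Real.sinh_sq]; ring
  have h3 := Real.cosh_pos t
  have h4 := pow_pos h3 2
  rw [abs_div, abs_of_pos (a := Real.cosh (2 * u) + _) (by linarith), mul_one_div]
  apply div_le_div_of_nonneg_left (abs_nonneg _) (by positivity)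
  linarith

lemma tanh_d (t : ℝ) : HasDerivAt Real.tanh (sc2 t) t := by
  have h := (Real.hasDerivAt_sinh t).div (Real.hasDerivAt_cosh t) (Real.cosh_pos t).ne'
  have e : Real.tanh = Real.sinh / Real.cosh := by ext t; rw [Real.tanh_eq_sinh_div_cosh]; rfl
  rw [e]
  refine h.congr_deriv ?_
  rw [sc2]; congr 1
  nlinarith [Real.cosh_sq t]

lemma SS_tanh (u t : ℝ) : SS u t = (Real.tanh (t + u) - Real.tanh (t - u)) / 2 := by
  have a := Real.cosh_pos (t + u)
  have b := Real.cosh_pos (t - u)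
  have hd : Real.cosh (2 * u) + Real.cosh (2 * t) = 2 * (Real.cosh (t + u) * Real.cosh (t - u)) := by
    have h1 := Real.cosh_add (t + u) (t - u)
    have h2 := Real.cosh_sub (t + u) (t - u)
    have e1 : t + u + (t - u) = 2 * t := by ring
    have e2 : t + u - (t - u) = 2 * u := by ring
    rw [e1] at h1; rw [e2] at h2
    linarith
  have hn : Real.sinh (2 * u) = Real.sinh (t + u) * Real.cosh (t - u) - Real.cosh (t + u) * Real.sinh (t - u) := by
    rw [← Real.sinh_sub]; congr 1; ring
  rw [SS, hd, hn, Real.tanh_eq_sinh_div_cosh, Real.tanh_eq_sinh_div_cosh]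
  field_simp

lemma SS_int (u : ℝ) : Integrable (SS u) := by
  refine (sc2_int.const_mul |Real.sinh (2 * u)|).mono' (Continuous.aestronglyMeasurable (SS_cont.comp (by fun_prop : Continuous fun t : ℝ => (u, t)))) (ae_of_all _ fun t => SS_abs_le u t)

lemma bdd_mul_int {g φ : ℝ → ℝ} (hg : Integrable g) (hφ : Continuous φ) (h : ∀ t, |φ t| ≤ 1) : Integrable (fun t => φ t * g t) :=
  hg.bdd_mul hφ.aestronglyMeasurable (ae_of_all _ h)

lemma cos_SS_full {m : ℝ} (hm : 0 < m) (u : ℝ) :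
    ∫ t : ℝ, Real.cos (m * t) * SS u t = Real.pi * Real.sin (m * u) / Real.sinh (Real.pi * m / 2) := by
  have iP : Integrable (fun t => sc2 (t + u)) := sc2_int.comp_add_right u
  have iM : Integrable (fun t => sc2 (t - u)) := sc2_int.comp_sub_right u
  have dS : ∀ t, HasDerivAt (SS u) ((sc2 (t + u) - sc2 (t - u)) / 2) t := by
    intro t
    have e : SS u = fun t => (Real.tanh (t + u) - Real.tanh (t - u)) / 2 := by ext t; exact SS_tanh u t
    rw [e]
    exact (((tanh_d (t + u)).comp_add_const t u).sub ((tanh_d (t - u)).comp_sub_const t u)).div_const 2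
  have dsin : ∀ t, HasDerivAt (fun t => Real.sin (m * t)) (m * Real.cos (m * t)) t := by
    intro t
    refine (((hasDerivAt_id t).const_mul m).sin).congr_deriv ?_
    simp; ring
  have s1 : ∀ t : ℝ, |Real.sin (m * t)| ≤ 1 := fun t => Real.abs_sin_le_one _
  have c1 : ∀ t : ℝ, |Real.cos (m * t)| ≤ 1 := fun t => Real.abs_cos_le_one _
  have ibp := integral_mul_deriv_eq_deriv_mul_of_integrable (u := SS u) (v := fun t => Real.sin (m * t))
    (u' := fun t => (sc2 (t + u) - sc2 (t - u)) / 2) (v' := fun t => m * Real.cos (m * t))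
    (fun t _ => dS t) (fun t _ => dsin t) ?_ ?_ ?_
  rotate_left
  · refine ((bdd_mul_int (SS_int u) (by fun_prop) c1).const_mul m).congr (ae_of_all _ fun t => ?_)
    simp only [Pi.mul_apply]; ring
  · refine ((bdd_mul_int ((iP.sub iM).div_const 2) (by fun_prop) s1)).congr (ae_of_all _ fun t => ?_)
    simp only [Pi.mul_apply, Pi.sub_apply]; ring
  · refine ((bdd_mul_int (SS_int u) (by fun_prop) s1)).congr (ae_of_all _ fun t => ?_)
    simp only [Pi.mul_apply]; ring
  have e1 : ∫ t, SS u t * (m * Real.cos (m * t)) = m * ∫ t, Real.cos (m * t) * SS u t := by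
    rw [← integral_const_mul]; congr 1; ext t; ring
  have e2 : ∫ t, (sc2 (t + u) - sc2 (t - u)) / 2 * Real.sin (m * t) =
      (1/2) * ((∫ t, Real.sin (m * t) * sc2 (t + u)) - ∫ t, Real.sin (m * t) * sc2 (t - u)) := by
    rw [← integral_sub (bdd_mul_int iP (by fun_prop) s1) (bdd_mul_int iM (by fun_prop) s1), ← integral_const_mul]
    congr 1; ext t; ring
  have e3 : ∫ t, Real.sin (m * t) * sc2 (t + u) = ∫ t, Real.sin (m * (t - u)) * sc2 t := by
    rw [← integral_add_right_eq_self (fun t => Real.sin (m * (t - u)) * sc2 t) u]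
    congr 1; ext t; rw [add_sub_cancel_right]
  have e4 : ∫ t, Real.sin (m * t) * sc2 (t - u) = ∫ t, Real.sin (m * (t + u)) * sc2 t := by
    rw [← integral_sub_right_eq_self (fun t => Real.sin (m * (t + u)) * sc2 t) u]
    congr 1; ext t; rw [sub_add_cancel]
  have e5 : (∫ t, Real.sin (m * (t - u)) * sc2 t) - ∫ t, Real.sin (m * (t + u)) * sc2 t = (-2 * Real.sin (m * u)) * ∫ t, Real.cos (m * t) * sc2 t := by
    rw [← integral_sub (bdd_mul_int sc2_int (by fun_prop) (fun t => Real.abs_sin_le_one _)) (bdd_mul_int sc2_int (by fun_prop) (fun t => Real.abs_sin_le_one _)), ← integral_const_mul]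
    congr 1; ext t
    rw [mul_sub, mul_add, Real.sin_sub, Real.sin_add]; ring
  rw [e1, e2, e3, e4, e5, cos_sc2 hm] at ibp
  have hm' := hm.ne'
  have hs : Real.sinh (Real.pi * m / 2) ≠ 0 := (Real.sinh_pos_iff.2 (by have := Real.pi_pos; positivity)).ne'
  apply mul_left_cancel₀ hm'
  rw [ibp]; field_simp

lemma cos_SS {m : ℝ} (hm : 0 < m) (u : ℝ) :
    ∫ t in Ioi (0:ℝ), Real.cos (m * t) * SS u t = Real.pi / 2 * Real.sin (m * u) / Real.sinh (Real.pi * m / 2) := by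
  have h := integral_comp_abs (f := fun t => Real.cos (m * t) * SS u t)
  have e : ∀ t : ℝ, Real.cos (m * |t|) * SS u |t| = Real.cos (m * t) * SS u t := by
    intro t
    rcases abs_choice t with h | h
    · rw [h]
    · rw [h, SS, SS, mul_neg, mul_neg, Real.cos_neg, Real.cosh_neg]
  simp only [e] at h
  rw [cos_SS_full hm] at h
  have : ∫ t in Ioi (0:ℝ), Real.cos (m * t) * SS u t = (1/2) * (Real.pi * Real.sin (m * u) / Real.sinh (Real.pi * m / 2)) := by linarith
  rw [this]; ring

lemma sin_orth (n m : ℕ) (hn : 1 ≤ n) (hm : 1 ≤ m) :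
    ∫ u in (0:ℝ)..Real.pi, Real.sin (n * u) * Real.sin (m * u) = if n = m then Real.pi / 2 else 0 := by
  have e : ∀ u : ℝ, Real.sin (n * u) * Real.sin (m * u) = (1/2) * (Real.cos (((n:ℤ) - m : ℤ) * u) - Real.cos (((n:ℤ) + m : ℤ) * u)) := by
    intro u
    push_cast
    rw [sub_mul, add_mul, Real.cos_sub, Real.cos_add]; ring
  have cosint : ∀ k : ℤ, k ≠ 0 → ∫ u in (0:ℝ)..Real.pi, Real.cos (k * u) = 0 := by
    intro k hk
    have : (k:ℝ) ≠ 0 := by exact_mod_cast hk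
    rw [intervalIntegral.integral_comp_mul_left (fun u => Real.cos u) this, integral_cos, Real.sin_int_mul_pi]
    simp
  simp only [e]
  rw [intervalIntegral.integral_const_mul, intervalIntegral.integral_sub (Continuous.intervalIntegrable (by fun_prop) _ _) (Continuous.intervalIntegrable (by fun_prop) _ _),
    cosint ((n:ℤ) + m) (by omega)]
  split_ifs with h
  · subst h; simp; ring
  · rw [cosint _ (by omega)]; simp


lemma F_aesm (n : ℕ) (m : ℝ) : AEStronglyMeasurable (fun p : ℝ × ℝ => Phi n p.1 * (Real.cos (m * p.2) * kap (p.1 ^ 2 * Real.sinh p.2 ^ 2)))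
    ((volume.restrict (Ioi 0)).prod (volume.restrict (Ioi 0))) := by
  rw [Measure.prod_restrict]
  refine ContinuousOn.aestronglyMeasurable ?_ (measurableSet_Ioi.prod measurableSet_Ioi)
  have hP := Phi_cont n
  have hs := Real.continuous_sinh
  refine (by fun_prop : Continuous fun p : ℝ × ℝ => Phi n p.1).continuousOn.mul
    ((by fun_prop : Continuous fun p : ℝ × ℝ => Real.cos (m * p.2)).continuousOn.mul ?_)
  refine kap_contOn.comp (by fun_prop : Continuous fun p : ℝ × ℝ => p.1 ^ 2 * Real.sinh p.2 ^ 2).continuousOn ?_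
  rintro ⟨x, t⟩ ⟨hx, ht⟩
  have hx : 0 < x := hx
  have ht : 0 < Real.sinh t := Real.sinh_pos_iff.2 ht
  show 0 < x ^ 2 * Real.sinh t ^ 2
  positivity

lemma ckap_int (m : ℝ) {x : ℝ} (hx : 0 < x) : IntegrableOn (fun t => Real.cos (m * t) * kap (x ^ 2 * Real.sinh t ^ 2)) (Ioi 0) :=
  (kapsinh_int (by positivity : 0 < x ^ 2)).bdd_mul (c := 1) (by fun_prop : Continuous fun t : ℝ => Real.cos (m * t)).aestronglyMeasurable
    (ae_of_all _ fun t => Real.abs_cos_le_one _)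

lemma F_int (n : ℕ) (m : ℝ) : Integrable (fun p : ℝ × ℝ => Phi n p.1 * (Real.cos (m * p.2) * kap (p.1 ^ 2 * Real.sinh p.2 ^ 2)))
    ((volume.restrict (Ioi 0)).prod (volume.restrict (Ioi 0))) := by
  rw [integrable_prod_iff (F_aesm n m)]
  constructor
  · refine (ae_restrict_iff' measurableSet_Ioi).2 (ae_of_all _ fun x (hx : 0 < x) => ?_)
    exact (ckap_int m hx).const_mul (Phi n x)
  · obtain ⟨C, hC, hb⟩ := Phi_bd n
    refine int_of_Bd (C := C * C0) (F_aesm n m).norm.integral_prod_right' fun x hx => ?_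
    rw [Real.norm_eq_abs, abs_of_nonneg (integral_nonneg fun _ => norm_nonneg _)]
    have h1 : ∫ t in Ioi (0:ℝ), ‖Phi n x * (Real.cos (m * t) * kap (x ^ 2 * Real.sinh t ^ 2))‖ ≤
        ∫ t in Ioi (0:ℝ), |Phi n x| * kap (x ^ 2 * Real.sinh t ^ 2) := by
      refine integral_mono ((ckap_int m hx).const_mul _).norm ((kapsinh_int (by positivity : 0 < x ^ 2)).const_mul _) fun t => ?_
      simp only [Real.norm_eq_abs, abs_mul, abs_of_nonneg (kap_nonneg _)]
      refine mul_le_mul_of_nonneg_left ?_ (abs_nonneg _)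
      exact mul_le_of_le_one_left (kap_nonneg _) (Real.abs_cos_le_one _)
    rw [integral_const_mul] at h1
    refine h1.trans ?_
    calc _ ≤ (C * (x * Bd x)) * (C0 / x) := mul_le_mul (hb x hx) (kapsinh_le hx)
            (setIntegral_nonneg measurableSet_Ioi fun _ _ => kap_nonneg _) (mul_nonneg hC (mul_nonneg hx.le (Bd_nonneg hx)))
      _ = _ := by field_simp

lemma G_int (n : ℕ) {s : ℝ} (hs : 0 < s) : Integrable (fun p : ℝ × ℝ => p.1 * (besselJ0 (2 * p.1 * Real.cosh p.2) * Real.sinh (2 * p.2) * Real.sin (n * p.2)) * kap (p.1 ^ 2 * s ^ 2))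
    ((volume.restrict (Ioi 0)).prod (volume.restrict (Ioc 0 Real.pi))) := by
  have hc := Real.continuous_cosh
  have hsi := Real.continuous_sinh
  have h0 := J0_cont
  have hk : Integrable (fun u : ℝ => Real.sinh (2 * u)) (volume.restrict (Ioc 0 Real.pi)) :=
    ((by fun_prop : Continuous fun u : ℝ => Real.sinh (2 * u)).integrableOn_Icc).mono_set Ioc_subset_Icc_self
  have h := Integrable.mul_prod (xkap_int hs) hk
  refine h.mono ?_ ?_
  · rw [Measure.prod_restrict]
    refine ContinuousOn.aestronglyMeasurable ?_ (measurableSet_Ioi.prod measurableSet_Ioc)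
    refine (by fun_prop : Continuous fun p : ℝ × ℝ => p.1 * (besselJ0 (2 * p.1 * Real.cosh p.2) * Real.sinh (2 * p.2) * Real.sin (n * p.2))).continuousOn.mul ?_
    exact (xkap_contOn hs).comp continuousOn_fst (fun p hp => hp.1)
  · rw [Measure.prod_restrict]
    refine (ae_restrict_iff' (measurableSet_Ioi.prod measurableSet_Ioc)).2 (ae_of_all _ fun p hp => ?_)
    have hx : 0 < p.1 := hp.1
    have j := J0_le (2 * p.1 * Real.cosh p.2) (by have := Real.cosh_pos p.2; positivity)
    simp only [Real.norm_eq_abs, abs_mul]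
    have : |besselJ0 (2 * p.1 * Real.cosh p.2)| * |Real.sinh (2 * p.2)| * |Real.sin (n * p.2)| ≤ |Real.sinh (2 * p.2)| := by
      calc _ ≤ |besselJ0 (2 * p.1 * Real.cosh p.2)| * |Real.sinh (2 * p.2)| := mul_le_of_le_one_right (by positivity) (Real.abs_sin_le_one _)
        _ ≤ _ := mul_le_of_le_one_left (abs_nonneg _) j
    calc _ ≤ |p.1| * |Real.sinh (2 * p.2)| * |kap (p.1 ^ 2 * s ^ 2)| :=
          mul_le_mul_of_nonneg_right (mul_le_mul_of_nonneg_left this (abs_nonneg _)) (abs_nonneg _)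
      _ = _ := by ring

lemma Phi_kap (n : ℕ) {t : ℝ} (ht : 0 < t) :
    ∫ x in Ioi (0:ℝ), Phi n x * kap (x ^ 2 * Real.sinh t ^ 2) = ∫ u in Ioc 0 Real.pi, Real.sin (n * u) * SS u t := by
  have hs : 0 < Real.sinh t := Real.sinh_pos_iff.2 ht
  have e1 : ∀ x, Phi n x * kap (x ^ 2 * Real.sinh t ^ 2) =
      ∫ u in Ioc 0 Real.pi, x * (besselJ0 (2 * x * Real.cosh u) * Real.sinh (2 * u) * Real.sin (n * u)) * kap (x ^ 2 * Real.sinh t ^ 2) := by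
    intro x
    rw [integral_mul_const, integral_const_mul, Phi, intervalIntegral.integral_of_le Real.pi_pos.le]
  simp only [e1]
  rw [integral_integral_swap (G_int n hs)]
  congr 1; ext u
  have e2 : ∫ x in Ioi (0:ℝ), x * (besselJ0 (2 * x * Real.cosh u) * Real.sinh (2 * u) * Real.sin (n * u)) * kap (x ^ 2 * Real.sinh t ^ 2)
      = (Real.sinh (2 * u) * Real.sin (n * u)) * ∫ x in Ioi (0:ℝ), x * besselJ0 ((2 * Real.cosh u) * x) * kap (x ^ 2 * Real.sinh t ^ 2) := by
    rw [← integral_const_mul]; congr 1; ext x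
    rw [show 2 * x * Real.cosh u = 2 * Real.cosh u * x by ring]; ring
  rw [e2, hankel_kap hs (by have := Real.cosh_pos u; positivity), SS]
  have h1 : Real.cosh (2 * u) = 2 * Real.cosh u ^ 2 - 1 := by rw [Real.cosh_two_mul, Real.sinh_sq]; ring
  have h2 : Real.cosh (2 * t) = 2 * Real.sinh t ^ 2 + 1 := by rw [Real.cosh_two_mul, Real.cosh_sq]; ring
  have h3 : 4 * Real.sinh t ^ 2 + (2 * Real.cosh u) ^ 2 = 2 * (Real.cosh (2 * u) + Real.cosh (2 * t)) := by rw [h1, h2]; ring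
  rw [h3]
  have := Real.cosh_pos (2 * u); have := Real.cosh_pos (2 * t)
  field_simp

lemma H_int (n : ℕ) (m : ℝ) : Integrable (fun p : ℝ × ℝ => Real.cos (m * p.1) * (Real.sin (n * p.2) * SS p.2 p.1))
    ((volume.restrict (Ioi 0)).prod (volume.restrict (Ioc 0 Real.pi))) := by
  have hsi := Real.continuous_sinh
  have hk : Integrable (fun u : ℝ => Real.sinh (2 * u)) (volume.restrict (Ioc 0 Real.pi)) :=
    ((by fun_prop : Continuous fun u : ℝ => Real.sinh (2 * u)).integrableOn_Icc).mono_set Ioc_subset_Icc_self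
  have h := Integrable.mul_prod (sc2_int.integrableOn (s := Ioi 0)) hk
  refine h.mono ?_ (ae_of_all _ fun p => ?_)
  · have : Continuous fun p : ℝ × ℝ => SS p.2 p.1 := SS_cont.comp (continuous_snd.prodMk continuous_fst)
    exact (by fun_prop : Continuous fun p : ℝ × ℝ => Real.cos (m * p.1) * (Real.sin (n * p.2) * SS p.2 p.1)).aestronglyMeasurable
  · simp only [Real.norm_eq_abs, abs_mul]
    rw [abs_of_nonneg (sc2_nonneg _), mul_comm (sc2 _)]
    exact (mul_le_of_le_one_left (by positivity) (Real.abs_cos_le_one _)).trans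
      ((mul_le_of_le_one_left (by positivity) (Real.abs_sin_le_one _)).trans (SS_abs_le _ _))

lemma Phi_n0 (n m : ℕ) (hn : 1 ≤ n) (hm : 1 ≤ m) :
    ∫ x in Ioi (0:ℝ), Phi n x * n0 m (x ^ 2) = if n = m then Real.pi ^ 2 / 4 / Real.sinh (Real.pi * m / 2) else 0 := by
  have hm0 : (0:ℝ) < m := by exact_mod_cast hm
  have e1 : ∀ x, Phi n x * n0 m (x ^ 2) = ∫ t in Ioi (0:ℝ), Phi n x * (Real.cos (m * t) * kap (x ^ 2 * Real.sinh t ^ 2)) := by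
    intro x; rw [integral_const_mul]; rfl
  simp only [e1]
  rw [integral_integral_swap (F_int n m)]
  have e2 : ∫ t in Ioi (0:ℝ), ∫ x in Ioi (0:ℝ), Phi n x * (Real.cos (m * t) * kap (x ^ 2 * Real.sinh t ^ 2)) =
      ∫ t in Ioi (0:ℝ), ∫ u in Ioc 0 Real.pi, Real.cos (m * t) * (Real.sin (n * u) * SS u t) := by
    refine setIntegral_congr_fun measurableSet_Ioi fun t (ht : 0 < t) => ?_
    rw [integral_const_mul, ← Phi_kap n ht, ← integral_const_mul]
    congr 1; ext x; ring
  rw [e2, integral_integral_swap (H_int n m)]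
  have e3 : ∀ u, ∫ t in Ioi (0:ℝ), Real.cos (m * t) * (Real.sin (n * u) * SS u t) =
      (Real.pi / 2 / Real.sinh (Real.pi * m / 2)) * (Real.sin (n * u) * Real.sin (m * u)) := by
    intro u
    have : ∀ t, Real.cos (m * t) * (Real.sin (n * u) * SS u t) = Real.sin (n * u) * (Real.cos (m * t) * SS u t) := fun t => by ring
    simp only [this]
    rw [integral_const_mul, cos_SS hm0]; ring
  simp only [e3]
  rw [integral_const_mul, ← intervalIntegral.integral_of_le Real.pi_pos.le, sin_orth n m hn hm]
  split_ifs with h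
  · ring
  · ring

lemma n0_contOn (m : ℝ) : ContinuousOn (fun x => n0 m (x ^ 2)) (Ioi 0) := by
  have : ContinuousOn (n0 m) (Ioi 0) := fun X hX => (n0_deriv m hX).continuousAt.continuousWithinAt
  exact this.comp (by fun_prop) (fun x hx => by have : 0 < x := hx; show 0 < x ^ 2; positivity)

lemma n0_le (m : ℝ) {x : ℝ} (hx : 0 < x) : |n0 m (x ^ 2)| ≤ C0 / x := by
  have := KK_abs_le hx (φ := fun t => Real.cos (m * t)) (A := 1) (fun t _ => Real.abs_cos_le_one _)
  rwa [one_mul] at this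

noncomputable def nn (m : ℕ) (x : ℝ) : ℝ := 4 / Real.pi ^ 2 * n0 m (x ^ 2)

lemma nn_le (m : ℕ) {x : ℝ} (hx : 0 < x) : |nn m x| ≤ 4 / Real.pi ^ 2 * (C0 / x) := by
  rw [nn, abs_mul, abs_of_nonneg (by positivity : 0 ≤ 4 / Real.pi ^ 2)]
  exact mul_le_mul_of_nonneg_left (n0_le _ hx) (by positivity)

lemma nich (k : ℕ) {x : ℝ} (hx : 0 < x) :
    besselJ (Complex.I * (k + 1) / 2) x ^ 2 + besselY (Complex.I * (k + 1) / 2) x ^ 2 = ((nn (k + 1) x : ℝ) : ℂ) := by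
  have := nicholson ((k + 1 : ℕ) : ℝ) (by positivity) hx
  rw [nn, ← this]; push_cast; rfl

lemma Phi_nn_bd (n : ℕ) : ∃ C, 0 ≤ C ∧ ∀ m x, 0 < x → |Phi n x * nn m x| ≤ C * Bd x := by
  obtain ⟨C, hC, hb⟩ := Phi_bd n
  have hC0 := C0_nonneg
  refine ⟨C * (4 / Real.pi ^ 2 * C0), by positivity, fun m x hx => ?_⟩
  rw [abs_mul]
  calc _ ≤ (C * (x * Bd x)) * (4 / Real.pi ^ 2 * (C0 / x)) := mul_le_mul (hb x hx) (nn_le m hx) (abs_nonneg _) (mul_nonneg hC (mul_nonneg hx.le (Bd_nonneg hx)))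
    _ = _ := by field_simp

lemma Phi_nn_int (n m : ℕ) : IntegrableOn (fun x => Phi n x * nn m x) (Ioi 0) := by
  obtain ⟨C, _, h⟩ := Phi_nn_bd n
  refine int_of_Bd (C := C) (((Phi_cont n).continuousOn.mul (continuousOn_const.mul (n0_contOn m))).aestronglyMeasurable measurableSet_Ioi) fun x hx => h m x hx

lemma Phi_nn (n m : ℕ) (hn : 1 ≤ n) (hm : 1 ≤ m) :
    ∫ x in Ioi (0:ℝ), Phi n x * nn m x = if n = m then 1 / Real.sinh (Real.pi * m / 2) else 0 := by
  have e : ∀ x, Phi n x * nn m x = 4 / Real.pi ^ 2 * (Phi n x * n0 m (x ^ 2)) := fun x => by rw [nn]; ring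
  simp only [e]
  rw [integral_const_mul, Phi_n0 n m hn hm]
  have := Real.pi_ne_zero
  split_ifs
  · field_simp
  · simp

lemma final (a : ℕ → ℂ) (ha : Summable fun n => ‖a (n + 1)‖) (f : ℝ → ℂ)
    (hf : ∀ x > 0, f x = ∑' n : ℕ, a (n + 1) * ((besselJ (Complex.I * (n + 1) / 2) x) ^ 2 + (besselY (Complex.I * (n + 1) / 2) x) ^ 2)) :
    (∀ x > 0, Summable fun n : ℕ => ‖a (n + 1) * ((besselJ (Complex.I * (n + 1) / 2) x) ^ 2 + (besselY (Complex.I * (n + 1) / 2) x) ^ 2)‖) ∧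
    ∀ n : ℕ, 1 ≤ n → ∃ I₀ : ℂ, Tendsto (fun T : ℝ => ∫ x in (0:ℝ)..T, (Phi n x : ℂ) * f x) atTop (𝓝 I₀) ∧
      a n = (Real.sinh (Real.pi * n / 2) : ℂ) * I₀ := by
  have hsum : ∀ x > 0, Summable fun n : ℕ => ‖a (n + 1) * ((besselJ (Complex.I * (n + 1) / 2) x) ^ 2 + (besselY (Complex.I * (n + 1) / 2) x) ^ 2)‖ := by
    intro x hx
    refine Summable.of_nonneg_of_le (fun _ => norm_nonneg _) (fun k => ?_) (ha.mul_right (4 / Real.pi ^ 2 * (C0 / x)))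
    rw [nich k hx, norm_mul, Complex.norm_real]
    exact mul_le_mul_of_nonneg_left (nn_le _ hx) (norm_nonneg _)
  refine ⟨hsum, fun n hn => ?_⟩
  obtain ⟨C, hC, hb⟩ := Phi_nn_bd n
  have hFi : ∀ k : ℕ, Integrable (fun x => a (k + 1) * ((Phi n x * nn (k + 1) x : ℝ) : ℂ)) (volume.restrict (Ioi 0)) := by
    intro k
    have : Integrable (fun x => ((Phi n x * nn (k + 1) x : ℝ) : ℂ)) (volume.restrict (Ioi 0)) := by exact (Phi_nn_int n (k + 1)).ofReal
    exact this.const_mul _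
  set D := ∫ x in Ioi (0:ℝ), C * Bd x with hD
  have hFs : Summable fun k : ℕ => ∫ x in Ioi (0:ℝ), ‖a (k + 1) * ((Phi n x * nn (k + 1) x : ℝ) : ℂ)‖ := by
    refine Summable.of_nonneg_of_le (fun _ => integral_nonneg fun _ => norm_nonneg _) (fun k => ?_) (ha.mul_right D)
    rw [hD, ← integral_const_mul]
    refine setIntegral_mono_on (hFi k).norm ((Bd_int.const_mul C).const_mul _) measurableSet_Ioi fun x hx => ?_
    rw [norm_mul, Complex.norm_real]
    exact mul_le_mul_of_nonneg_left (hb _ x hx) (norm_nonneg _)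
  have hS := hasSum_integral_of_summable_integral_norm hFi hFs
  have hval : ∀ k : ℕ, ∫ x in Ioi (0:ℝ), a (k + 1) * ((Phi n x * nn (k + 1) x : ℝ) : ℂ) =
      if k = n - 1 then a n * ((1 / Real.sinh (Real.pi * n / 2) : ℝ) : ℂ) else 0 := by
    intro k
    rw [integral_const_mul, integral_complex_ofReal, Phi_nn n (k + 1) hn (by omega)]
    by_cases h : k = n - 1
    · have h' : n = k + 1 := by omega
      rw [if_pos h, if_pos h', ← h']
    · rw [if_neg h, if_neg (by omega)]; simp
  simp only [hval] at hS
  have hI := hS.unique (hasSum_ite_eq (n - 1) (a n * ((1 / Real.sinh (Real.pi * n / 2) : ℝ) : ℂ)))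
  have hfx : ∀ x ∈ Ioi (0:ℝ), ∑' k : ℕ, a (k + 1) * ((Phi n x * nn (k + 1) x : ℝ) : ℂ) = (Phi n x : ℂ) * f x := by
    intro x hx
    rw [hf x hx, ← tsum_mul_left]
    congr 1; ext k
    rw [nich k hx]; push_cast; ring
  have hint : IntegrableOn (fun x => (Phi n x : ℂ) * f x) (Ioi 0) := by
    have hmeas : AEStronglyMeasurable (fun x => ∑' k : ℕ, a (k + 1) * ((Phi n x * nn (k + 1) x : ℝ) : ℂ)) (volume.restrict (Ioi 0)) := by
      have hs : ∀ x ∈ Ioi (0:ℝ), Summable fun k : ℕ => a (k + 1) * ((Phi n x * nn (k + 1) x : ℝ) : ℂ) := by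
        intro x hx
        refine Summable.of_norm_bounded (ha.mul_right (C * Bd x)) fun k => ?_
        rw [norm_mul, Complex.norm_real]
        exact mul_le_mul_of_nonneg_left (hb _ x hx) (norm_nonneg _)
      refine aestronglyMeasurable_of_tendsto_ae atTop (f := fun N x => ∑ k ∈ Finset.range N, a (k + 1) * ((Phi n x * nn (k + 1) x : ℝ) : ℂ)) (fun N => ?_) ?_
      · exact (integrable_finsetSum _ fun k _ => hFi k).aestronglyMeasurable
      · exact (ae_restrict_iff' measurableSet_Ioi).2 (ae_of_all _ fun x hx => (hs x hx).hasSum.tendsto_sum_nat)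
    have hmeas2 : AEStronglyMeasurable (fun x => (Phi n x : ℂ) * f x) (volume.restrict (Ioi 0)) :=
      hmeas.congr ((ae_restrict_iff' measurableSet_Ioi).2 (ae_of_all _ hfx))
    refine int_of_Bd (C := (∑' k, ‖a (k + 1)‖) * C) hmeas2 fun x hx => ?_
    rw [← hfx x hx]
    refine tsum_of_norm_bounded (g := fun k => ‖a (k + 1)‖ * (C * Bd x)) ?_ fun k => ?_
    · have := ha.hasSum.mul_right (C * Bd x)
      rwa [← mul_assoc] at this
    · rw [norm_mul, Complex.norm_real]
      exact mul_le_mul_of_nonneg_left (hb _ x hx) (norm_nonneg _)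
  rw [setIntegral_congr_fun measurableSet_Ioi hfx] at hI
  refine ⟨_, intervalIntegral_tendsto_integral_Ioi 0 hint tendsto_id, ?_⟩
  rw [hI]
  have hs : Real.sinh (Real.pi * n / 2) ≠ 0 :=
    (Real.sinh_pos_iff.2 (by have := Real.pi_pos; have : (0:ℝ) < n := by exact_mod_cast hn
                             positivity)).ne'
  have hs' : (Real.sinh (Real.pi * n / 2) : ℂ) ≠ 0 := by exact_mod_cast hs
  rw [Complex.ofReal_div, Complex.ofReal_one]
  field_simp

end Helpers

theorem statement0 (a : ℕ → ℂ) (ha : Summable fun n : ℕ => ‖a (n + 1)‖)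
    (f : ℝ → ℂ)
    (hf : ∀ x : ℝ, 0 < x → f x = ∑' n : ℕ, a (n + 1) *
      ((besselJ (Complex.I * (n + 1) / 2) x) ^ 2 + (besselY (Complex.I * (n + 1) / 2) x) ^ 2))
    (Φ : ℕ → ℝ → ℝ)
    (hΦ : ∀ (n : ℕ) (x : ℝ), Φ n x = x * ∫ u in (0 : ℝ)..Real.pi,
      besselJ0 (2 * x * Real.cosh u) * Real.sinh (2 * u) * Real.sin (n * u)) :
    (∀ x : ℝ, 0 < x → Summable fun n : ℕ => ‖a (n + 1) *
      ((besselJ (Complex.I * (n + 1) / 2) x) ^ 2 + (besselY (Complex.I * (n + 1) / 2) x) ^ 2)‖) ∧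
    ∀ n : ℕ, 1 ≤ n → ∃ I₀ : ℂ,
      Filter.Tendsto (fun T : ℝ => ∫ x in (0 : ℝ)..T, (Φ n x : ℂ) * f x)
        Filter.atTop (𝓝 I₀) ∧
      a n = (Real.sinh (Real.pi * n / 2) : ℂ) * I₀ := by
  have e : Φ = Phi := by
    funext n x
    rw [hΦ, Phi]
  subst e
  exact final a ha f hf
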